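/- arXiv:0904.0227 — 8 statements merged into one kernel-verified Lean document; each statement's English description precedes it below -/
import Mathlib

section
/- (Chevalley's affineness theorem) Let f : X → Y be a morphism of schemes that is finite and surjective, with Y quasi-separated. If X is an affine scheme, then Y is an affine scheme. -/
open AlgebraicGeometry

/-!
A filtered limit of non-affine closed subschemes of `Y` is not affine, so if `Y` is not affine it
has a minimal non-affine closed subscheme. Base change to it reduces to the case where all proper
closed subschemes of `Y` are affine. Then `Y` is affine as soon as functions lift from proper closed
subschemes to `Y` and functions on `Y` without common zero generate the unit ideal.

If `I * J = 0` for nonzero ideal sheaves `I` and `J`, the obstruction to lifting a function from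
`V(I)` is a cocycle with values in `I`, which is a module on the affine scheme `V(J)`.

Otherwise `Y` is integral, and `X` may be replaced by an integral closed subscheme dominating `Y`.
Clearing denominators in a linear form on the extension of function fields gives an `𝒪_Y`-linear
form `l : f_* 𝒪_X → 𝒪_Y` with `l 1 ≠ 0`, which transports to `Y` the lifting of functions and the
generation of ideals, both known on the affine scheme `X`.
-/

namespace ChevalleyAffineness

open CategoryTheory TopologicalSpace Opposite

universe u

section Sections

variable {X Y : Scheme.{u}} {U V W : Y.Opens}

/-- Restriction of sections, as a ring homomorphism. -/
noncomputable abbrev res (h : V ≤ U) : Γ(Y, U) →+* Γ(Y, V) :=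
  (Y.presheaf.map (homOfLE h).op).hom

lemma res_res (h : V ≤ U) (h' : W ≤ V) (x : Γ(Y, U)) :
    res h' (res h x) = res (h'.trans h) x := by
  simp only [res, ← CommRingCat.comp_apply, ← Functor.map_comp]
  rfl

lemma app_res (f : X ⟶ Y) (h : V ≤ U) (x : Γ(Y, U)) :
    f.app V (res h x) = res (f.preimage_mono h) (f.app U x) :=
  congr($(f.naturality (homOfLE h).op) x)

lemma basicOpen_res (h : V ≤ U) (x : Γ(Y, U)) : Y.basicOpen (res h x) = V ⊓ Y.basicOpen x :=
  Y.basicOpen_res x (homOfLE h).op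

lemma eq_of_res_eq {ι : Type*} {U : ι → Y.Opens} (hUV : ∀ i, U i ≤ V) (hU : V ≤ ⨆ i, U i)
    {a b : Γ(Y, V)} (h : ∀ i, res (hUV i) a = res (hUV i) b) : a = b :=
  Y.sheaf.eq_of_locally_eq' U V (fun i => homOfLE (hUV i)) hU a b h

lemma exists_res_eq {ι : Type*} {U : ι → Y.Opens} (hUV : ∀ i, U i ≤ V) (hU : V ≤ ⨆ i, U i)
    (a : ∀ i, Γ(Y, U i))
    (h : ∀ i k, res (inf_le_left : U i ⊓ U k ≤ U i) (a i) = res inf_le_right (a k)) :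
    ∃ s : Γ(Y, V), ∀ i, res (hUV i) s = a i :=
  (Y.sheaf.existsUnique_gluing' U V (fun i => homOfLE (hUV i)) hU a h).exists

lemma exists_res_eq_of_le_sup {V₁ V₂ : Y.Opens} (h₁ : V₁ ≤ V) (h₂ : V₂ ≤ V) (hV : V ≤ V₁ ⊔ V₂)
    (a₁ : Γ(Y, V₁)) (a₂ : Γ(Y, V₂))
    (h : res (inf_le_left : V₁ ⊓ V₂ ≤ V₁) a₁ = res inf_le_right a₂) :
    ∃ s : Γ(Y, V), res h₁ s = a₁ ∧ res h₂ s = a₂ := by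
  obtain ⟨s, hs⟩ := exists_res_eq (U := fun b : Bool => bif b then V₁ else V₂)
    (Bool.rec h₂ h₁) (by rwa [iSup_bool_eq]) (Bool.rec a₂ a₁) (by
      have h' : res (inf_le_left : V₂ ⊓ V₁ ≤ V₂) a₂ = res inf_le_right a₁ := by
        simpa only [res_res] using congr(res (inf_comm V₂ V₁).le $h).symm
      rintro (_ | _) (_ | _)
      exacts [rfl, h', h, rfl])
  exact ⟨s, hs true, hs false⟩

lemma subsingleton_section_of_eq_bot (h : U = ⊥) : Subsingleton Γ(Y, U) := by
  subst h; infer_instance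

variable (Y) in
lemma exists_finite_affine_cover [CompactSpace Y] :
    ∃ (ι : Type u) (_ : Finite ι) (V : ι → Y.Opens),
      (∀ i, IsAffineOpen (V i)) ∧ (∀ i, Nonempty (V i)) ∧ ⊤ ≤ ⨆ i, V i := by
  obtain ⟨S, hS, hSU⟩ := isCompact_iff_finite_and_eq_biUnion_affineOpens (U := (⊤ : Y.Opens)).mp
    isCompact_univ
  have : Finite S := hS
  refine ⟨{U : S // (U.1.1 : Set Y).Nonempty}, inferInstance, fun U => U.1.1.1, fun U => U.1.1.2,
    fun U => U.2.to_subtype, hSU.le.trans (iSup₂_le fun U hU y hy => ?_)⟩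
  exact Opens.mem_iSup.mpr ⟨⟨⟨U, hU⟩, y, hy⟩, hy⟩

end Sections

section SectionIdeal

variable {Y : Scheme.{u}} {U V : Y.Opens}

/-- The sections over `U` of the ideal sheaf `I`, for an arbitrary open `U`: those which vanish on
the closed subscheme `V(I)`. -/
noncomputable def sectionIdeal (I : Y.IdealSheafData) (U : Y.Opens) : Ideal Γ(Y, U) :=
  RingHom.ker (I.subschemeι.app U).hom

variable {I J : Y.IdealSheafData}

lemma mem_sectionIdeal {a : Γ(Y, U)} : a ∈ sectionIdeal I U ↔ I.subschemeι.app U a = 0 :=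
  Iff.rfl

lemma sectionIdeal_eq (hU : IsAffineOpen U) : sectionIdeal I U = I.ideal ⟨U, hU⟩ :=
  I.ker_subschemeι_app ⟨U, hU⟩

lemma res_mem_sectionIdeal (h : V ≤ U) {a : Γ(Y, U)} (ha : a ∈ sectionIdeal I U) :
    res h a ∈ sectionIdeal I V := by
  rw [mem_sectionIdeal] at ha ⊢
  rw [app_res, ha, map_zero]

lemma mem_sectionIdeal_of_res_mem {ι : Type*} {U : ι → Y.Opens} (hUV : ∀ i, U i ≤ V)
    (hU : V ≤ ⨆ i, U i) {a : Γ(Y, V)} (h : ∀ i, res (hUV i) a ∈ sectionIdeal I (U i)) :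
    a ∈ sectionIdeal I V := by
  refine eq_of_res_eq (fun i => I.subschemeι.preimage_mono (hUV i)) ?_ fun i => ?_
  · rw [← Scheme.Hom.preimage_iSup]
    exact I.subschemeι.preimage_mono hU
  · exact (app_res _ _ _).symm.trans ((h i).trans (map_zero _).symm)

lemma mul_eq_zero_of_mem_sectionIdeal (hIJ : I * J = ⊥) {a b : Γ(Y, U)}
    (ha : a ∈ sectionIdeal I U) (hb : b ∈ sectionIdeal J U) : a * b = 0 := by
  refine eq_of_res_eq (U := fun W : {W : Y.affineOpens // W.1 ≤ U} => W.1.1) (fun W => W.2) ?_ ?_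
  · intro y hy
    obtain ⟨_, ⟨W, hW, rfl⟩, hyW, hWU⟩ := Y.isBasis_affineOpens.exists_subset_of_mem_open hy U.2
    exact Opens.mem_iSup.mpr ⟨⟨⟨W, hW⟩, hWU⟩, hyW⟩
  · rintro ⟨⟨W, hW⟩, hWU⟩
    have ha' : res hWU a ∈ I.ideal ⟨W, hW⟩ := sectionIdeal_eq hW ▸ res_mem_sectionIdeal hWU ha
    have hb' : res hWU b ∈ J.ideal ⟨W, hW⟩ := sectionIdeal_eq hW ▸ res_mem_sectionIdeal hWU hb
    have hab : res hWU a * res hWU b ∈ (I * J).ideal ⟨W, hW⟩ := Ideal.mul_mem_mul ha' hb'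
    rw [map_zero, map_mul]
    simpa [hIJ] using hab

end SectionIdeal

section Extension

variable {Y : Scheme.{u}} {I J : Y.IdealSheafData} {U V W : Y.Opens}

lemma preimage_compl_support (J : Y.IdealSheafData) : J.subschemeι ⁻¹ᵁ J.support.compl = ⊥ := by
  ext z
  simpa using show J.subschemeι z ∈ (J.support : Set Y) by
    rw [← J.range_subschemeι]; exact Set.mem_range_self z

lemma mem_of_preimage_le (h : J.subschemeι ⁻¹ᵁ U ≤ J.subschemeι ⁻¹ᵁ V) {y : Y} (hy : y ∈ U)
    (hyJ : y ∈ J.support) : y ∈ V := by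
  obtain ⟨z, rfl⟩ : y ∈ Set.range J.subschemeι := by rwa [J.range_subschemeι]
  exact h hy

lemma le_sup_compl_support (h : J.subschemeι ⁻¹ᵁ U ≤ J.subschemeι ⁻¹ᵁ V) :
    U ≤ V ⊔ (U ⊓ J.support.compl) := by
  intro y hy
  by_cases hyJ : y ∈ J.support
  · exact Or.inl (mem_of_preimage_le h hy hyJ)
  · exact Or.inr ⟨hy, hyJ⟩

lemma eq_zero_of_le_compl_support (hIJ : I * J = ⊥) (hU : U ≤ J.support.compl) {a : Γ(Y, U)}
    (ha : a ∈ sectionIdeal I U) : a = 0 := by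
  have hU' : J.subschemeι ⁻¹ᵁ U = ⊥ :=
    le_bot_iff.mp ((J.subschemeι.preimage_mono hU).trans (preimage_compl_support J).le)
  have := subsingleton_section_of_eq_bot hU'
  rw [← mul_one a]
  exact mul_eq_zero_of_mem_sectionIdeal hIJ ha (Subsingleton.elim (α := Γ(J.subscheme, _)) _ _)

lemma eq_zero_of_res_eq_zero (hIJ : I * J = ⊥) (hVU : V ≤ U)
    (h : J.subschemeι ⁻¹ᵁ U ≤ J.subschemeι ⁻¹ᵁ V) {a : Γ(Y, U)} (ha : a ∈ sectionIdeal I U)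
    (ha' : res hVU a = 0) : a = 0 := by
  refine Y.sheaf.eq_of_locally_eq₂ (homOfLE hVU)
    (homOfLE (inf_le_left : U ⊓ J.support.compl ≤ U)) (le_sup_compl_support h) _ _
    (ha'.trans (map_zero _).symm) (Eq.trans ?_ (map_zero _).symm)
  exact eq_zero_of_le_compl_support hIJ inf_le_right (res_mem_sectionIdeal inf_le_left ha)

/- As `I * J = 0`, sections of `I` vanish off `V(J)`, so that extension by zero glues. -/
lemma exists_mem_sectionIdeal_res_eq (hIJ : I * J = ⊥) (hVU : V ≤ U)
    (h : J.subschemeι ⁻¹ᵁ U ≤ J.subschemeι ⁻¹ᵁ V) {a : Γ(Y, V)} (ha : a ∈ sectionIdeal I V) :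
    ∃ b ∈ sectionIdeal I U, res hVU b = a := by
  have hC : U ⊓ J.support.compl ≤ U := inf_le_left
  obtain ⟨b, hb, hb'⟩ := exists_res_eq_of_le_sup hVU hC (le_sup_compl_support h) a 0 (by
    rw [map_zero]
    exact eq_zero_of_le_compl_support hIJ (inf_le_right.trans inf_le_right)
      (res_mem_sectionIdeal inf_le_left ha))
  refine ⟨b, mem_sectionIdeal_of_res_mem
    (U := fun i : Bool => bif i then V else U ⊓ J.support.compl) (Bool.rec hC hVU) ?_ ?_, hb⟩
  · rw [iSup_bool_eq]
    exact le_sup_compl_support h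
  · rintro (_ | _)
    · exact (congrArg (· ∈ _) hb').mpr (zero_mem _)
    · exact (congrArg (· ∈ _) hb).mpr ha

lemma exists_mem_sectionIdeal_res_eq_pow_mul (hU : IsAffineOpen U) (γ : Γ(Y, U))
    {a : Γ(Y, Y.basicOpen γ)} (ha : a ∈ sectionIdeal I (Y.basicOpen γ)) :
    ∃ n, ∃ e ∈ sectionIdeal I U,
      res (Y.basicOpen_le γ) e = res (Y.basicOpen_le γ) γ ^ n * a := by
  obtain ⟨n, e, he⟩ := exists_eq_pow_mul_of_isCompact_of_isQuasiSeparated Y U hU.isCompact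
    hU.isQuasiSeparated γ a
  have hker : res (Scheme.basicOpen_le _ _) (I.subschemeι.app U e) =
      (0 : Γ(I.subscheme, I.subscheme.basicOpen (I.subschemeι.app U γ))) := by
    have he' : res (Y.basicOpen_le γ) e ∈ sectionIdeal I (Y.basicOpen γ) :=
      (congrArg (· ∈ _) he).mpr (Ideal.mul_mem_left _ _ ha)
    rw [mem_sectionIdeal, app_res] at he'
    have := congr(res (Scheme.preimage_basicOpen _ γ).ge $he')
    rwa [res_res, map_zero] at this
  obtain ⟨m, hm⟩ := exists_pow_mul_eq_zero_of_res_basicOpen_eq_zero_of_isCompact I.subscheme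
    (hU.preimage I.subschemeι).isCompact _ _ hker
  refine ⟨m + n, γ ^ m * e, ?_, ?_⟩
  · rw [mem_sectionIdeal, map_mul, map_pow, hm]
  · rw [map_mul, map_pow, pow_add, mul_assoc]
    exact congr(_ * $he)

lemma eventually_exists_mem_sectionIdeal_res_eq_pow_mul (hIJ : I * J = ⊥) (hU : IsAffineOpen U)
    (γ : Γ(Y, U)) (hV : V ≤ Y.basicOpen γ)
    (h : J.subschemeι ⁻¹ᵁ Y.basicOpen γ ≤ J.subschemeι ⁻¹ᵁ V) {a : Γ(Y, V)}
    (ha : a ∈ sectionIdeal I V) :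
    ∀ᶠ n in Filter.atTop, ∃ e ∈ sectionIdeal I U,
      res (hV.trans (Y.basicOpen_le γ)) e = res (hV.trans (Y.basicOpen_le γ)) γ ^ n * a := by
  obtain ⟨b, hb, rfl⟩ := exists_mem_sectionIdeal_res_eq hIJ hV h ha
  obtain ⟨n, e, he, heb⟩ := exists_mem_sectionIdeal_res_eq_pow_mul hU γ hb
  filter_upwards [Filter.eventually_ge_atTop n] with m hm
  refine ⟨γ ^ (m - n) * e, Ideal.mul_mem_left _ _ he, ?_⟩
  have heb' := congr(res hV $heb)
  rw [map_mul, map_pow, res_res, res_res] at heb'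
  rw [map_mul, map_pow, heb', ← mul_assoc, ← pow_add, Nat.sub_add_cancel hm]

lemma eventually_pow_mul_eq_zero (hIJ : I * J = ⊥) (hU : IsCompact (U : Set Y)) (γ : Γ(Y, U))
    (hV : V ≤ Y.basicOpen γ) (h : J.subschemeι ⁻¹ᵁ Y.basicOpen γ ≤ J.subschemeι ⁻¹ᵁ V)
    {a : Γ(Y, U)} (ha : a ∈ sectionIdeal I U) (ha' : res (hV.trans (Y.basicOpen_le γ)) a = 0) :
    ∀ᶠ n in Filter.atTop, γ ^ n * a = 0 := by
  obtain ⟨n, hn⟩ := exists_pow_mul_eq_zero_of_res_basicOpen_eq_zero_of_isCompact Y hU a γ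
    (eq_zero_of_res_eq_zero hIJ hV h (res_mem_sectionIdeal (Y.basicOpen_le γ) ha)
      ((res_res _ _ a).trans ha'))
  filter_upwards [Filter.eventually_ge_atTop n] with m hm
  rw [← Nat.sub_add_cancel hm, pow_add, mul_assoc, hn, mul_zero]

lemma res_sub_res_mem_sectionIdeal {t : Γ(I.subscheme, ⊤)} {a : Γ(Y, U)} {b : Γ(Y, V)}
    (ha : I.subschemeι.app U a = res le_top t) (hb : I.subschemeι.app V b = res le_top t)
    (hWU : W ≤ U) (hWV : W ≤ V) : res hWU a - res hWV b ∈ sectionIdeal I W := by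
  rw [mem_sectionIdeal, map_sub, app_res, app_res, ha, hb, res_res, res_res, sub_self]

end Extension

section Lifting

variable {Y : Scheme.{u}} {I J : Y.IdealSheafData} {ι : Type*} {U : ι → Y.Opens}

/-- The difference cocycle `s k - s l` of a family of local sections. -/
noncomputable def diffCocycle (s : ∀ k, Γ(Y, U k)) (k l : ι) : Γ(Y, U k ⊓ U l) :=
  res inf_le_left (s k) - res inf_le_right (s l)

/-- The functions `r` on `V(J)` for which `r` times the cocycle `s k - s l` is the coboundary of a
cochain with values in `I`. As `I * J = 0`, the product does not depend on the local lifts `γ` of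
`r`. -/
noncomputable def coboundaryIdeal (hIJ : I * J = ⊥) (hU : ∀ k, IsAffineOpen (U k))
    (s : ∀ k, Γ(Y, U k)) : Ideal Γ(J.subscheme, ⊤) where
  carrier := {r | ∃ γ e : ∀ k, Γ(Y, U k), (∀ k, J.subschemeι.app (U k) (γ k) = res le_top r) ∧
    (∀ k, e k ∈ sectionIdeal I (U k)) ∧
    ∀ k l, diffCocycle e k l = res inf_le_left (γ k) * diffCocycle s k l}
  zero_mem' := ⟨0, 0, by simp, by simp, by simp [diffCocycle]⟩
  add_mem' := by
    rintro r r' ⟨γ, e, hγ, he, hs⟩ ⟨γ', e', hγ', he', hs'⟩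
    refine ⟨γ + γ', e + e', by simp [hγ, hγ'], fun k => add_mem (he k) (he' k), fun k l => ?_⟩
    simp only [diffCocycle, Pi.add_apply, map_add] at hs hs' ⊢
    linear_combination hs k l + hs' k l
  smul_mem' := by
    rintro c r ⟨γ, e, hγ, he, hs⟩
    choose κ hκ using fun k => J.subschemeι.app_surjective (U k) (hU k) (res le_top c)
    refine ⟨κ * γ, κ * e, by simp [hκ, hγ], fun k => Ideal.mul_mem_left _ _ (he k), fun k l => ?_⟩
    have hκe := mul_eq_zero_of_mem_sectionIdeal hIJ (res_mem_sectionIdeal inf_le_right (he l))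
      (res_sub_res_mem_sectionIdeal (hκ k) (hκ l) inf_le_left inf_le_right)
    simp only [diffCocycle, Pi.mul_apply, map_mul] at hs ⊢
    linear_combination res inf_le_left (κ k) * hs k l + hκe

lemma preimage_basicOpen_of_app_eq {g : Γ(J.subscheme, ⊤)} {V : Y.Opens} {γ : Γ(Y, V)}
    (hγ : J.subschemeι.app V γ = res le_top g) :
    J.subschemeι ⁻¹ᵁ Y.basicOpen γ = J.subschemeι ⁻¹ᵁ V ⊓ J.subscheme.basicOpen g := by
  rw [Scheme.preimage_basicOpen, hγ, basicOpen_res]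

lemma eventually_pow_mul_diffCocycle_sub_eq_zero [QuasiSeparatedSpace Y] (hIJ : I * J = ⊥)
    (hU : ∀ k, IsAffineOpen (U k)) {s : ∀ k, Γ(Y, U k)} {t : Γ(I.subscheme, ⊤)}
    (hs : ∀ k, I.subschemeι.app (U k) (s k) = res le_top t) {g : Γ(J.subscheme, ⊤)}
    {γ : ∀ k, Γ(Y, U k)} (hγ : ∀ k, J.subschemeι.app (U k) (γ k) = res le_top g) {i : ι}
    (hg : J.subscheme.basicOpen g ≤ J.subschemeι ⁻¹ᵁ U i) {n : ℕ} {e : ∀ k, Γ(Y, U k)}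
    (heI : ∀ k, e k ∈ sectionIdeal I (U k))
    (he : ∀ k, res (inf_le_left.trans (Y.basicOpen_le (γ k)) : _ ⊓ U i ≤ _) (e k) =
      res (inf_le_left.trans (Y.basicOpen_le (γ k))) (γ k) ^ n *
        (res (inf_le_left.trans (Y.basicOpen_le (γ k))) (s k) - res inf_le_right (s i)))
    (k l : ι) :
    ∀ᶠ m in Filter.atTop, res inf_le_left (γ k) ^ m *
      (diffCocycle e k l - res inf_le_left (γ k) ^ n * diffCocycle s k l) = 0 := by
  let V := Y.basicOpen (res (inf_le_left : U k ⊓ U l ≤ U k) (γ k)) ⊓ (Y.basicOpen (γ l) ⊓ U i)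
  have hVk : V ≤ Y.basicOpen (γ k) ⊓ U i :=
    le_inf (inf_le_left.trans ((basicOpen_res _ _).trans_le inf_le_right))
      (inf_le_right.trans inf_le_right)
  have hJV : J.subschemeι ⁻¹ᵁ Y.basicOpen (res (inf_le_left : U k ⊓ U l ≤ U k) (γ k)) ≤
      J.subschemeι ⁻¹ᵁ V := by
    simp only [V, Scheme.Hom.preimage_inf]
    refine le_inf le_rfl ?_
    rw [basicOpen_res, Scheme.Hom.preimage_inf, Scheme.Hom.preimage_inf,
      preimage_basicOpen_of_app_eq (hγ k), preimage_basicOpen_of_app_eq (hγ l)]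
    exact le_inf (inf_le_inf inf_le_right inf_le_right)
      ((inf_le_right.trans inf_le_right).trans hg)
  refine eventually_pow_mul_eq_zero hIJ ?_ _ (inf_le_left : V ≤ _) hJV ?_ ?_
  · exact QuasiSeparatedSpace.inter_isCompact _ _ (U k).2 (hU k).isCompact (U l).2
      (hU l).isCompact
  · exact sub_mem (sub_mem (res_mem_sectionIdeal _ (heI k)) (res_mem_sectionIdeal _ (heI l)))
      (Ideal.mul_mem_left _ _
        (res_sub_res_mem_sectionIdeal (hs k) (hs l) inf_le_left inf_le_right))
  · have hVl : V ≤ U l := inf_le_right.trans (inf_le_left.trans (Y.basicOpen_le (γ l)))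
    have hek := congr(res hVk $(he k))
    have hel := congr(res (inf_le_right : V ≤ _) $(he l))
    have hγkl := mul_eq_zero_of_mem_sectionIdeal hIJ
      (res_sub_res_mem_sectionIdeal (hs l) (hs i) hVl (hVk.trans inf_le_right))
      (Ideal.mem_of_dvd _ (sub_dvd_pow_sub_pow _ _ n) (res_sub_res_mem_sectionIdeal (hγ k) (hγ l)
        (hVk.trans (inf_le_left.trans (Y.basicOpen_le (γ k)))) hVl))
    simp only [diffCocycle, map_sub, map_mul, map_pow, res_res] at hek hel hγkl ⊢
    linear_combination hek - hel + hγkl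

lemma exists_pow_mem_coboundaryIdeal [QuasiSeparatedSpace Y] [Finite ι] (hIJ : I * J = ⊥)
    (hU : ∀ k, IsAffineOpen (U k)) {s : ∀ k, Γ(Y, U k)} {t : Γ(I.subscheme, ⊤)}
    (hs : ∀ k, I.subschemeι.app (U k) (s k) = res le_top t) {g : Γ(J.subscheme, ⊤)} {i : ι}
    (hg : J.subscheme.basicOpen g ≤ J.subschemeι ⁻¹ᵁ U i) :
    ∃ n, g ^ n ∈ coboundaryIdeal hIJ hU s := by
  choose γ hγ using fun k => J.subschemeι.app_surjective (U k) (hU k) (res le_top g)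
  have hext : ∀ᶠ n in Filter.atTop, ∀ k, ∃ e ∈ sectionIdeal I (U k), _ :=
    Filter.eventually_all.mpr fun k => eventually_exists_mem_sectionIdeal_res_eq_pow_mul hIJ (hU k)
      (γ k) (V := Y.basicOpen (γ k) ⊓ U i) inf_le_left
      (le_inf le_rfl (((preimage_basicOpen_of_app_eq (hγ k)).trans_le inf_le_right).trans hg))
      (res_sub_res_mem_sectionIdeal (hs k) (hs i) (inf_le_left.trans (Y.basicOpen_le _))
        inf_le_right)
  obtain ⟨n, hn⟩ := hext.exists
  choose e heI he using hn
  have hkill : ∀ᶠ m in Filter.atTop, ∀ k l, _ :=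
    Filter.eventually_all.mpr fun k => Filter.eventually_all.mpr fun l =>
      eventually_pow_mul_diffCocycle_sub_eq_zero hIJ hU hs hγ hg heI he k l
  obtain ⟨m, hm⟩ := hkill.exists
  refine ⟨m + n, γ ^ (m + n), γ ^ m * e, by simp [hγ], fun k => Ideal.mul_mem_left _ _ (heI k),
    fun k l => ?_⟩
  have hγe := mul_eq_zero_of_mem_sectionIdeal hIJ (res_mem_sectionIdeal inf_le_right (heI l))
    (Ideal.mem_of_dvd _ (sub_dvd_pow_sub_pow _ _ m)
      (res_sub_res_mem_sectionIdeal (hγ k) (hγ l) inf_le_left inf_le_right))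
  have hmkl := hm k l
  simp only [diffCocycle, Pi.mul_apply, Pi.pow_apply, map_mul, map_pow] at hmkl ⊢
  linear_combination hmkl + hγe

lemma span_eq_top_of_forall_exists_mem_basicOpen {Z : Scheme.{u}} [IsAffine Z] {S : Set Γ(Z, ⊤)}
    (h : ∀ z : Z, ∃ s ∈ S, z ∈ Z.basicOpen s) : Ideal.span S = ⊤ := by
  rw [← (isAffineOpen_top Z).self_le_iSup_basicOpen_iff]
  intro z _
  obtain ⟨s, hs, hz⟩ := h z
  exact Opens.mem_iSup.mpr ⟨⟨s, hs⟩, hz⟩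

lemma coboundaryIdeal_eq_top [QuasiSeparatedSpace Y] [Finite ι] [IsAffine J.subscheme]
    (hIJ : I * J = ⊥) (hU : ∀ k, IsAffineOpen (U k)) (hcov : ⊤ ≤ ⨆ k, U k) {s : ∀ k, Γ(Y, U k)}
    {t : Γ(I.subscheme, ⊤)} (hs : ∀ k, I.subschemeι.app (U k) (s k) = res le_top t) :
    coboundaryIdeal hIJ hU s = ⊤ := by
  rw [← Ideal.radical_eq_top, eq_top_iff, ← span_eq_top_of_forall_exists_mem_basicOpen
    (S := {g | ∃ i, J.subscheme.basicOpen g ≤ J.subschemeι ⁻¹ᵁ U i}), Ideal.span_le]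
  · rintro g ⟨i, hg⟩
    exact exists_pow_mem_coboundaryIdeal hIJ hU hs hg
  · intro z
    obtain ⟨i, hi⟩ := Opens.mem_iSup.mp (hcov (Opens.mem_top (J.subschemeι z)))
    obtain ⟨_, ⟨_, ⟨g, rfl⟩, rfl⟩, hzg, hg⟩ := (isBasis_basicOpen J.subscheme
      ).exists_subset_of_mem_open (show z ∈ J.subschemeι ⁻¹ᵁ U i from hi) (Opens.isOpen _)
    exact ⟨g, ⟨i, hg⟩, hzg⟩

/- Local lifts of a function on `V(I)` differ by a cocycle with values in `I`. As `I * J = 0`, this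
is a cocycle of modules over the functions on the affine scheme `V(J)`, hence a coboundary. -/
theorem appTop_subschemeι_surjective_of_mul_eq_bot [CompactSpace Y] [QuasiSeparatedSpace Y]
    [IsAffine J.subscheme] (hIJ : I * J = ⊥) :
    Function.Surjective I.subschemeι.appTop := by
  intro t
  obtain ⟨ι, _, U, hU, -, hcov⟩ := exists_finite_affine_cover Y
  choose s hs using fun k => I.subschemeι.app_surjective (U k) (hU k) (res le_top t)
  obtain ⟨γ, e, hγ, he, hes⟩ := (coboundaryIdeal_eq_top hIJ hU hcov hs).ge
    (Submodule.mem_top (x := 1))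
  obtain ⟨σ, hσ⟩ := exists_res_eq (fun k => le_top) hcov (s - e) fun k l => by
    have hγs := mul_eq_zero_of_mem_sectionIdeal hIJ
      (res_sub_res_mem_sectionIdeal (hs k) (hs l) inf_le_left inf_le_right)
      (res_sub_res_mem_sectionIdeal (hγ k) (map_one _ |>.trans (map_one _).symm) inf_le_left le_top)
    have hkl := hes k l
    simp only [diffCocycle, Pi.sub_apply, map_sub, map_one] at hγs hkl ⊢
    linear_combination -hkl - hγs
  refine ⟨σ, eq_of_res_eq (U := fun k => I.subschemeι ⁻¹ᵁ U k) (fun _ => le_top) ?_ fun k => ?_⟩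
  · rw [← Scheme.Hom.preimage_iSup]
    exact I.subschemeι.preimage_mono hcov
  · refine (app_res _ le_top σ).symm.trans ?_
    rw [hσ, Pi.sub_apply, map_sub, hs, mem_sectionIdeal.mp (he k), sub_zero]

end Lifting

section Criterion

variable {Y : Scheme.{u}} {I J K : Y.IdealSheafData}

/-- All proper closed subschemes of `Y` are affine; this is the induction hypothesis of a
Noetherian-style induction on closed subschemes. -/
def HasAffineProperSubschemes (Y : Scheme.{u}) : Prop :=
  ∀ K : Y.IdealSheafData, K ≠ ⊥ → IsAffine K.subscheme

instance [CompactSpace Y] : CompactSpace K.subscheme :=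
  K.subschemeι.isClosedEmbedding.compactSpace

instance [QuasiSeparatedSpace Y] : QuasiSeparatedSpace K.subscheme :=
  quasiSeparatedSpace_of_quasiSeparated K.subschemeι

instance (h : I ≤ K) : IsClosedImmersion (Scheme.IdealSheafData.inclusion h) := by
  have : IsClosedImmersion (Scheme.IdealSheafData.inclusion h ≫ I.subschemeι) := by
    rw [Scheme.IdealSheafData.inclusion_subschemeι]; infer_instance
  exact .of_comp _ I.subschemeι

lemma exists_mem_basicOpen_le_of_isAffine_subscheme [IsAffine K.subscheme]
    (hsurj : Function.Surjective K.subschemeι.appTop) {y : Y} (hyK : y ∈ K.support)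
    {U : Y.Opens} (hyU : y ∈ U) (hUK : (U : Set Y)ᶜ ⊆ K.support) :
    ∃ s : Γ(Y, ⊤), y ∈ Y.basicOpen s ∧ Y.basicOpen s ≤ U := by
  obtain ⟨z, rfl⟩ : y ∈ Set.range K.subschemeι := by rwa [K.range_subschemeι]
  obtain ⟨_, ⟨_, ⟨t, rfl⟩, rfl⟩, hzt, ht⟩ := (isBasis_basicOpen K.subscheme
    ).exists_subset_of_mem_open (show z ∈ K.subschemeι ⁻¹ᵁ U from hyU) (Opens.isOpen _)
  obtain ⟨s, rfl⟩ := hsurj t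
  have hs : K.subscheme.basicOpen (K.subschemeι.appTop s) = K.subschemeι ⁻¹ᵁ Y.basicOpen s :=
    (Scheme.preimage_basicOpen _ s).symm
  rw [hs] at hzt ht
  refine ⟨s, hzt, fun w hws => by_contra fun hwU => hwU ?_⟩
  exact mem_of_preimage_le ht hws (hUK hwU)

lemma exists_basicOpen_eq_of_isClopen {U : Y.Opens} (hU : IsClosed (U : Set Y)) :
    ∃ s : Γ(Y, ⊤), Y.basicOpen s = U := by
  let U' : Y.Opens := ⟨(U : Set Y)ᶜ, hU.isOpen_compl⟩
  have hcov : ⊤ ≤ U ⊔ U' := fun y _ => em (y ∈ U)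
  have := subsingleton_section_of_eq_bot
    (le_bot_iff.mp (fun y hy => hy.2 hy.1) : U ⊓ U' = ⊥)
  obtain ⟨s, hs, hs'⟩ := exists_res_eq_of_le_sup le_top le_top hcov 1 0 (Subsingleton.elim _ _)
  refine ⟨s, le_antisymm (fun y hy => by_contra fun hyU => ?_) ?_⟩
  · have hy' : y ∈ Y.basicOpen (res (le_top : U' ≤ ⊤) s) := by
      rw [basicOpen_res]; exact ⟨hyU, hy⟩
    rwa [hs', Scheme.basicOpen_zero] at hy'
  · have h1 : U ⊓ Y.basicOpen s = U := by
      rw [← basicOpen_res le_top, hs, Scheme.basicOpen_of_isUnit _ isUnit_one]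
    exact inf_eq_left.mp h1

lemma exists_mem_isAffineOpen_basicOpen [CompactSpace Y] (haff : HasAffineProperSubschemes Y)
    (hsurj : ∀ K : Y.IdealSheafData, K ≠ ⊥ → Function.Surjective K.subschemeι.appTop) (y : Y) :
    ∃ s : Γ(Y, ⊤), y ∈ Y.basicOpen s ∧ IsAffineOpen (Y.basicOpen s) := by
  obtain ⟨x, hx, hxcl⟩ :=
    (isClosed_closure (s := {y})).exists_closed_singleton ⟨y, subset_closure rfl⟩
  obtain ⟨_, ⟨U, hU, rfl⟩, hxU, -⟩ :=
    Y.isBasis_affineOpens.exists_subset_of_mem_open (Set.mem_univ x) isOpen_univ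
  suffices h : ∃ s : Γ(Y, ⊤), x ∈ Y.basicOpen s ∧ Y.basicOpen s ≤ U by
    obtain ⟨s, hxs, hsU⟩ := h
    refine ⟨s, (specializes_iff_mem_closure.mpr hx).mem_open (Y.basicOpen s).2 hxs, ?_⟩
    rw [← inf_eq_right.mpr hsU, ← basicOpen_res le_top s]
    exact hU.basicOpen _
  let C : Closeds Y := ⟨(U : Set Y)ᶜ ∪ {x}, U.2.isClosed_compl.union hxcl⟩
  have hsupp : (Scheme.IdealSheafData.vanishingIdeal C).support = C :=
    SetLike.coe_injective (Scheme.IdealSheafData.coe_support_vanishingIdeal C)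
  by_cases hC : Scheme.IdealSheafData.vanishingIdeal C = ⊥
  · have hUx : (U : Set Y) ⊆ {x} := fun w hw => by
      have hwC : w ∈ C := by rw [← hsupp, hC, Scheme.IdealSheafData.support_bot]; trivial
      exact hwC.resolve_left (not_not_intro hw)
    have hUcl : IsClosed (U : Set Y) := by
      rwa [hUx.antisymm (Set.singleton_subset_iff.mpr hxU)]
    obtain ⟨s, hs⟩ := exists_basicOpen_eq_of_isClopen hUcl
    exact ⟨s, hs ▸ hxU, hs.le⟩
  · have := haff _ hC
    exact exists_mem_basicOpen_le_of_isAffine_subscheme (hsurj _ hC)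
      (by rw [hsupp]; exact Or.inr rfl) hxU (by rw [hsupp]; exact Set.subset_union_left)

lemma exists_mem_span_appTop_subschemeι_eq_one [IsAffine K.subscheme]
    (hsurj : Function.Surjective K.subschemeι.appTop) {S : Set Γ(Y, ⊤)}
    (hS : ∀ y : Y, ∃ s ∈ S, y ∈ Y.basicOpen s) :
    ∃ u ∈ Ideal.span S, K.subschemeι.appTop u = 1 := by
  have hspan : Ideal.span (K.subschemeι.appTop '' S) = ⊤ :=
    span_eq_top_of_forall_exists_mem_basicOpen fun z => by
      obtain ⟨s, hs, hz⟩ := hS (K.subschemeι z)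
      exact ⟨_, ⟨s, hs, rfl⟩, (Scheme.preimage_basicOpen K.subschemeι s).le hz⟩
  rwa [← Ideal.map_span, Ideal.eq_top_iff_one, Ideal.mem_map_iff_of_surjective _ hsurj] at hspan

/- The functions `s` with `D(s)` affine have no common zero, so it remains to see that they generate
the unit ideal. -/
theorem isAffine_of_sectionIdeal_le_span [CompactSpace Y] (haff : HasAffineProperSubschemes Y)
    (hsurj : ∀ K : Y.IdealSheafData, K ≠ ⊥ → Function.Surjective K.subschemeι.appTop)
    (hI : I ≠ ⊥) (hker : ∀ S : Set Γ(Y, ⊤), (∀ y : Y, ∃ s ∈ S, y ∈ Y.basicOpen s) →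
      sectionIdeal I ⊤ ≤ Ideal.span S) : IsAffine Y := by
  let S : Set Γ(Y, ⊤) := {s | IsAffineOpen (Y.basicOpen s)}
  refine isAffine_of_isAffineOpen_basicOpen S ?_ fun _ hs => hs
  have hS : ∀ y : Y, ∃ s ∈ S, y ∈ Y.basicOpen s := fun y =>
    (exists_mem_isAffineOpen_basicOpen haff hsurj y).imp fun _ hs => hs.symm
  have := haff I hI
  obtain ⟨u, hu, hu1⟩ := exists_mem_span_appTop_subschemeι_eq_one (hsurj I hI) hS
  have hu' : 1 - u ∈ sectionIdeal I ⊤ := by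
    rw [mem_sectionIdeal, map_sub, map_one, sub_eq_zero]
    exact hu1.symm
  rw [Ideal.eq_top_iff_one, ← sub_add_cancel 1 u]
  exact add_mem (hker S hS hu') hu

lemma appTop_subschemeι_surjective_of_le (h : I ≤ K) [IsAffine I.subscheme]
    (hI : Function.Surjective I.subschemeι.appTop) : Function.Surjective K.subschemeι.appTop := by
  rw [← Scheme.IdealSheafData.inclusion_subschemeι h, Scheme.Hom.comp_appTop]
  exact (IsClosedImmersion.isAffine_surjective_of_isAffine
    (Scheme.IdealSheafData.inclusion h)).2.comp hI

theorem isAffine_of_mul_eq_bot [CompactSpace Y] [QuasiSeparatedSpace Y]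
    (haff : HasAffineProperSubschemes Y) (hI : I ≠ ⊥) (hJ : J ≠ ⊥) (hIJ : I * J = ⊥) :
    IsAffine Y := by
  have hJaff := haff J hJ
  have hIaff := haff I hI
  refine isAffine_of_sectionIdeal_le_span haff (fun K _ => ?_) hI fun S hS a ha => ?_
  · by_cases hKI : K * I = ⊥
    · exact appTop_subschemeι_surjective_of_mul_eq_bot hKI
    · have := haff _ hKI
      refine appTop_subschemeι_surjective_of_le (I := K * I) ?_
        (appTop_subschemeι_surjective_of_mul_eq_bot (J := J) ?_)
      · exact mul_le_of_le_one_right' le_top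
      · rw [mul_assoc, hIJ, Scheme.IdealSheafData.mul_bot]
  · obtain ⟨v, hv, hv1⟩ := exists_mem_span_appTop_subschemeι_eq_one
      (appTop_subschemeι_surjective_of_mul_eq_bot (mul_comm J I ▸ hIJ)) hS
    have hv' : 1 - v ∈ sectionIdeal J ⊤ := by
      rw [mem_sectionIdeal, map_sub, map_one, sub_eq_zero]
      exact hv1.symm
    have hav : a = a * v := by
      linear_combination mul_eq_zero_of_mem_sectionIdeal hIJ ha hv'
    exact hav ▸ Ideal.mul_mem_left _ a hv

end Criterion

section MinimalSubscheme

open Limits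

variable {Y : Scheme.{u}}

instance : PreservesLimitsOfSize.{u, u} (Scheme.IdealSheafData.subschemeFunctor Y) :=
  have := Y.kerAdjunction.leftAdjoint_preservesColimits
  preservesLimitsOfSize_of_rightOp _

lemma exists_isAffine_subscheme_of_isAffine_subscheme_sSup [CompactSpace Y] [QuasiSeparatedSpace Y]
    {c : Set Y.IdealSheafData} (hne : c.Nonempty) (hc : DirectedOn (· ≤ ·) c)
    [hsup : IsAffine (sSup c).subscheme] : ∃ I ∈ c, IsAffine I.subscheme := by
  have := hne.to_subtype
  have := directedOn_iff_isDirectedOrder.mp hc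
  have : IsConnected (c : Type u)ᵒᵖ := IsCofiltered.isConnected _
  let F : (c : Type u) ⥤ Y.IdealSheafData := Monotone.functor (f := fun I : c => I.1) fun _ _ h => h
  have hF : IsLUB (Set.range F.obj) (sSup c) := by
    convert isLUB_sSup c
    exact Subtype.range_coe
  let G := Scheme.IdealSheafData.subschemeFunctor Y ⋙ Over.forget Y
  have hlim : IsLimit (G.mapCone (Preorder.colimitCoconeOfIsLUB F hF).cocone.op) :=
    isLimitOfPreserves G (Preorder.colimitCoconeOfIsLUB F hF).isColimit.op
  have (I : (c : Type u)ᵒᵖ) : CompactSpace ((F.op ⋙ G).obj I) :=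
    inferInstanceAs (CompactSpace I.unop.1.subscheme)
  have (I : (c : Type u)ᵒᵖ) : QuasiSeparatedSpace ((F.op ⋙ G).obj I) :=
    inferInstanceAs (QuasiSeparatedSpace I.unop.1.subscheme)
  have {I J : (c : Type u)ᵒᵖ} (h : I ⟶ J) : IsAffineHom ((F.op ⋙ G).map h) :=
    inferInstanceAs (IsAffineHom (Scheme.IdealSheafData.inclusion (F.map h.unop).le))
  have : IsAffine (G.mapCone (Preorder.colimitCoconeOfIsLUB F hF).cocone.op).pt := hsup
  obtain ⟨I, hI⟩ := Scheme.exists_isAffine_of_isLimit _ _ hlim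
  exact ⟨I.unop.1, I.unop.2, hI⟩

lemma eq_bot_of_map_le_ker {Z : Scheme.{u}} {i : Z ⟶ Y} [IsClosedImmersion i]
    {J : Z.IdealSheafData} (h : J.map i ≤ i.ker) : J = ⊥ := by
  let k : Z ⟶ J.subscheme := IsClosedImmersion.lift (J.subschemeι ≫ i) i h
  have hk : k ≫ J.subschemeι = 𝟙 Z := by
    rw [← cancel_mono i, Category.assoc, Category.id_comp]
    exact IsClosedImmersion.lift_fac _ _ h
  rw [eq_bot_iff, ← (𝟙 Z : Z ⟶ Z).ker_eq_bot_of_isIso, ← hk]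
  exact J.ker_subschemeι.ge.trans (k.le_ker_comp _)

lemma isAffine_subscheme_of_isAffine_subscheme_map {Z : Scheme.{u}} (i : Z ⟶ Y)
    [IsClosedImmersion i] (J : Z.IdealSheafData) [IsAffine (J.map i).subscheme] :
    IsAffine J.subscheme := by
  let k : J.subscheme ⟶ (J.map i).subscheme := J.subschemeMap _ i le_rfl
  have : IsClosedImmersion (k ≫ (J.map i).subschemeι) := by
    rw [Scheme.IdealSheafData.subschemeMap_subschemeι]
    infer_instance
  have : IsClosedImmersion k := .of_comp _ (J.map i).subschemeι
  exact isAffine_of_isAffineHom k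

lemma exists_not_isAffine_subscheme_and_hasAffineProperSubschemes [CompactSpace Y]
    [QuasiSeparatedSpace Y] (hY : ¬ IsAffine Y) :
    ∃ I : Y.IdealSheafData, ¬ IsAffine I.subscheme ∧ HasAffineProperSubschemes I.subscheme := by
  obtain ⟨I, -, hI⟩ := zorn_le_nonempty₀ {I : Y.IdealSheafData | ¬ IsAffine I.subscheme}
    (fun c hcs hc I hIc => ⟨sSup c, fun h => by
      obtain ⟨I, hI, hIaff⟩ :=
        exists_isAffine_subscheme_of_isAffine_subscheme_sSup ⟨I, hIc⟩ hc.directedOn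
      exact hcs hI hIaff, fun _ => le_sSup⟩) ⊥
    fun _ => hY (.of_isIso (inv (⊥ : Y.IdealSheafData).subschemeι))
  refine ⟨I, hI.prop, fun J hJ => by_contra fun hJaff => hJ ?_⟩
  have hle : I ≤ J.map I.subschemeι := I.ker_subschemeι.ge.trans (Scheme.Hom.le_ker_comp _ _)
  exact eq_bot_of_map_le_ker <| (hI.le_of_ge
    (fun _ => hJaff (isAffine_subscheme_of_isAffine_subscheme_map I.subschemeι J)) hle).trans
    I.ker_subschemeι.ge

end MinimalSubscheme

section Integral

variable {Y Z : Scheme.{u}} (j : Z ⟶ Y)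

lemma comap_mul_of_isOpenImmersion [IsOpenImmersion j] (I J : Y.IdealSheafData) :
    (I * J).comap j = I.comap j * J.comap j := by
  ext U : 2
  have h (𝔞 : Ideal Γ(Y, j ''ᵁ U)) : 𝔞.comap (j.appIso U).inv.hom = 𝔞.map (j.appIso U).hom.hom :=
    𝔞.comap_symm (j.appIso U.1).commRingCatIsoToRingEquiv
  simp only [Scheme.IdealSheafData.ideal_mul, Scheme.IdealSheafData.ideal_comap_of_isOpenImmersion,
    Pi.mul_apply, h, Ideal.map_mul]

lemma comap_map_of_isOpenImmersion [IsOpenImmersion j] [QuasiCompact j] (I : Z.IdealSheafData) :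
    (I.map j).comap j = I := by
  ext U : 2
  have hU : IsAffineOpen (j ⁻¹ᵁ j ''ᵁ U.1) := by rw [j.preimage_image_eq]; exact U.2
  have hle : j ⁻¹ᵁ j ''ᵁ U.1 ≤ U := (j.preimage_image_eq U).le
  rw [Scheme.IdealSheafData.ideal_comap_of_isOpenImmersion,
    I.ideal_map j ⟨j ''ᵁ U, U.2.image_of_isOpenImmersion j⟩ hU, Ideal.comap_comap,
    ← CommRingCat.hom_comp, j.appIso_inv_app, ← I.map_ideal (U := ⟨_, hU⟩) (V := U) hle]
  exact Ideal.comap_map_of_bijective _ (ConcreteCategory.bijective_of_isIso _)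

lemma noZeroDivisors_idealSheafData_of_isOpenImmersion [NoZeroDivisors Y.IdealSheafData]
    [IsOpenImmersion j] [QuasiCompact j] [IsSchemeTheoreticallyDominant j] :
    NoZeroDivisors Z.IdealSheafData where
  eq_zero_or_eq_zero_of_mul_eq_zero {I J} hIJ := by
    have h : I.map j * J.map j = 0 := by
      rw [Scheme.IdealSheafData.zero_eq_bot, ← le_bot_iff, ← j.ker_eq_bot,
        ← Scheme.IdealSheafData.map_bot, Scheme.IdealSheafData.le_map_iff_comap_le,
        comap_mul_of_isOpenImmersion, comap_map_of_isOpenImmersion, comap_map_of_isOpenImmersion,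
        hIJ]
      rfl
    have h0 (K : Z.IdealSheafData) (hK : K.map j = 0) : K = 0 := by
      rw [← comap_map_of_isOpenImmersion j K, hK]
      exact Scheme.IdealSheafData.comap_bot _
    exact (mul_eq_zero.mp h).imp (h0 I) (h0 J)

lemma isIntegral_of_isAffine_of_noZeroDivisors_idealSheafData [IsAffine Z] [Nonempty Z]
    [NoZeroDivisors Z.IdealSheafData] : IsIntegral Z := by
  have : NoZeroDivisors (Ideal Γ(Z, ⊤)) :=
    Scheme.IdealSheafData.equivOfIsAffine.symm.toMulEquiv.noZeroDivisors Z.IdealSheafData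
  have : NoZeroDivisors Γ(Z, ⊤) := ⟨fun {a b} hab => by
    have h : Ideal.span {a} * Ideal.span {b} = 0 := by
      rw [Ideal.span_singleton_mul_span_singleton, hab, Ideal.span_singleton_zero,
        Ideal.zero_eq_bot]
    simpa only [Ideal.zero_eq_bot, Ideal.span_singleton_eq_bot] using mul_eq_zero.mp h⟩
  have : Nonempty (⊤ : Z.Opens) := ‹Nonempty Z›.map fun z => ⟨z, trivial⟩
  have : IsDomain Γ(Z, ⊤) := NoZeroDivisors.to_isDomain _
  exact isIntegral_of_isAffine_of_isDomain Z

lemma isIntegral_of_isSchemeTheoreticallyDominant [QuasiCompact j] [IsSchemeTheoreticallyDominant j]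
    [IsIntegral Z] : IsIntegral Y := by
  have : IsReduced Y := IsSchemeTheoreticallyDominant.isReduced j
  have : IrreducibleSpace Y := by
    rw [irreducibleSpace_def, Set.top_eq_univ, ← j.denseRange.closure_eq,
      isIrreducible_iff_closure, ← Set.image_univ]
    exact (IrreducibleSpace.isIrreducible_univ Z).image j j.continuous.continuousOn
  exact isIntegral_of_irreducibleSpace_of_isReduced Y

variable (Y) in
lemma exists_isSchemeTheoreticallyDominant_affineCover [CompactSpace Y] [Nonempty Y]
    [NoZeroDivisors Y.IdealSheafData] :
    ∃ i, IsSchemeTheoreticallyDominant (Y.affineCover.f i) := by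
  classical
  have : Nontrivial Y.IdealSheafData := ⟨⊤, ⊥, fun h => by
    simpa [eq_comm (a := (∅ : Set Y))] using congr((($h).support : Set Y))⟩
  let 𝒰 := Y.affineCover.finiteSubcover
  have h : ∏ i, (𝒰.f i).ker = 0 := by
    rw [Scheme.IdealSheafData.zero_eq_bot, eq_bot_iff, ← (𝟙 Y : Y ⟶ Y).ker_eq_bot_of_isIso,
      ← Scheme.Hom.iInf_ker_openCover_map_comp (𝟙 Y) 𝒰]
    refine le_iInf fun i => ?_
    rw [Category.comp_id, ← Finset.mul_prod_erase _ _ (Finset.mem_univ i)]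
    exact mul_le_of_le_one_right' le_top
  obtain ⟨i, -, hi⟩ := Finset.prod_eq_zero_iff.mp h
  exact ⟨_, ⟨hi⟩⟩

theorem isIntegral_of_noZeroDivisors_idealSheafData [CompactSpace Y] [QuasiSeparatedSpace Y]
    [Nonempty Y] [NoZeroDivisors Y.IdealSheafData] : IsIntegral Y := by
  obtain ⟨i, hi⟩ := exists_isSchemeTheoreticallyDominant_affineCover Y
  have := noZeroDivisors_idealSheafData_of_isOpenImmersion (Y.affineCover.f i)
  have : Nonempty (Y.affineCover.X i) :=
    (Y.affineCover.f i).denseRange.nonempty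
  have := isIntegral_of_isAffine_of_noZeroDivisors_idealSheafData (Z := Y.affineCover.X i)
  exact isIntegral_of_isSchemeTheoreticallyDominant (Y.affineCover.f i)

end Integral

section IntegralLinearForm

variable {K L : Type*} [Field K] [Field L] [Algebra K L]

lemma exists_map_pow_succ_ne_zero {l : L →ₗ[K] K} (hl : l 1 ≠ 0) {e : L} (he : IsIntegral K e)
    (he0 : e ≠ 0) : ∃ n : ℕ, l (e ^ (n + 1)) ≠ 0 := by
  by_contra! h
  have hp := congrArg l (minpoly.aeval K e)
  rw [Polynomial.aeval_eq_sum_range, Finset.sum_range_succ', map_add, map_sum, map_zero,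
    Finset.sum_eq_zero fun n _ => by rw [map_smul, h, smul_zero], zero_add, pow_zero,
    map_smul] at hp
  exact smul_ne_zero (minpoly.coeff_zero_ne_zero he he0) hl hp

lemma exists_forall_isInteger_map_mul {A B : Type*} (C : Type*) [CommRing A] [CommRing B]
    [CommRing C] [Algebra A B] [Algebra A K] [Algebra A L] [Algebra B L] [Algebra C B] [Algebra C L]
    [IsScalarTower A B L] [IsScalarTower A K L] [IsScalarTower C B L] [IsFractionRing A K]
    [IsFractionRing C L] [Module.Finite A B] (l : L →ₗ[K] K) :
    ∃ e : C, algebraMap C L e ≠ 0 ∧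
      ∀ b : B, IsLocalization.IsInteger A (l (algebraMap C L e * algebraMap B L b)) := by
  have : Nontrivial A := (algebraMap A K).domain_nontrivial
  obtain ⟨d, hd, hdl⟩ := FractionalIdeal.isFractional_of_fg (S := nonZeroDivisors A)
    (Submodule.FG.map (l.restrictScalars A ∘ₗ (IsScalarTower.toAlgHom A B L).toLinearMap)
      (Module.Finite.fg_top (R := A) (M := B)))
  have hd0 : algebraMap A L d ≠ 0 := by
    rw [IsScalarTower.algebraMap_apply A K L]
    exact (_root_.map_ne_zero _).mpr (IsFractionRing.to_map_ne_zero_of_mem_nonZeroDivisors hd)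
  obtain ⟨p, q, hq, hpq⟩ := IsFractionRing.div_surjective (A := C) (algebraMap A L d)
  have hq0 : algebraMap C L q ≠ 0 := by
    have := (algebraMap C L).domain_nontrivial
    exact IsFractionRing.to_map_ne_zero_of_mem_nonZeroDivisors hq
  refine ⟨p, ?_, fun b => ?_⟩
  · intro hp
    rw [hp, zero_div] at hpq
    exact hd0 hpq.symm
  · have h : algebraMap C L p * algebraMap B L b =
        d • algebraMap B L (algebraMap C B q * b) := by
      rw [Algebra.smul_def, ← hpq, map_mul, ← IsScalarTower.algebraMap_apply C B L]
      field_simp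
    rw [h, ← algebraMap_smul K d, map_smul, algebraMap_smul]
    exact hdl _ ⟨_, trivial, rfl⟩

/- A power of a common multiple `e` of the denominators of a form `l` is absorbed into `l`; some
power works without making the value at `1` vanish, since `e` is algebraic over `K`. -/
lemma exists_linearMap_isInteger {ι : Type*} [Finite ι] {A B : ι → Type*} (C : Type*)
    [∀ i, CommRing (A i)] [∀ i, CommRing (B i)] [CommRing C] [∀ i, Algebra (A i) (B i)]
    [∀ i, Algebra (A i) K] [∀ i, Algebra (A i) L] [∀ i, Algebra (B i) L] [∀ i, Algebra C (B i)]
    [Algebra C L] [∀ i, IsScalarTower (A i) (B i) L] [∀ i, IsScalarTower (A i) K L]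
    [∀ i, IsScalarTower C (B i) L] [∀ i, IsFractionRing (A i) K] [IsFractionRing C L]
    [∀ i, Module.Finite (A i) (B i)] [Algebra.IsAlgebraic K L] :
    ∃ l : L →ₗ[K] K, l 1 ≠ 0 ∧
      ∀ i (b : B i), IsLocalization.IsInteger (A i) (l (algebraMap (B i) L b)) := by
  classical
  have := Fintype.ofFinite ι
  obtain ⟨l, hl⟩ := LinearMap.exists_leftInverse_of_injective (Algebra.linearMap K L)
    (LinearMap.ker_eq_bot.mpr (algebraMap K L).injective)
  have hl1 : l 1 = 1 := by simpa using congr($hl 1)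
  choose e he0 he using fun i => exists_forall_isInteger_map_mul (A := A i) (B := B i) C l
  have hprod : algebraMap C L (∏ i, e i) ≠ 0 := by
    rw [map_prod]
    exact Finset.prod_ne_zero_iff.mpr fun i _ => he0 i
  obtain ⟨n, hn⟩ := exists_map_pow_succ_ne_zero (l := l) (hl1 ▸ one_ne_zero)
    (Algebra.IsIntegral.isIntegral (algebraMap C L (∏ i, e i))) hprod
  refine ⟨l ∘ₗ LinearMap.mulLeft K (algebraMap C L (∏ i, e i) ^ (n + 1)), by simpa using hn,
    fun i b => ?_⟩
  have h : algebraMap C L (∏ i, e i) ^ (n + 1) * algebraMap (B i) L b = algebraMap C L (e i) *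
      algebraMap (B i) L
        (algebraMap C (B i) ((∏ k ∈ Finset.univ.erase i, e k) * (∏ i, e i) ^ n) * b) := by
    rw [map_mul, ← IsScalarTower.algebraMap_apply C (B i) L, ← map_pow, ← mul_assoc, ← map_mul,
      ← mul_assoc, Finset.mul_prod_erase _ _ (Finset.mem_univ i), pow_succ']
  rw [LinearMap.comp_apply, LinearMap.mulLeft_apply, h]
  exact he i _

end IntegralLinearForm

section FunctionField

variable {X Y : Scheme.{u}} (f : X ⟶ Y)

lemma map_genericPoint [IrreducibleSpace X] [IrreducibleSpace Y] [IsDominant f] :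
    f (genericPoint X) = genericPoint Y := by
  have h := (genericPoint_spec X).image f.continuous
  rw [Set.image_univ, f.denseRange.closure_range] at h
  exact h.eq (genericPoint_spec Y)

instance {U : Y.Opens} [Nonempty U] [IsDominant f] : Nonempty (f ⁻¹ᵁ U) :=
  have ⟨x, hx⟩ := f.denseRange.exists_mem_open U.2 (Set.nonempty_coe_sort.mp ‹_›)
  ⟨⟨x, hx⟩⟩

/-- The map on function fields induced by a dominant morphism. -/
noncomputable def functionFieldMap [IrreducibleSpace X] [IrreducibleSpace Y] [IsDominant f] :
    Y.functionField ⟶ X.functionField :=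
  Y.presheaf.stalkSpecializes (specializes_of_eq (map_genericPoint f)) ≫
    f.stalkMap (genericPoint X)

lemma functionFieldMap_germToFunctionField [IrreducibleSpace X] [IrreducibleSpace Y] [IsDominant f]
    {U : Y.Opens} [Nonempty U] (a : Γ(Y, U)) :
    functionFieldMap f (Y.germToFunctionField U a) =
      X.germToFunctionField (f ⁻¹ᵁ U) (f.app U a) := by
  simp only [functionFieldMap, Scheme.germToFunctionField, CommRingCat.comp_apply,
    TopCat.Presheaf.germ_stalkSpecializes_apply]
  exact f.germ_stalkMap_apply U (genericPoint X) _ a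

lemma germToFunctionField_res [IrreducibleSpace Y] {U V : Y.Opens} [Nonempty U] [Nonempty V]
    (h : V ≤ U) (a : Γ(Y, U)) :
    Y.germToFunctionField V (res h a) = Y.germToFunctionField U a :=
  Y.presheaf.germ_res_apply _ _ _ _

end FunctionField

section LinearForm

variable {X Y : Scheme.{u}} {f : X ⟶ Y}

lemma eq_of_germToFunctionField_eq [IsIntegral Y] {U : Y.Opens} {a b : Γ(Y, U)}
    (h : ∀ [Nonempty U], Y.germToFunctionField U a = Y.germToFunctionField U b) : a = b := by
  cases isEmpty_or_nonempty U
  · have := subsingleton_section_of_eq_bot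
      (SetLike.coe_injective (Set.isEmpty_coe_sort.mp ‹_›) : U = ⊥)
    exact Subsingleton.elim a b
  · exact Y.germToFunctionField_injective U h

lemma exists_germToFunctionField_eq_of_forall_exists [IsIntegral Y] {U : Y.Opens} [Nonempty U]
    {x : Y.functionField} (h : ∀ y ∈ U, ∃ (W : Y.Opens) (_ : Nonempty W) (a : Γ(Y, W)),
      y ∈ W ∧ W ≤ U ∧ Y.germToFunctionField W a = x) :
    ∃ a : Γ(Y, U), Y.germToFunctionField U a = x := by
  choose W hW a hyW hWU ha using h
  obtain ⟨s, hs⟩ := exists_res_eq (U := fun y : U => W y y.2) (V := U) (fun y => hWU y y.2)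
    (fun y hy => Opens.mem_iSup.mpr ⟨⟨y, hy⟩, hyW y hy⟩) (fun y => a y y.2) fun y z => by
      refine eq_of_germToFunctionField_eq ?_
      intro _
      rw [germToFunctionField_res, germToFunctionField_res, ha, ha]
  obtain ⟨y, hy⟩ := ‹Nonempty U›
  have := hW y hy
  exact ⟨s, by rw [← germToFunctionField_res (hWU y hy), hs ⟨y, hy⟩, ha]⟩

lemma exists_functionField_addMonoidHom (f : X ⟶ Y) [IsIntegral X] [IsIntegral Y]
    [IsAffine X] [IsFinite f] [IsDominant f]
    {ι : Type*} [Finite ι] [Nonempty ι] {V : ι → Y.Opens} (hV : ∀ i, IsAffineOpen (V i))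
    [∀ i, Nonempty (V i)] :
    ∃ l : X.functionField →+ Y.functionField, l 1 ≠ 0 ∧
      (∀ k x, l (functionFieldMap f k * x) = k * l x) ∧
      ∀ i (b : Γ(X, f ⁻¹ᵁ V i)), ∃ a : Γ(Y, V i),
        Y.germToFunctionField (V i) a = l (X.germToFunctionField (f ⁻¹ᵁ V i) b) := by
  have : Nonempty (⊤ : X.Opens) := ⟨⟨genericPoint X, trivial⟩⟩
  let : Algebra Y.functionField X.functionField := (functionFieldMap f).hom.toAlgebra
  let (i : ι) : Algebra Γ(Y, V i) Γ(X, f ⁻¹ᵁ V i) := (f.app (V i)).hom.toAlgebra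
  let (i : ι) : Algebra Γ(X, ⊤) Γ(X, f ⁻¹ᵁ V i) := (res le_top).toAlgebra
  let (i : ι) : Algebra Γ(Y, V i) X.functionField :=
    ((algebraMap Γ(X, f ⁻¹ᵁ V i) X.functionField).comp (f.app (V i)).hom).toAlgebra
  have (i : ι) : IsScalarTower Γ(Y, V i) Γ(X, f ⁻¹ᵁ V i) X.functionField := .of_algebraMap_eq' rfl
  have (i : ι) : IsScalarTower Γ(Y, V i) Y.functionField X.functionField :=
    .of_algebraMap_eq fun a => (functionFieldMap_germToFunctionField f a).symm
  have (i : ι) : IsScalarTower Γ(X, ⊤) Γ(X, f ⁻¹ᵁ V i) X.functionField :=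
    .of_algebraMap_eq fun b => (germToFunctionField_res le_top b).symm
  have (i : ι) := functionField_isFractionRing_of_isAffineOpen Y (V i) (hV i)
  have (i : ι) := functionField_isFractionRing_of_isAffineOpen X _ ((hV i).preimage f)
  have := functionField_isFractionRing_of_isAffineOpen X ⊤ (isAffineOpen_top X)
  have (i : ι) : Module.Finite Γ(Y, V i) Γ(X, f ⁻¹ᵁ V i) := IsFinite.finite_app f (V i) (hV i)
  have : Algebra.IsAlgebraic Y.functionField X.functionField :=
    let i := Classical.arbitrary ι
    isAlgebraic_of_isFractionRing Γ(Y, V i) Γ(X, f ⁻¹ᵁ V i) _ _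
  obtain ⟨l, hl1, hl⟩ := exists_linearMap_isInteger (K := Y.functionField) (L := X.functionField)
    (A := fun i => Γ(Y, V i)) (B := fun i => Γ(X, f ⁻¹ᵁ V i)) Γ(X, ⊤)
  exact ⟨l.toAddMonoidHom, hl1, fun k x => l.map_smul k x, hl⟩

lemma exists_res_basicOpen_eq_pow_mul (f : X ⟶ Y) [IsAffineHom f] {U V : Y.Opens}
    (hV : IsAffineOpen V) {y : Y} (hyU : y ∈ U) (hyV : y ∈ V) (b : Γ(X, f ⁻¹ᵁ U)) :
    ∃ (a : Γ(Y, V)) (hU : Y.basicOpen a ≤ U) (n : ℕ) (b' : Γ(X, f ⁻¹ᵁ V)), y ∈ Y.basicOpen a ∧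
      res (f.preimage_mono (Y.basicOpen_le a)) b' =
        f.app _ (res (Y.basicOpen_le a) a) ^ n * res (f.preimage_mono hU) b := by
  obtain ⟨a, haU, hya⟩ := hV.exists_basicOpen_le ⟨y, hyU⟩ hyV
  have hD : f ⁻¹ᵁ Y.basicOpen a = X.basicOpen (f.app V a) := Scheme.preimage_basicOpen f a
  obtain ⟨n, b', hb'⟩ := exists_eq_pow_mul_of_isAffineOpen X _ (hV.preimage f) (f.app V a)
    (res (hD.ge.trans (f.preimage_mono haU)) b)
  refine ⟨a, haU, n, b', hya, ?_⟩
  have h := congr(res hD.le $hb')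
  rw [map_mul, map_pow] at h
  rw [app_res]
  exact (res_res _ _ _).symm.trans (h.trans (congr_arg₂ _ (congr($(res_res _ _ _) ^ n))
    (res_res _ _ _)))

/-- An `𝒪_Y`-linear form `f_* 𝒪_X → 𝒪_Y`. -/
structure LinearForm (f : X ⟶ Y) where
  toFun (U : Y.Opens) : Γ(X, f ⁻¹ᵁ U) →+ Γ(Y, U)
  app_mul {U : Y.Opens} (a : Γ(Y, U)) (b : Γ(X, f ⁻¹ᵁ U)) :
    toFun U (f.app U a * b) = a * toFun U b
  res_toFun {U V : Y.Opens} (h : V ≤ U) (b : Γ(X, f ⁻¹ᵁ U)) :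
    res h (toFun U b) = toFun V (res (f.preimage_mono h) b)

lemma exists_germToFunctionField_eq_map_of_isAffineOpen (f : X ⟶ Y) [IsIntegral X] [IsIntegral Y]
    [IsAffineHom f] [IsDominant f] {l : X.functionField →+ Y.functionField}
    (hl : ∀ k x, l (functionFieldMap f k * x) = k * l x)
    {ι : Type*} {V : ι → Y.Opens} [∀ i, Nonempty (V i)] (hV : ∀ i, IsAffineOpen (V i))
    (hcover : ⊤ ≤ ⨆ i, V i)
    (hlV : ∀ i (b : Γ(X, f ⁻¹ᵁ V i)), ∃ a : Γ(Y, V i),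
      Y.germToFunctionField (V i) a = l (X.germToFunctionField (f ⁻¹ᵁ V i) b))
    (U : Y.Opens) [Nonempty U] (b : Γ(X, f ⁻¹ᵁ U)) :
    ∃ a : Γ(Y, U), Y.germToFunctionField U a = l (X.germToFunctionField (f ⁻¹ᵁ U) b) := by
  refine exists_germToFunctionField_eq_of_forall_exists fun y hyU => ?_
  obtain ⟨i, hyV⟩ := Opens.mem_iSup.mp (hcover (Set.mem_univ y))
  obtain ⟨a, haU, n, b', hya, hb'⟩ := exists_res_basicOpen_eq_pow_mul f (hV i) hyU hyV b
  obtain ⟨c, hc⟩ := hlV i b'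
  have : Nonempty (Y.basicOpen a) := ⟨⟨y, hya⟩⟩
  obtain ⟨a', ha'⟩ : ∃ a', a' * res (Y.basicOpen_le a) a = 1 :=
    (Y.toRingedSpace.isUnit_res_basicOpen a).exists_left_inv
  refine ⟨_, this, a' ^ n * res (Y.basicOpen_le a) c, hya, haU, ?_⟩
  have hgerm : Y.germToFunctionField _ (res (Y.basicOpen_le a) c) =
      Y.germToFunctionField _ (res (Y.basicOpen_le a) a) ^ n *
        l (X.germToFunctionField (f ⁻¹ᵁ U) b) := by
    rw [germToFunctionField_res, hc, ← germToFunctionField_res (f.preimage_mono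
      (Y.basicOpen_le a)) b', hb', map_mul, map_pow, ← functionFieldMap_germToFunctionField,
      germToFunctionField_res (f.preimage_mono haU), ← map_pow, hl]
  rw [map_mul, hgerm, ← mul_assoc, map_pow, ← mul_pow, ← map_mul, ha', map_one, one_pow, one_mul]

lemma exists_linearForm_of_forall_exists (f : X ⟶ Y) [IsIntegral X] [IsIntegral Y] [IsDominant f]
    {l₀ : X.functionField →+ Y.functionField}
    (hl₀ : ∀ k x, l₀ (functionFieldMap f k * x) = k * l₀ x)
    (h : ∀ (U : Y.Opens) [Nonempty U] (b : Γ(X, f ⁻¹ᵁ U)), ∃ a : Γ(Y, U),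
      Y.germToFunctionField U a = l₀ (X.germToFunctionField (f ⁻¹ᵁ U) b)) :
    ∃ l : LinearForm f, ∀ (U : Y.Opens) [Nonempty U] (b : Γ(X, f ⁻¹ᵁ U)),
      Y.germToFunctionField U (l.toFun U b) = l₀ (X.germToFunctionField (f ⁻¹ᵁ U) b) := by
  have h' (U : Y.Opens) (b : Γ(X, f ⁻¹ᵁ U)) : ∃ a : Γ(Y, U), ∀ [Nonempty U],
      Y.germToFunctionField U a = l₀ (X.germToFunctionField (f ⁻¹ᵁ U) b) := by
    cases isEmpty_or_nonempty U
    · exact ⟨0, fun {h} => isEmptyElim h.some⟩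
    · exact (h U b).imp fun _ ha => ha
  choose l hl using h'
  refine ⟨⟨fun U => AddMonoidHom.mk' (l U) fun b b' => ?_, fun {U} a b => ?_,
    fun {U V} hVU b => ?_⟩, fun U _ b => hl U b⟩ <;>
  refine eq_of_germToFunctionField_eq ?_ <;> intro _
  · simp only [map_add, hl]
  · simp only [AddMonoidHom.mk'_apply, map_mul, hl, ← functionFieldMap_germToFunctionField, hl₀]
  · have : Nonempty U := .map (Set.inclusion hVU) ‹_›
    simp only [AddMonoidHom.mk'_apply, germToFunctionField_res, hl]

theorem exists_linearForm_one_ne_zero (f : X ⟶ Y) [IsIntegral X] [IsIntegral Y] [IsAffine X]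
    [CompactSpace Y] [IsFinite f] [IsDominant f] : ∃ l : LinearForm f, l.toFun ⊤ 1 ≠ 0 := by
  obtain ⟨ι, _, V, hV, _, hcover⟩ := exists_finite_affine_cover Y
  have : Nonempty ι := ⟨(Opens.mem_iSup.mp (hcover (Set.mem_univ (genericPoint Y)))).choose⟩
  obtain ⟨l₀, hl₀1, hl₀, hlV⟩ := exists_functionField_addMonoidHom f hV
  obtain ⟨l, hl⟩ := exists_linearForm_of_forall_exists f hl₀
    (exists_germToFunctionField_eq_map_of_isAffineOpen f hl₀ hV hcover hlV)
  have : Nonempty (⊤ : Y.Opens) := ⟨⟨genericPoint Y, trivial⟩⟩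
  refine ⟨l, fun h => hl₀1 ?_⟩
  rw [← map_one (X.germToFunctionField (f ⁻¹ᵁ ⊤)).hom]
  exact (hl ⊤ 1).symm.trans (by rw [h, map_zero])

end LinearForm

section InverseImageIdeal

open Limits

lemma ker_eq_map_ker_of_isPushout {A B C P : CommRingCat.{u}} {φ : A ⟶ B} {ψ : A ⟶ C}
    {inl : B ⟶ P} {inr : C ⟶ P} (h : IsPushout φ ψ inl inr) (hψ : Function.Surjective ψ) :
    RingHom.ker inl.hom = (RingHom.ker ψ.hom).map φ.hom := by
  apply le_antisymm
  · intro b hb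
    let q := (RingHom.ker ψ.hom).map φ.hom
    let χ : C →+* B ⧸ q := RingHom.liftOfSurjective ψ.hom hψ ⟨(Ideal.Quotient.mk q).comp φ.hom,
      fun a ha => Ideal.Quotient.eq_zero_iff_mem.mpr (Ideal.mem_map_of_mem _ ha)⟩
    have hχ : φ ≫ CommRingCat.ofHom (Ideal.Quotient.mk q) = ψ ≫ CommRingCat.ofHom χ :=
      CommRingCat.hom_ext (ψ.hom.liftOfSurjective_comp hψ ⟨_, _⟩).symm
    have hdesc := congr($(h.inl_desc _ _ hχ) b)
    rw [CommRingCat.comp_apply, RingHom.mem_ker.mp hb, map_zero] at hdesc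
    exact Ideal.Quotient.eq_zero_iff_mem.mp hdesc.symm
  · rw [Ideal.map_le_iff_le_comap]
    intro a ha
    refine congr($h.w a).trans ?_
    rw [CommRingCat.comp_apply, RingHom.mem_ker.mp ha, map_zero]

lemma app_eq_res_appTop {X Y Z : Scheme.{u}} {f : X ⟶ Y} {g : Y ⟶ Z} {h : X ⟶ Z} (w : f ≫ g = h)
    {V : Z.Opens} {s : Γ(Z, V)} {t : Γ(Y, ⊤)} (hs : g.app V s = res le_top t) :
    h.app V s = res le_top (f.appTop t) := by
  subst w
  exact congr($(Scheme.Hom.comp_app f g V) s).trans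
    (congr(f.app _ $hs).trans (app_res f le_top t))

variable {X Y : Scheme.{u}} (f : X ⟶ Y) (J : Y.IdealSheafData)

lemma ideal_comap_of_isAffineHom [IsAffineHom f] (V : Y.affineOpens) :
    (J.comap f).ideal ⟨f ⁻¹ᵁ V, V.2.preimage f⟩ = (J.ideal V).map (f.app V).hom := by
  have hV := V.2
  have hpre : pullback.fst f J.subschemeι ⁻¹ᵁ f ⁻¹ᵁ V = _ :=
    congr($(pullback.condition (f := f) (g := J.subschemeι)) ⁻¹ᵁ V.1)
  have h := (isIso_pushoutSection_iff (.of_hasPullback f J.subschemeι) le_rfl le_rfl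
    (left_eq_inf.mpr hpre.le)).mp
      (isIso_pushoutSection_of_isAffineOpen _ _ _ _ hV (hV.preimage J.subschemeι) (hV.preimage f))
  simp only [Scheme.Hom.appLE_eq_app] at h
  rw [← J.ker_subschemeι_app, ← ker_eq_map_ker_of_isPushout h (J.subschemeι_app_surjective V),
    Scheme.IdealSheafData.comap, Scheme.Hom.ker_apply]

lemma exists_app_sub_res_mem_map [IsAffine X] [IsAffineHom f] (t : Γ(J.subscheme, ⊤)) :
    ∃ σ : Γ(X, ⊤), ∀ (V : Y.affineOpens) (s : Γ(Y, V)), J.subschemeι.app V s = res le_top t →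
      f.app V s - res le_top σ ∈ (J.ideal V).map (f.app V).hom := by
  let g := (J.comap f).subschemeMap J f (J.le_map_comap f)
  obtain ⟨σ, hσ⟩ := (J.comap f).subschemeι.app_surjective ⊤ (isAffineOpen_top X) (g.app ⊤ t)
  refine ⟨σ, fun V s hs => ?_⟩
  rw [← ideal_comap_of_isAffineHom, ← sectionIdeal_eq, mem_sectionIdeal, map_sub, sub_eq_zero]
  have hs' : ((J.comap f).subschemeι ≫ f).app V s = res le_top (g.appTop t) :=
    app_eq_res_appTop ((J.comap f).subschemeMap_subschemeι J f _) hs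
  have hσ' : (J.comap f).subschemeι.app (f ⁻¹ᵁ V) (res le_top σ) = res le_top (g.appTop t) :=
    (app_res _ le_top σ).trans congr(res le_top $hσ)
  rw [hσ']
  exact congr($(Scheme.Hom.comp_app (J.comap f).subschemeι f V) s).symm.trans hs'

end InverseImageIdeal

section PrincipalIdealSheaf

variable {Y : Scheme.{u}} {j : Γ(Y, ⊤)}

lemma ideal_ofIdealTop_span_singleton (U : Y.affineOpens) :
    (Scheme.IdealSheafData.ofIdealTop (Ideal.span {j})).ideal U = Ideal.span {res le_top j} := by
  rw [Scheme.IdealSheafData.ofIdealTop_ideal, Ideal.map_span, Set.image_singleton]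

lemma ofIdealTop_span_singleton_ne_bot (hj : j ≠ 0) :
    Scheme.IdealSheafData.ofIdealTop (Ideal.span {j}) ≠ ⊥ := by
  refine fun h => hj (eq_of_res_eq (fun _ => le_top) (iSup_affineOpens_eq_top Y).ge fun V => ?_)
  have hjV := (ideal_ofIdealTop_span_singleton (j := j) V).ge (Ideal.mem_span_singleton_self _)
  rw [h, Scheme.IdealSheafData.ideal_bot] at hjV
  rw [map_zero]
  exact hjV

variable [IsIntegral Y]

lemma eq_of_res_mul_eq_res_mul (hj : j ≠ 0) {U : Y.Opens} {a b : Γ(Y, U)}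
    (h : res le_top j * a = res le_top j * b) : a = b := by
  refine eq_of_germToFunctionField_eq ?_
  intro _
  have : Nonempty (⊤ : Y.Opens) := ⟨⟨genericPoint Y, trivial⟩⟩
  have hj' : Y.germToFunctionField ⊤ j ≠ 0 :=
    (map_ne_zero_iff _ (Y.germToFunctionField_injective ⊤)).mpr hj
  refine mul_left_cancel₀ hj' ?_
  simpa only [map_mul, germToFunctionField_res] using congr(Y.germToFunctionField U $h)

lemma exists_res_eq_of_res_eq_mul (hj : j ≠ 0) {ι : Type*} {V : ι → Y.Opens} (hV : ⊤ ≤ ⨆ i, V i)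
    {a : Γ(Y, ⊤)} {c : ∀ i, Γ(Y, V i)} (hc : ∀ i, res le_top a = res le_top j * c i) :
    ∃ b : Γ(Y, ⊤), ∀ i, res le_top b = c i :=
  exists_res_eq (fun _ => le_top) hV c fun i k => eq_of_res_mul_eq_res_mul hj <| by
    have h₁ := congr(res (inf_le_left : V i ⊓ V k ≤ V i) $(hc i))
    have h₂ := congr(res (inf_le_right : V i ⊓ V k ≤ V k) $(hc k))
    simp only [map_mul, res_res] at h₁ h₂
    exact h₁.symm.trans h₂

lemma ofIdealTop_span_singleton_mul_ne_bot (hj : j ≠ 0) {K : Y.IdealSheafData} (hK : K ≠ ⊥) :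
    Scheme.IdealSheafData.ofIdealTop (Ideal.span {j}) * K ≠ ⊥ := by
  refine fun h => hK (eq_bot_iff.mpr fun U a ha => ?_)
  have hja : res le_top j * a ∈ (Scheme.IdealSheafData.ofIdealTop (Ideal.span {j}) * K).ideal U :=
    Ideal.mul_mem_mul (ideal_ofIdealTop_span_singleton U ▸ Ideal.mem_span_singleton_self _) ha
  rw [h, Scheme.IdealSheafData.ideal_bot] at hja
  exact eq_of_res_mul_eq_res_mul hj (hja.trans (mul_zero _).symm)

lemma sectionIdeal_ofIdealTop_span_singleton_le (hj : j ≠ 0) :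
    sectionIdeal (.ofIdealTop (Ideal.span {j})) ⊤ ≤ Ideal.span {j} := by
  intro a ha
  have hdvd (V : Y.affineOpens) : ∃ c, res le_top a = res (le_top : V.1 ≤ ⊤) j * c := by
    have := res_mem_sectionIdeal (le_top : V.1 ≤ ⊤) ha
    rwa [sectionIdeal_eq V.2, ideal_ofIdealTop_span_singleton, Ideal.mem_span_singleton] at this
  choose c hc using hdvd
  have hcover := (iSup_affineOpens_eq_top Y).ge
  obtain ⟨b, hb⟩ := exists_res_eq_of_res_eq_mul hj hcover hc
  exact Ideal.mem_span_singleton.mpr ⟨b, eq_of_res_eq (fun _ => le_top) hcover fun V => by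
    rw [hc, map_mul, hb]⟩

end PrincipalIdealSheaf

section IntegralCase

variable {X Y : Scheme.{u}} {f : X ⟶ Y}

namespace LinearForm

variable (l : LinearForm f)

lemma toFun_app {U : Y.Opens} (a : Γ(Y, U)) :
    l.toFun U (f.app U a) = res le_top (l.toFun ⊤ 1) * a := by
  rw [l.res_toFun le_top, map_one, mul_comm, ← l.app_mul, mul_one]

lemma toFun_mem_of_mem_map {U : Y.Opens} {𝔞 : Ideal Γ(Y, U)} {b : Γ(X, f ⁻¹ᵁ U)}
    (hb : b ∈ 𝔞.map (f.app U).hom) : l.toFun U b ∈ 𝔞 := by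
  induction hb using Submodule.closure_induction with
  | zero => rw [map_zero]; exact zero_mem _
  | add x y _ _ hx hy => rw [map_add]; exact add_mem hx hy
  | smul_mem c x hx =>
    obtain ⟨a, ha, rfl⟩ := hx
    rw [smul_eq_mul, mul_comm]
    exact (l.app_mul a c).symm ▸ 𝔞.mul_mem_right _ ha

lemma toFun_one_mem_span [IsAffine X] {S : Set Γ(Y, ⊤)} (hS : ∀ y, ∃ s ∈ S, y ∈ Y.basicOpen s) :
    l.toFun ⊤ 1 ∈ Ideal.span S := by
  refine l.toFun_mem_of_mem_map ?_
  suffices htop : Ideal.span (f.appTop.hom '' S) = ⊤ by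
    rw [Ideal.map_span]
    exact htop.ge trivial
  refine span_eq_top_of_forall_exists_mem_basicOpen fun x => ?_
  obtain ⟨s, hs, hx⟩ := hS (f x)
  exact ⟨_, ⟨s, hs, rfl⟩, (Scheme.preimage_basicOpen f s).le hx⟩

lemma exists_mem_ideal_res_toFun_eq {K : Y.IdealSheafData} {σ : Γ(X, ⊤)} {V : Y.affineOpens}
    {s : Γ(Y, V)}
    (h : f.app V s - res le_top σ ∈
      ((Scheme.IdealSheafData.ofIdealTop (Ideal.span {l.toFun ⊤ 1}) * K).ideal V).map
        (f.app V).hom) :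
    ∃ r ∈ K.ideal V, res le_top (l.toFun ⊤ σ) = res le_top (l.toFun ⊤ 1) * (s - r) := by
  have hl := l.toFun_mem_of_mem_map h
  rw [Scheme.IdealSheafData.ideal_mul, Pi.mul_apply, ideal_ofIdealTop_span_singleton,
    Ideal.mem_span_singleton_mul] at hl
  obtain ⟨r, hr, hlr⟩ := hl
  rw [map_sub, toFun_app] at hlr
  refine ⟨r, hr, ?_⟩
  calc res le_top (l.toFun ⊤ σ) = l.toFun V (res le_top σ) := l.res_toFun le_top σ
    _ = res le_top (l.toFun ⊤ 1) * (s - r) := by rw [mul_sub, hlr, sub_sub_cancel]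

/- Put `j = l 1`. A function `t` on `V(K)` lifts to the affine scheme `V(jK)`, and its pullback to
the preimage of `V(jK)` lifts to a function `σ` on `X`. On any affine open, `l σ` is then `j` times
a lift of `t`, so `l σ / j` is a global lift. -/
theorem appTop_subschemeι_surjective [IsAffine X] [IsAffineHom f] [IsIntegral Y]
    (hl : l.toFun ⊤ 1 ≠ 0) (K : Y.IdealSheafData)
    [IsAffine (Scheme.IdealSheafData.ofIdealTop (Ideal.span {l.toFun ⊤ 1}) * K).subscheme] :
    Function.Surjective K.subschemeι.appTop := by
  intro t
  have hle : Scheme.IdealSheafData.ofIdealTop (Ideal.span {l.toFun ⊤ 1}) * K ≤ K :=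
    fun V => Ideal.mul_le_right
  obtain ⟨t', rfl⟩ := (Scheme.IdealSheafData.inclusion hle).app_surjective ⊤ (isAffineOpen_top _) t
  obtain ⟨σ, hσ⟩ := exists_app_sub_res_mem_map f _ t'
  choose s hs using fun V : Y.affineOpens =>
    Scheme.IdealSheafData.subschemeι_app_surjective _ V (res le_top t')
  choose r hr hlr using fun V => l.exists_mem_ideal_res_toFun_eq (hσ V (s V) (hs V))
  have hcover := (iSup_affineOpens_eq_top Y).ge
  obtain ⟨a, ha⟩ := exists_res_eq_of_res_eq_mul hl hcover hlr
  refine ⟨a, eq_of_res_eq (U := fun V : Y.affineOpens => K.subschemeι ⁻¹ᵁ V) (fun _ => le_top) ?_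
    fun V => ?_⟩
  · rw [← Scheme.Hom.preimage_iSup]
    exact K.subschemeι.preimage_mono hcover
  · have hrV : K.subschemeι.app V (r V) = 0 :=
      mem_sectionIdeal.mp ((sectionIdeal_eq V.2).ge (hr V))
    refine (app_res _ le_top a).symm.trans ?_
    rw [ha, map_sub, hrV, sub_zero]
    exact app_eq_res_appTop (Scheme.IdealSheafData.inclusion_subschemeι hle) (hs V)

end LinearForm

theorem isAffine_of_isIntegral (f : X ⟶ Y) [IsIntegral X] [IsIntegral Y] [IsAffine X] [IsFinite f]
    [Surjective f] (haff : HasAffineProperSubschemes Y) : IsAffine Y := by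
  have : CompactSpace Y := f.surjective.compactSpace f.continuous
  obtain ⟨l, hl⟩ := exists_linearForm_one_ne_zero f
  have hsurj (K : Y.IdealSheafData) (hK : K ≠ ⊥) : Function.Surjective K.subschemeι.appTop :=
    have := haff _ (ofIdealTop_span_singleton_mul_ne_bot hl hK)
    l.appTop_subschemeι_surjective hl K
  refine isAffine_of_sectionIdeal_le_span haff hsurj (ofIdealTop_span_singleton_ne_bot hl)
    fun S hS => (sectionIdeal_ofIdealTop_span_singleton_le hl).trans ?_
  rw [Ideal.span_singleton_le_iff_mem]
  exact l.toFun_one_mem_span hS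

lemma surjective_of_genericPoint_mem_range (f : X ⟶ Y) [IsIntegral Y] [UniversallyClosed f]
    (h : genericPoint Y ∈ Set.range f) : Surjective f := by
  refine ⟨Set.range_eq_univ.mp (Set.univ_subset_iff.mp ?_)⟩
  rw [← genericPoint_closure]
  exact f.isClosedMap.isClosed_range.closure_subset_iff.mpr (Set.singleton_subset_iff.mpr h)

lemma exists_isClosedImmersion_isIntegral_mem_range [IsAffine X] (x : X) :
    ∃ (Z : Scheme.{u}) (i : Z ⟶ X), IsClosedImmersion i ∧ IsIntegral Z ∧ x ∈ Set.range i := by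
  let p : PrimeSpectrum Γ(X, ⊤) := X.isoSpec.hom x
  let q := Ideal.Quotient.mk p.asIdeal
  have := IsClosedImmersion.spec_of_surjective (CommRingCat.ofHom q) Ideal.Quotient.mk_surjective
  refine ⟨Spec (.of (Γ(X, ⊤) ⧸ p.asIdeal)), Spec.map (CommRingCat.ofHom q) ≫ X.isoSpec.inv,
    inferInstance, (affine_isIntegral_iff _).mpr (Ideal.Quotient.isDomain _), ?_⟩
  obtain ⟨z, hz⟩ : p ∈ Set.range (PrimeSpectrum.comap q) := by
    rw [range_comap_of_surjective _ _ Ideal.Quotient.mk_surjective, Ideal.mk_ker]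
    exact Set.Subset.rfl
  exact ⟨z, congr(X.isoSpec.inv $hz).trans (Scheme.hom_inv_apply X.isoSpec x)⟩

theorem isAffine_of_isIntegral_target (f : X ⟶ Y) [IsIntegral Y] [IsAffine X] [IsFinite f]
    [Surjective f] (haff : HasAffineProperSubschemes Y) : IsAffine Y := by
  obtain ⟨x, hx⟩ := f.surjective (genericPoint Y)
  obtain ⟨Z, i, _, _, z, rfl⟩ := exists_isClosedImmersion_isIntegral_mem_range x
  have : IsAffine Z := isAffine_of_isAffineHom i
  have : Surjective (i ≫ f) := surjective_of_genericPoint_mem_range _ ⟨z, by simpa using hx⟩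
  exact isAffine_of_isIntegral (i ≫ f) haff

end IntegralCase

section Reduction

variable {X Y : Scheme.{u}}

lemma quasiSeparatedSpace_of_surjective (f : X ⟶ Y) [QuasiCompact f] [Surjective f]
    [QuasiSeparatedSpace X] : QuasiSeparatedSpace Y where
  inter_isCompact U V hU hU' hV hV' := by
    rw [← Set.image_preimage_eq (U ∩ V) f.surjective]
    refine IsCompact.image ?_ f.continuous
    exact QuasiSeparatedSpace.inter_isCompact _ _
      (hU.preimage f.continuous) (QuasiCompact.isCompact_preimage U hU hU')
      (hV.preimage f.continuous) (QuasiCompact.isCompact_preimage V hV hV')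

theorem isAffine_of_hasAffineProperSubschemes (f : X ⟶ Y) [IsAffine X] [IsFinite f] [Surjective f]
    (haff : HasAffineProperSubschemes Y) : IsAffine Y := by
  have : CompactSpace Y := f.surjective.compactSpace f.continuous
  have : QuasiSeparatedSpace Y := quasiSeparatedSpace_of_surjective f
  by_contra hY
  have : Nonempty Y := not_isEmpty_iff.mp fun _ => hY isAffine_of_isEmpty
  have : NoZeroDivisors Y.IdealSheafData :=
    ⟨fun {I J} hIJ => by
      by_contra! h
      exact hY (isAffine_of_mul_eq_bot haff h.1 h.2 hIJ)⟩
  have : IsIntegral Y := isIntegral_of_noZeroDivisors_idealSheafData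
  exact hY (isAffine_of_isIntegral_target f haff)

end Reduction

end ChevalleyAffineness

open ChevalleyAffineness CategoryTheory Limits in
theorem isAffine_of_isFinite_surjective_general {X Y : Scheme} (f : X ⟶ Y) [IsFinite f]
    [Surjective f] [IsAffine X] : IsAffine Y := by
  have : CompactSpace Y := f.surjective.compactSpace f.continuous
  have : QuasiSeparatedSpace Y := quasiSeparatedSpace_of_surjective f
  by_contra hY
  obtain ⟨I, hI, haff⟩ := exists_not_isAffine_subscheme_and_hasAffineProperSubschemes hY
  have : IsAffine (pullback f I.subschemeι) :=
    isAffine_of_isAffineHom (pullback.fst f I.subschemeι)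
  exact hI (isAffine_of_hasAffineProperSubschemes (pullback.snd f I.subschemeι) haff)

/-- Chevalley's affineness theorem: Let `f : X ⟶ Y` be a finite surjective
morphism of schemes with `Y` quasi-separated.  If `X` is affine then `Y` is affine. -/
theorem isAffine_of_isFinite_surjective
    {X Y : AlgebraicGeometry.Scheme} (f : X ⟶ Y) [IsFinite f]
    (hsurj : Function.Surjective f.base) [QuasiSeparatedSpace Y]
    [IsAffine X] : IsAffine Y :=
  have : Surjective f := ⟨hsurj⟩
  isAffine_of_isFinite_surjective_general f
end

section
/- Let X be a scheme whose reduction X_red is an affine scheme. Then X is an affine scheme. -/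
/-!
Identify the open subsets of `X` with those of `Z` along the closed immersion `f : Z ⟶ X`. The
global sections `g` of `Z` for which `D(g)` is affine in `X` form an ideal, which is the unit ideal
because the affine opens of `X` cover `Z`; hence `X`, corresponding to `D(1)`, is affine. Closure
under addition is the heart of the matter. Over `W = D(g + h)` the sections `g` and `h` become, up
to a unit, `c` and `1 - c`, and `W` is affine as soon as `c` lifts to `X`. Lifts of `c` exist on the
affine opens `U = W ∩ D(g)` and `V = W ∩ D(h)`, and they can be corrected so as to glue because
every section of the kernel of `f` over `U ∩ V` is a sum of sections of it over `U` and over `V`.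
-/

open AlgebraicGeometry

section Algebra

lemma isIntegral_of_isNilpotent (R : Type*) {A : Type*} [CommRing R] [CommRing A] [Algebra R A]
    {x : A} (hx : IsNilpotent x) : IsIntegral R x := by
  obtain ⟨n, hn⟩ := hx
  refine .of_pow n.succ_pos ?_
  rw [pow_succ, hn, zero_mul]
  exact isIntegral_zero

lemma exists_mem_mul_pow_add_mul_pow_eq_one {A : Type*} [CommRing A] {T : Subring A} {a b : A}
    (ha : a ∈ T) (hb : b ∈ T) (hab : IsNilpotent (a + b - 1)) (m n : ℕ) :
    ∃ p ∈ T, ∃ q ∈ T, p * a ^ m + q * b ^ n = 1 := by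
  lift a to T using ha
  lift b to T using hb
  have hunit : IsUnit (a + b) := by
    have hnil : IsNilpotent (a + b - 1) := (IsNilpotent.map_iff T.subtype_injective).1 hab
    simpa using hnil.isUnit_add_one
  obtain ⟨u, hu⟩ := hunit.exists_left_inv
  have hcoprime : IsCoprime a b := ⟨u, u, by rw [← mul_add, hu]⟩
  obtain ⟨p, q, hpq⟩ : IsCoprime (a ^ m) (b ^ n) := hcoprime.pow
  exact ⟨p, p.2, q, q.2, congr((T.subtype $hpq))⟩

variable {R S C : Type*} [CommRing R] [CommRing S] [CommRing C] [Algebra R C] [Algebra S C]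

lemma exists_pow_smul_mem_map_of_fg (b : R) [IsLocalization.Away b C] {I : Ideal R}
    {M : Submodule R C} (hM : M.FG) (hMI : ∀ y ∈ M, y ∈ I.map (algebraMap R C)) :
    ∃ n : ℕ, ∀ y ∈ M, b ^ n • y ∈ Submodule.map (Algebra.linearMap R C) I := by
  induction M, hM using Submodule.fg_induction with
  | singleton x =>
    obtain ⟨⟨a, _, n, rfl⟩, ha⟩ := (IsLocalization.mem_map_algebraMap_iff (.powers b) C).1
      (hMI x (Submodule.mem_span_singleton_self x))
    refine ⟨n, fun y hy ↦ ?_⟩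
    obtain ⟨r, rfl⟩ := Submodule.mem_span_singleton.1 hy
    rw [smul_comm, Algebra.smul_def (b ^ n), mul_comm, ha]
    exact Submodule.smul_mem _ r ⟨a, a.2, rfl⟩
  | sup M N _ _ ihM ihN =>
    obtain ⟨m, hm⟩ := ihM fun y hy ↦ hMI y (Submodule.mem_sup_left hy)
    obtain ⟨n, hn⟩ := ihN fun y hy ↦ hMI y (Submodule.mem_sup_right hy)
    refine ⟨n + m, fun _ hyz ↦ ?_⟩
    obtain ⟨y, hy, z, hz, rfl⟩ := Submodule.mem_sup.1 hyz
    rw [smul_add]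
    refine add_mem ?_ ?_
    · rw [pow_add, mul_smul]
      exact Submodule.smul_mem _ _ (hm y hy)
    · rw [add_comm, pow_add, mul_smul]
      exact Submodule.smul_mem _ _ (hn z hz)

lemma exists_forall_algebraMap_eq_pow_mul_mul (b : R) [IsLocalization.Away b C] {I : Ideal R}
    {d y : C} (hd : IsIntegral R d) (hy : y ∈ I.map (algebraMap R C)) :
    ∃ n : ℕ, ∀ a ∈ Algebra.adjoin R {d},
      ∃ x ∈ I, algebraMap R C x = algebraMap R C b ^ n * a * y := by
  have hfg := hd.fg_adjoin_singleton.map (LinearMap.mulRight R y)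
  obtain ⟨n, hn⟩ := exists_pow_smul_mem_map_of_fg b (I := I) hfg <| by
    rintro _ ⟨a, -, rfl⟩
    exact Ideal.mul_mem_left _ a hy
  refine ⟨n, fun a ha ↦ ?_⟩
  simpa [Algebra.smul_def, mul_assoc] using hn _ ⟨a, ha, rfl⟩

/-- The nilpotent `d = b + b' - 1` is integral over both `R` and `S`, so one power of `b` clears the
denominators of all of `R[d] y`, and one power of `b'` those of `S[d] y`. As `R[d] ∩ S[d]` contains
`b`, `b'` and `d`, these two powers are coprime in it. -/
lemma exists_algebraMap_add_algebraMap_eq (b : R) (b' : S) [IsLocalization.Away b C]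
    [IsLocalization.Away b' C]
    (hb : IsNilpotent (algebraMap R C b + algebraMap S C b' - 1)) {I : Ideal R} {J : Ideal S}
    {y : C} (hI : y ∈ I.map (algebraMap R C)) (hJ : y ∈ J.map (algebraMap S C)) :
    ∃ x ∈ I, ∃ x' ∈ J, algebraMap R C x + algebraMap S C x' = y := by
  set d := algebraMap R C b + algebraMap S C b' - 1 with hd
  obtain ⟨m, hm⟩ := exists_forall_algebraMap_eq_pow_mul_mul b (isIntegral_of_isNilpotent R hb) hI
  obtain ⟨n, hn⟩ := exists_forall_algebraMap_eq_pow_mul_mul b' (isIntegral_of_isNilpotent S hb) hJ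
  let T : Subring C := (Algebra.adjoin R {d}).toSubring ⊓ (Algebra.adjoin S {d}).toSubring
  have hbT : algebraMap R C b ∈ T := by
    refine ⟨(Algebra.adjoin R {d}).algebraMap_mem b, ?_⟩
    rw [show algebraMap R C b = d + 1 - algebraMap S C b' by rw [hd]; ring]
    exact sub_mem (add_mem (Algebra.self_mem_adjoin_singleton S d) (one_mem _))
      ((Algebra.adjoin S {d}).algebraMap_mem b')
  have hbT' : algebraMap S C b' ∈ T := by
    refine ⟨?_, (Algebra.adjoin S {d}).algebraMap_mem b'⟩
    rw [show algebraMap S C b' = d + 1 - algebraMap R C b by rw [hd]; ring]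
    exact sub_mem (add_mem (Algebra.self_mem_adjoin_singleton R d) (one_mem _))
      ((Algebra.adjoin R {d}).algebraMap_mem b)
  obtain ⟨p, hp, q, hq, hpq⟩ := exists_mem_mul_pow_add_mul_pow_eq_one hbT hbT' hb m n
  obtain ⟨x, hx, hxp⟩ := hm p hp.1
  obtain ⟨x', hx', hxq⟩ := hn q hq.2
  refine ⟨x, hx, x', hx', ?_⟩
  linear_combination hxp + hxq + y * hpq

end Algebra

section Geometry

open CategoryTheory

universe u

variable {X Z : Scheme.{u}} (f : Z ⟶ X)

lemma app_map_homOfLE {U V : X.Opens} (h : U ≤ V) (x : Γ(X, V)) :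
    f.app U (X.presheaf.map (homOfLE h).op x) =
      Z.presheaf.map (homOfLE (f.preimage_mono h)).op (f.app V x) :=
  ConcreteCategory.congr_hom (f.naturality (homOfLE h).op) x

lemma map_homOfLE_map_homOfLE {U V W : X.Opens} (h : U ≤ V) (h' : V ≤ W) (x : Γ(X, W)) :
    X.presheaf.map (homOfLE h).op (X.presheaf.map (homOfLE h').op x) =
      X.presheaf.map (homOfLE (h.trans h')).op x := by
  rw [← CommRingCat.comp_apply, ← Functor.map_comp]
  rfl

lemma opens_preimage_injective [Surjective f] :
    Function.Injective fun U : X.Opens ↦ f ⁻¹ᵁ U := by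
  intro U V h
  ext x
  obtain ⟨z, rfl⟩ := f.surjective x
  exact SetLike.ext_iff.1 h z

lemma exists_opens_preimage_eq [IsPreimmersion f] (O : Z.Opens) : ∃ U : X.Opens, f ⁻¹ᵁ U = O := by
  obtain ⟨U, hU, h⟩ := f.isEmbedding.isInducing.isOpen_iff.1 O.2
  exact ⟨⟨U, hU⟩, TopologicalSpace.Opens.ext h⟩

lemma isNilpotent_of_isNilpotent_app [Surjective f] {U : X.Opens} (hU : IsCompact (U : Set X))
    {x : Γ(X, U)} (hx : IsNilpotent (f.app U x)) : IsNilpotent x := by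
  rw [Scheme.isNilpotent_iff_basicOpen_eq_bot_of_isCompact hU]
  apply opens_preimage_injective f
  exact (f.preimage_basicOpen x).trans (Z.basicOpen_eq_bot_of_isNilpotent _ _ hx)

lemma isAffineOpen_of_app_surjective [Surjective f] {U V W : X.Opens} (hU : IsAffineOpen U)
    (hV : IsAffineOpen V) (hW : Function.Surjective (f.app W)) {c : Γ(Z, f ⁻¹ᵁ W)}
    (hUc : f ⁻¹ᵁ U = Z.basicOpen c) (hVc : f ⁻¹ᵁ V = Z.basicOpen (1 - c)) : IsAffineOpen W := by
  obtain ⟨s, rfl⟩ := hW c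
  have hUs : U = X.basicOpen s :=
    opens_preimage_injective f (hUc.trans (f.preimage_basicOpen s).symm)
  have hVs : V = X.basicOpen (1 - s) := by
    apply opens_preimage_injective f
    simp only [hVc, f.preimage_basicOpen, map_sub, map_one]
  apply isAffineOpen_of_isAffineOpen_basicOpen W {s, 1 - s}
  · exact (Ideal.eq_top_iff_one _).2 (Ideal.mem_span_pair.2 ⟨1, 1, by ring⟩)
  · rintro _ (rfl | rfl)
    exacts [hUs ▸ hU, hVs ▸ hV]

lemma exists_basicOpen_eq_inf_basicOpen_add {O : X.Opens} (g h : Γ(X, O)) :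
    ∃ c : Γ(X, X.basicOpen (g + h)),
      X.basicOpen c = X.basicOpen (g + h) ⊓ X.basicOpen g ∧
        X.basicOpen (1 - c) = X.basicOpen (g + h) ⊓ X.basicOpen h := by
  let res := (X.presheaf.map (homOfLE (X.basicOpen_le (g + h))).op).hom
  have hunit : IsUnit (res (g + h)) := X.toRingedSpace.isUnit_res_basicOpen (g + h)
  obtain ⟨r, hr⟩ := hunit.exists_right_inv
  rw [map_add] at hr
  have hr_unit : IsUnit r := .of_mul_eq_one_right _ hr
  have basicOpen_res_mul (a : Γ(X, O)) :
      X.basicOpen (res a * r) = X.basicOpen (g + h) ⊓ X.basicOpen a := by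
    rw [Scheme.basicOpen_mul, X.basicOpen_of_isUnit hr_unit, X.basicOpen_res]
    exact inf_eq_left.2 inf_le_left
  refine ⟨res g * r, basicOpen_res_mul g, ?_⟩
  rw [← basicOpen_res_mul h]
  congr 1
  linear_combination -hr

section IsClosedImmersion

variable [IsClosedImmersion f]

lemma mem_map_ker_app_of_app_eq_zero {U V : X.Opens} (hU : IsAffineOpen U)
    (hV : IsAffineOpen V) (h : V ≤ U)
    {x : Γ(X, V)} (hx : f.app V x = 0) :
    x ∈ (RingHom.ker (f.app U).hom).map (X.presheaf.map (homOfLE h).op).hom := by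
  have := f.ker.map_ideal (U := ⟨V, hV⟩) (V := ⟨U, hU⟩) h
  rw [f.ker_apply, f.ker_apply] at this
  exact this.ge hx

lemma exists_map_add_map_eq_of_app_eq_zero {U V : X.Opens} (hU : IsAffineOpen U)
    (hV : IsAffineOpen V)
    {b : Γ(X, U)} {b' : Γ(X, V)} (hb : U ⊓ V = X.basicOpen b) (hb' : U ⊓ V = X.basicOpen b')
    (hbb' : IsNilpotent (X.presheaf.map (homOfLE (inf_le_left : U ⊓ V ≤ U)).op b +
      X.presheaf.map (homOfLE (inf_le_right : U ⊓ V ≤ V)).op b' - 1))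
    {y : Γ(X, U ⊓ V)} (hy : f.app (U ⊓ V) y = 0) :
    ∃ (e : Γ(X, U)) (e' : Γ(X, V)), f.app U e = 0 ∧ f.app V e' = 0 ∧
      X.presheaf.map (homOfLE inf_le_left).op e + X.presheaf.map (homOfLE inf_le_right).op e' =
        y := by
  let _ : Algebra Γ(X, U) Γ(X, U ⊓ V) :=
    (X.presheaf.map (homOfLE (inf_le_left : U ⊓ V ≤ U)).op).hom.toAlgebra
  let _ : Algebra Γ(X, V) Γ(X, U ⊓ V) :=
    (X.presheaf.map (homOfLE (inf_le_right : U ⊓ V ≤ V)).op).hom.toAlgebra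
  have : IsLocalization.Away b Γ(X, U ⊓ V) := hU.isLocalization_of_eq_basicOpen b _ hb
  have : IsLocalization.Away b' Γ(X, U ⊓ V) := hV.isLocalization_of_eq_basicOpen b' _ hb'
  have hUV : IsAffineOpen (U ⊓ V) := hb ▸ hU.basicOpen b
  obtain ⟨e, he, e', he', h⟩ := exists_algebraMap_add_algebraMap_eq b b' hbb'
    (mem_map_ker_app_of_app_eq_zero f hU hUV inf_le_left hy)
    (mem_map_ker_app_of_app_eq_zero f hV hUV inf_le_right hy)
  exact ⟨e, e', he, he', h⟩

lemma app_sup_surjective_of_isAffineOpen {U V : X.Opens} (hU : IsAffineOpen U) (hV : IsAffineOpen V)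
    {b : Γ(X, U)} {b' : Γ(X, V)} (hb : U ⊓ V = X.basicOpen b) (hb' : U ⊓ V = X.basicOpen b')
    (hbb' : IsNilpotent (X.presheaf.map (homOfLE (inf_le_left : U ⊓ V ≤ U)).op b +
      X.presheaf.map (homOfLE (inf_le_right : U ⊓ V ≤ V)).op b' - 1)) :
    Function.Surjective (f.app (U ⊔ V)) := by
  intro t
  obtain ⟨x, hx⟩ := f.app_surjective U hU
    (Z.presheaf.map (homOfLE (f.preimage_mono le_sup_left)).op t)
  obtain ⟨x', hx'⟩ := f.app_surjective V hV
    (Z.presheaf.map (homOfLE (f.preimage_mono le_sup_right)).op t)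
  obtain ⟨e, e', he, he', hee'⟩ := exists_map_add_map_eq_of_app_eq_zero f hU hV hb hb' hbb'
    (y := X.presheaf.map (homOfLE inf_le_left).op x - X.presheaf.map (homOfLE inf_le_right).op x')
    (by rw [map_sub, app_map_homOfLE, app_map_homOfLE, hx, hx', map_homOfLE_map_homOfLE,
      map_homOfLE_map_homOfLE, sub_self])
  have hglue : X.presheaf.map (homOfLE (inf_le_left : U ⊓ V ≤ U)).op (x - e) =
      X.presheaf.map (homOfLE (inf_le_right : U ⊓ V ≤ V)).op (x' + e') := by
    rw [map_sub, map_add]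
    linear_combination -hee'
  let s : Γ(X, U ⊔ V) := (X.sheaf.objSupIsoProdEqLocus U V).inv ⟨(x - e, x' + e'), hglue⟩
  have hsU : X.presheaf.map (homOfLE le_sup_left).op s = x - e :=
    X.sheaf.objSupIsoProdEqLocus_inv_fst U V _
  have hsV : X.presheaf.map (homOfLE le_sup_right).op s = x' + e' :=
    X.sheaf.objSupIsoProdEqLocus_inv_snd U V _
  refine ⟨s, Z.sheaf.eq_of_locally_eq₂ (homOfLE (f.preimage_mono le_sup_left))
    (homOfLE (f.preimage_mono le_sup_right)) (f.preimage_sup).le _ _ ?_ ?_⟩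
  · refine (app_map_homOfLE f le_sup_left s).symm.trans ?_
    rw [hsU, map_sub, he, sub_zero, hx]
    rfl
  · refine (app_map_homOfLE f le_sup_right s).symm.trans ?_
    rw [hsV, map_add, he', add_zero, hx']
    rfl

variable [Surjective f]

lemma isAffineOpen_of_preimage_eq_basicOpen {U W : X.Opens} (hU : IsAffineOpen U)
    (g : Γ(Z, f ⁻¹ᵁ U)) (hW : f ⁻¹ᵁ W = Z.basicOpen g) : IsAffineOpen W := by
  obtain ⟨b, rfl⟩ := f.app_surjective U hU g
  have : W = X.basicOpen b :=
    opens_preimage_injective f (hW.trans (f.preimage_basicOpen b).symm)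
  exact this ▸ hU.basicOpen b

lemma isAffineOpen_of_preimage_eq_basicOpen_one_sub {W U V : X.Opens} (hU : IsAffineOpen U)
    (hV : IsAffineOpen V) (c : Γ(Z, f ⁻¹ᵁ W)) (hUc : f ⁻¹ᵁ U = Z.basicOpen c)
    (hVc : f ⁻¹ᵁ V = Z.basicOpen (1 - c)) : IsAffineOpen W := by
  obtain rfl : W = U ⊔ V := by
    apply opens_preimage_injective f
    apply le_antisymm
    · calc f ⁻¹ᵁ W = Z.basicOpen (c + (1 - c)) := by rw [add_sub_cancel, Scheme.basicOpen_one]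
        _ ≤ Z.basicOpen c ⊔ Z.basicOpen (1 - c) := Z.basicOpen_add_le _ _
        _ = f ⁻¹ᵁ (U ⊔ V) := by rw [← hUc, ← hVc, f.preimage_sup]
    · exact sup_le (hUc.trans_le (Z.basicOpen_le c)) (hVc.trans_le (Z.basicOpen_le (1 - c)))
  obtain ⟨b, hb⟩ := f.app_surjective U hU
    (Z.presheaf.map (homOfLE (f.preimage_mono le_sup_left)).op (1 - c))
  obtain ⟨b', hb'⟩ := f.app_surjective V hV
    (Z.presheaf.map (homOfLE (f.preimage_mono le_sup_right)).op c)
  have hUb : U ⊓ V = X.basicOpen b := by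
    apply opens_preimage_injective f
    simp only [f.preimage_basicOpen, hb, Scheme.basicOpen_res, f.preimage_inf, hVc]
  have hVb' : U ⊓ V = X.basicOpen b' := by
    apply opens_preimage_injective f
    simp only [f.preimage_basicOpen, hb', Scheme.basicOpen_res, f.preimage_inf, hUc, inf_comm]
  have hbb' : IsNilpotent (X.presheaf.map (homOfLE (inf_le_left : U ⊓ V ≤ U)).op b +
      X.presheaf.map (homOfLE (inf_le_right : U ⊓ V ≤ V)).op b' - 1) := by
    apply isNilpotent_of_isNilpotent_app f (hUb ▸ hU.basicOpen b).isCompact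
    rw [map_sub, map_add, app_map_homOfLE, app_map_homOfLE, hb, hb', map_homOfLE_map_homOfLE,
      map_homOfLE_map_homOfLE, ← map_add, sub_add_cancel, map_one, map_one, sub_self]
    exact .zero
  exact isAffineOpen_of_app_surjective f hU hV
    (app_sup_surjective_of_isAffineOpen f hU hV hUb hVb' hbb') hUc hVc

lemma isAffineOpen_of_preimage_eq_inf_basicOpen {U W : X.Opens} (hU : IsAffineOpen U)
    {O : Z.Opens} (hO : f ⁻¹ᵁ U ≤ O) (g : Γ(Z, O)) (hW : f ⁻¹ᵁ W = f ⁻¹ᵁ U ⊓ Z.basicOpen g) :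
    IsAffineOpen W :=
  isAffineOpen_of_preimage_eq_basicOpen f hU (Z.presheaf.map (homOfLE hO).op g)
    (hW.trans (Z.basicOpen_res g _).symm)

lemma isAffineOpen_of_preimage_eq_basicOpen_add {O : Z.Opens} {g h : Γ(Z, O)} {U V W : X.Opens}
    (hU : IsAffineOpen U) (hV : IsAffineOpen V) (hUg : f ⁻¹ᵁ U = Z.basicOpen g)
    (hVh : f ⁻¹ᵁ V = Z.basicOpen h) (hW : f ⁻¹ᵁ W = Z.basicOpen (g + h)) : IsAffineOpen W := by
  have hc := exists_basicOpen_eq_inf_basicOpen_add g h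
  rw [← hW, ← hUg, ← hVh] at hc
  obtain ⟨c, hcU, hcV⟩ := hc
  refine isAffineOpen_of_preimage_eq_basicOpen_one_sub f (U := W ⊓ U) (V := W ⊓ V) ?_ ?_ c
    hcU.symm hcV.symm
  · exact isAffineOpen_of_preimage_eq_inf_basicOpen f hU (hUg.trans_le (Z.basicOpen_le g)) (g + h)
      (by rw [f.preimage_inf, hW, inf_comm])
  · exact isAffineOpen_of_preimage_eq_inf_basicOpen f hV (hVh.trans_le (Z.basicOpen_le h)) (g + h)
      (by rw [f.preimage_inf, hW, inf_comm])

/-- The ideal of global sections `g` of `Z` for which the open subset of `X` corresponding to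
`D(g)` is affine. That open subset is unique, so it is encoded existentially. -/
def affineBasicOpenIdeal : Ideal Γ(Z, ⊤) where
  carrier := {g | ∃ U : X.Opens, IsAffineOpen U ∧ f ⁻¹ᵁ U = Z.basicOpen g}
  zero_mem' := ⟨⊥, isAffineOpen_bot X, (Z.basicOpen_zero ⊤).symm⟩
  add_mem' := by
    rintro g h ⟨U, hU, hUg⟩ ⟨V, hV, hVh⟩
    obtain ⟨W, hW⟩ := exists_opens_preimage_eq f (Z.basicOpen (g + h))
    exact ⟨W, isAffineOpen_of_preimage_eq_basicOpen_add f hU hV hUg hVh hW, hW⟩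
  smul_mem' := by
    rintro a g ⟨U, hU, hUg⟩
    obtain ⟨W, hW⟩ := exists_opens_preimage_eq f (Z.basicOpen (a * g))
    refine ⟨W, isAffineOpen_of_preimage_eq_inf_basicOpen f hU le_top a ?_, hW⟩
    rw [hW, hUg, Z.basicOpen_mul, inf_comm]

lemma affineBasicOpenIdeal_eq_top [IsAffine Z] : affineBasicOpenIdeal f = ⊤ := by
  rw [← Ideal.span_eq (affineBasicOpenIdeal f), ← (isAffineOpen_top Z).iSup_basicOpen_eq_self_iff,
    eq_top_iff]
  intro z _
  obtain ⟨U, hU, hzU, -⟩ := exists_isAffineOpen_mem_and_subset (x := f z) (U := ⊤) trivial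
  obtain ⟨g, hg, hzg⟩ :=
    (isAffineOpen_top Z).exists_basicOpen_le (V := f ⁻¹ᵁ U) ⟨z, hzU⟩ trivial
  obtain ⟨W, hW⟩ := exists_opens_preimage_eq f (Z.basicOpen g)
  have hW_affine : IsAffineOpen W := isAffineOpen_of_preimage_eq_inf_basicOpen f hU le_top g
    (by rw [hW, inf_eq_right.2 hg])
  exact TopologicalSpace.Opens.mem_iSup.2 ⟨⟨g, W, hW_affine, hW⟩, hzg⟩

end IsClosedImmersion

end Geometry

theorem isAffine_of_reduction_isAffine_general {X Z : Scheme} (f : Z ⟶ X) [IsClosedImmersion f]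
    [Surjective f] [IsAffine Z] : IsAffine X := by
  have hone : (1 : Γ(Z, ⊤)) ∈ affineBasicOpenIdeal f :=
    affineBasicOpenIdeal_eq_top f ▸ Submodule.mem_top
  obtain ⟨U, hU, hU_one⟩ := hone
  obtain rfl : U = ⊤ := opens_preimage_injective f (hU_one.trans Z.basicOpen_one)
  have : IsAffine (⊤ : X.Opens) := hU
  exact .of_isIso X.topIso.inv

/-- Let `X` be a scheme whose reduction `X_red` is affine; then `X` is affine.
The reduction `X_red` is characterized as a reduced scheme together with a surjective
(hence bijective) closed immersion into `X`. -/
theorem isAffine_of_reduction_isAffine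
    {X Z : AlgebraicGeometry.Scheme} (f : Z ⟶ X) [IsClosedImmersion f]
    [IsReduced Z] (hsurj : Function.Surjective f.base)
    (hZ : IsAffine Z) : IsAffine X :=
  have : Surjective f := ⟨hsurj⟩
  isAffine_of_reduction_isAffine_general f
end

section
/- A morphism of schemes that is proper and quasi-finite is finite. -/
open AlgebraicGeometry

/-- A proper quasi-finite morphism of schemes is finite.  Here quasi-finite
means of finite type (which is part of properness) with finite fibers. -/
theorem isFinite_of_isProper_of_quasiFinite
    {X Y : AlgebraicGeometry.Scheme} (f : X ⟶ Y) [IsProper f]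
    (hfib : ∀ y : Y, (f.base ⁻¹' {y}).Finite) : IsFinite f := by
  have : LocallyQuasiFinite f := .of_finite_preimage_singleton f hfib
  -- Zariski's main theorem: `X` is open in the relative normalization of `Y` in `X`, which is
  -- integral over `Y`; as `f` is proper, `X` is also closed and dense there, hence all of it.
  exact .of_isProper_of_locallyQuasiFinite f
end

section
/- (Zariski's Main Theorem, factorization form) Let f : X → Y be a quasi-finite and separated morphism of schemes. Then f factors as X → X' → Y where X → X' is an open immersion and X' → Y is an integral morphism. If moreover Y is quasi-compact and quasi-separated, the factorization can be chosen with X' → Y finite. -/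
open AlgebraicGeometry CategoryTheory

/-!
Mathlib's form of Zariski's Main Theorem says that `X` is open (and dense) in its relative
normalization, which is integral over `Y`. Over an affine open `V` of `Y`, finitely many basic opens
of the normalization cover the preimage of `V` in `X`, and their coordinate rings are of finite type
over `V`; so the normalization can be replaced there by a finitely generated subalgebra, which is
finite over `V` and still contains the preimage as a dense open. Gluing `X` with it gives a
quasi-finite separated `Y`-scheme `T ⊇ X` that is finite over `V`. As `X` is dense in `T`, wherever
`X` was already universally closed over `Y` it coincides with `T`, so nothing is lost over the rest
of `Y`. After finitely many affine opens the scheme is universally closed over `Y`, hence proper,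
and proper quasi-finite morphisms are finite.
-/

namespace ZariskiMainTheorem

universe u

open Limits

section Separated

variable {T X Y : Scheme.{u}}

lemma isClosedImmersion_mapDesc_self (i : X ⟶ T) (t : T ⟶ Y) [Mono i] [IsSeparated (i ≫ t)] :
    IsClosedImmersion (pullback.mapDesc i i t) := by
  have : pullback.diagonal i ≫ pullback.mapDesc i i t = pullback.diagonal (i ≫ t) := by
    apply pullback.hom_ext <;> simp only [Category.assoc, pullback.lift_fst, pullback.lift_snd,
      pullback.diagonal_fst, pullback.diagonal_snd, Category.comp_id]
  rw [← MorphismProperty.cancel_left_of_respectsIso @IsClosedImmersion (pullback.diagonal i), this]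
  infer_instance

lemma isSeparated_of_forall_exists_mem_mem {ι : Type*} (t : T ⟶ Y) (U : ι → T.Opens)
    (hU : ∀ x y, t x = t y → ∃ i, x ∈ U i ∧ y ∈ U i) [∀ i, IsSeparated ((U i).ι ≫ t)] :
    IsSeparated t := by
  -- The `U i ×[Y] U i` cover `T ×[Y] T`, and over them the diagonal of `t` is that of `U i ⟶ Y`.
  constructor
  let W (i : ι) : pullback ((U i).ι ≫ t) ((U i).ι ≫ t) ⟶ pullback t t :=
    pullback.map _ _ _ _ (U i).ι (U i).ι (𝟙 Y) (by simp) (by simp)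
  refine IsZariskiLocalAtTarget.of_iSup_eq_top (fun i ↦ (W i).opensRange)
    (top_le_iff.mp fun z _ ↦ ?_) fun i ↦ ?_
  · obtain ⟨i, hi⟩ := hU (pullback.fst t t z) (pullback.snd t t z)
      (by simp only [← Scheme.Hom.comp_apply, pullback.condition])
    refine TopologicalSpace.Opens.mem_iSup.mpr ⟨i, ?_⟩
    change z ∈ Set.range _
    rw [Scheme.Pullback.range_map]
    simpa using hi
  · have H := pullback_map_diagonal_isPullback (U i).ι (U i).ι t
    rw [MorphismProperty.arrow_mk_iso_iff @IsClosedImmersion (morphismRestrictOpensRange _ _),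
      ← MorphismProperty.cancel_left_of_respectsIso @IsClosedImmersion H.isoPullback.hom,
      H.isoPullback_hom_snd]
    exact isClosedImmersion_mapDesc_self (U i).ι t

end Separated

section QuasiFiniteSeparated

variable {T X Y : Scheme.{u}}

instance : IsZariskiLocalAtSource @LocallyOfFiniteType.{u} :=
  HasRingHomProperty.instIsZariskiLocalAtSource

instance : IsZariskiLocalAtSource @LocallyQuasiFinite.{u} :=
  HasRingHomProperty.instIsZariskiLocalAtSource

lemma property_of_sup_eq_top {P : MorphismProperty Scheme.{u}} [IsZariskiLocalAtSource P]
    (t : T ⟶ Y) {U V : T.Opens} (hUV : U ⊔ V = ⊤) (hU : P (U.ι ≫ t)) (hV : P (V.ι ≫ t)) : P t :=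
  IsZariskiLocalAtSource.of_iSup_eq_top (cond · U V) (by rw [← sup_eq_iSup, hUV])
    fun b ↦ by cases b <;> assumption

/-- Quasi-finite separated morphisms, where quasi-finite means of finite type with finite fibers.
The fibers enter through `LocallyQuasiFinite`, which is what can be checked on open covers. -/
class IsQuasiFiniteSeparated (f : X ⟶ Y) : Prop
  extends LocallyOfFiniteType f, QuasiCompact f, IsSeparated f, LocallyQuasiFinite f

instance (f : X ⟶ Y) [IsFinite f] : IsQuasiFiniteSeparated f where

instance (f : X ⟶ Y) [IsQuasiFiniteSeparated f] (V : Y.Opens) :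
    IsQuasiFiniteSeparated (f ∣_ V) where

instance (i : T ⟶ X) (f : X ⟶ Y) [IsIso i] [IsQuasiFiniteSeparated f] :
    IsQuasiFiniteSeparated (i ≫ f) where

lemma isFinite_of_universallyClosed (f : X ⟶ Y) [IsQuasiFiniteSeparated f] [UniversallyClosed f] :
    IsFinite f :=
  have : IsProper f := {}
  IsFinite.of_isProper_of_locallyQuasiFinite f

variable (t : T ⟶ Y) {U : T.Opens} {V : Y.Opens}

lemma isSeparated_of_sup_preimage_eq_top (hUV : U ⊔ t ⁻¹ᵁ V = ⊤) [IsSeparated (U.ι ≫ t)]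
    [IsSeparated (t ∣_ V)] : IsSeparated t := by
  have : IsSeparated ((t ⁻¹ᵁ V).ι ≫ t) := morphismRestrict_ι t V ▸ inferInstance
  have (b : Bool) : IsSeparated ((cond b U (t ⁻¹ᵁ V)).ι ≫ t) := by cases b <;> assumption
  refine isSeparated_of_forall_exists_mem_mem t (cond · U (t ⁻¹ᵁ V)) fun x y hxy ↦ ?_
  by_cases hx : t x ∈ V
  · exact ⟨false, hx, by simpa [← hxy]⟩
  · have mem_left (z : T) (hz : t z ∉ V) : z ∈ U := (hUV.ge (Set.mem_univ z)).resolve_right hz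
    exact ⟨true, mem_left x hx, mem_left y (hxy ▸ hx)⟩

lemma quasiCompact_of_sup_preimage_eq_top (hUV : U ⊔ t ⁻¹ᵁ V = ⊤) [QuasiCompact V.ι]
    [QuasiCompact (U.ι ≫ t)] [QuasiCompact (t ∣_ V)] : QuasiCompact t := by
  have : QuasiCompact ((t ⁻¹ᵁ V).ι ≫ t) := morphismRestrict_ι t V ▸ inferInstance
  refine ⟨fun W hWo hW ↦ ?_⟩
  have isCompact_inter (O : T.Opens) [QuasiCompact (O.ι ≫ t)] :
      IsCompact ((O : Set T) ∩ t ⁻¹' W) := by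
    have := (QuasiCompact.isCompact_preimage (f := O.ι ≫ t) W hWo hW).image O.ι.continuous
    rwa [Scheme.Hom.comp_base, TopCat.coe_comp, Set.preimage_comp,
      Set.image_preimage_eq_range_inter, Scheme.Opens.range_ι] at this
  have h : (U : Set T) ∪ t ⁻¹' V = Set.univ := congr(($hUV : Set T))
  rw [← Set.univ_inter (t ⁻¹' W), ← h, Set.union_inter_distrib_right]
  exact (isCompact_inter U).union (isCompact_inter (t ⁻¹ᵁ V))

lemma isQuasiFiniteSeparated_of_sup_preimage_eq_top (hUV : U ⊔ t ⁻¹ᵁ V = ⊤) [QuasiCompact V.ι]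
    [IsQuasiFiniteSeparated (U.ι ≫ t)] [IsQuasiFiniteSeparated (t ∣_ V)] :
    IsQuasiFiniteSeparated t where
  toLocallyOfFiniteType :=
    property_of_sup_eq_top t hUV inferInstance (morphismRestrict_ι t V ▸ inferInstance)
  toQuasiCompact := quasiCompact_of_sup_preimage_eq_top t hUV
  toIsSeparated := isSeparated_of_sup_preimage_eq_top t hUV
  toLocallyQuasiFinite :=
    property_of_sup_eq_top t hUV inferInstance (morphismRestrict_ι t V ▸ inferInstance)

end QuasiFiniteSeparated

section UniversallyClosed

variable {T X Y : Scheme.{u}}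

lemma universallyClosed_of_isDominant_comp (i : X ⟶ T) (t : T ⟶ Y) [IsDominant i] [IsSeparated t]
    [UniversallyClosed (i ≫ t)] : UniversallyClosed t := by
  have : UniversallyClosed i := .of_comp_of_isSeparated i t
  exact .of_comp_surjective i t

/-- The largest open subset of the target over which a morphism is universally closed. -/
def universallyClosedLocus (f : X ⟶ Y) : Y.Opens :=
  sSup {V | UniversallyClosed (f ∣_ V)}

lemma le_universallyClosedLocus (f : X ⟶ Y) (V : Y.Opens) [hV : UniversallyClosed (f ∣_ V)] :
    V ≤ universallyClosedLocus f :=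
  le_sSup hV

lemma universallyClosed_of_universallyClosedLocus_eq_top {f : X ⟶ Y}
    (hf : universallyClosedLocus f = ⊤) : UniversallyClosed f :=
  IsZariskiLocalAtTarget.of_iSup_eq_top (P := @UniversallyClosed) _
    ((sSup_eq_iSup' _).symm.trans hf) Subtype.prop

lemma universallyClosedLocus_comp_le (i : X ⟶ T) (t : T ⟶ Y) [IsDominant i] [IsSeparated t] :
    universallyClosedLocus (i ≫ t) ≤ universallyClosedLocus t := by
  refine sSup_le fun V (hV : UniversallyClosed ((i ≫ t) ∣_ V)) ↦ ?_
  have : UniversallyClosed (i ∣_ t ⁻¹ᵁ V ≫ t ∣_ V) := morphismRestrict_comp i t V ▸ hV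
  have : IsDominant (i ∣_ t ⁻¹ᵁ V) := IsZariskiLocalAtTarget.restrict ‹_› _
  have : UniversallyClosed (t ∣_ V) := universallyClosed_of_isDominant_comp (i ∣_ t ⁻¹ᵁ V) _
  exact le_universallyClosedLocus t V

end UniversallyClosed

section Pushout

variable {P X Z : Scheme.{u}} (a : P ⟶ X) (b : P ⟶ Z) [IsOpenImmersion a] [IsOpenImmersion b]

instance : IsOpenImmersion (pushout.inl a b) :=
  (Scheme.IsLocallyDirected.openCover (span a b)).map_prop WalkingSpan.left

instance : IsOpenImmersion (pushout.inr a b) :=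
  (Scheme.IsLocallyDirected.openCover (span a b)).map_prop WalkingSpan.right

lemma opensRange_pushout_inl_sup_inr :
    (pushout.inl a b).opensRange ⊔ (pushout.inr a b).opensRange = ⊤ := by
  refine top_le_iff.mp fun x _ ↦ ?_
  obtain ⟨_ | _ | _, y, rfl⟩ := Scheme.IsLocallyDirected.ι_jointly_surjective (span a b) x
  · exact .inl ⟨a y, congr($(colimit.w (span a b) WalkingSpan.Hom.fst) y)⟩
  · exact .inl ⟨y, rfl⟩
  · exact .inr ⟨y, rfl⟩

instance [IsDominant b] : IsDominant (pushout.inl a b) := by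
  refine ⟨fun x ↦ ?_⟩
  obtain ⟨y, rfl⟩ | ⟨z, rfl⟩ := (opensRange_pushout_inl_sup_inr a b).ge (Set.mem_univ x)
  · exact subset_closure ⟨y, rfl⟩
  · refine map_mem_closure (pushout.inr a b).continuous (b.denseRange z) ?_
    rintro _ ⟨p, rfl⟩
    exact ⟨a p, congr($(pushout.condition (f := a) (g := b)) p)⟩

end Pushout

section GlueOver

variable {X Y Z : Scheme.{u}} (f : X ⟶ Y) (V : Y.Opens)
  (g : (f ⁻¹ᵁ V).toScheme ⟶ Z) [IsOpenImmersion g] (h : Z ⟶ V.toScheme) (w : g ≫ h = f ∣_ V)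

/-- Replacing `f ⁻¹ᵁ V ⟶ V` by `h : Z ⟶ V` in a morphism `f : X ⟶ Y`: the morphism to `Y` from
the gluing of `X` and `Z` along `f ⁻¹ᵁ V`, for a `V`-morphism `g : f ⁻¹ᵁ V ⟶ Z`. -/
noncomputable def glueOver : pushout (f ⁻¹ᵁ V).ι g ⟶ Y :=
  pushout.desc f (h ≫ V.ι) (by rw [reassoc_of% w, morphismRestrict_ι])

lemma inl_glueOver : pushout.inl (f ⁻¹ᵁ V).ι g ≫ glueOver f V g h w = f :=
  pushout.inl_desc ..

lemma inr_glueOver : pushout.inr (f ⁻¹ᵁ V).ι g ≫ glueOver f V g h w = h ≫ V.ι :=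
  pushout.inr_desc ..

lemma preimage_glueOver :
    glueOver f V g h w ⁻¹ᵁ V = (pushout.inr (f ⁻¹ᵁ V).ι g).opensRange := by
  apply le_antisymm
  · intro x hx
    obtain ⟨y, rfl⟩ | hx := (opensRange_pushout_inl_sup_inr (f ⁻¹ᵁ V).ι g).ge (Set.mem_univ x)
    · have hy : f y ∈ V := by rwa [← inl_glueOver f V g h w]
      let p : (f ⁻¹ᵁ V).toScheme := ⟨y, hy⟩
      exact ⟨g p, congr($(pushout.condition (f := (f ⁻¹ᵁ V).ι) (g := g)) p).symm⟩
    · exact hx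
  · rintro _ ⟨z, rfl⟩
    change (pushout.inr (f ⁻¹ᵁ V).ι g ≫ glueOver f V g h w) z ∈ V
    rw [inr_glueOver]
    exact (h z).2

lemma isPullback_glueOver :
    IsPullback h (pushout.inr (f ⁻¹ᵁ V).ι g) V.ι (glueOver f V g h w) :=
  IsOpenImmersion.isPullback _ _ _ _ (inr_glueOver f V g h w)
    (by rw [Scheme.Opens.opensRange_ι, preimage_glueOver])

lemma exists_iso_hom_comp_eq_glueOver_restrict :
    ∃ e : (glueOver f V g h w ⁻¹ᵁ V).toScheme ≅ Z, e.hom ≫ h = glueOver f V g h w ∣_ V :=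
  have H := isPullback_morphismRestrict (glueOver f V g h w) V
  have H' := isPullback_glueOver f V g h w
  ⟨H.isoIsPullback _ _ H', H.isoIsPullback_hom_fst _ _ H'⟩

lemma isQuasiFiniteSeparated_glueOver [QuasiCompact V.ι] [IsQuasiFiniteSeparated f]
    [IsQuasiFiniteSeparated h] : IsQuasiFiniteSeparated (glueOver f V g h w) := by
  let i := pushout.inl (f ⁻¹ᵁ V).ι g
  have hUV : i.opensRange ⊔ glueOver f V g h w ⁻¹ᵁ V = ⊤ := by
    rw [preimage_glueOver, opensRange_pushout_inl_sup_inr]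
  have hi : i.opensRange.ι ≫ glueOver f V g h w = i.isoOpensRange.inv ≫ f := by
    rw [Iso.eq_inv_comp, Scheme.Hom.isoOpensRange_hom_ι_assoc, inl_glueOver]
  have : IsQuasiFiniteSeparated (i.opensRange.ι ≫ glueOver f V g h w) := hi ▸ inferInstance
  obtain ⟨e, he⟩ := exists_iso_hom_comp_eq_glueOver_restrict f V g h w
  have : IsQuasiFiniteSeparated (glueOver f V g h w ∣_ V) := he ▸ inferInstance
  exact isQuasiFiniteSeparated_of_sup_preimage_eq_top _ hUV

end GlueOver

section Localization

variable {R B : Type*} [CommRing R] [CommRing B] [Algebra R B]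

lemma exists_finset_forall_awayMap_bijective (b : B) [Algebra.FiniteType R (Localization.Away b)] :
    ∃ s : Finset B, ∀ C : Subalgebra R B, (s : Set B) ⊆ C →
      ∃ hb : b ∈ C, Function.Bijective (Localization.awayMap C.val.toRingHom ⟨b, hb⟩) := by
  classical
  obtain ⟨σ, hσ⟩ := Algebra.FiniteType.out (R := R) (A := Localization.Away b)
  choose x d hd using IsLocalization.exists_mk'_eq (Submonoid.powers b) (S := Localization.Away b)
  refine ⟨insert b (σ.image x), fun C hC ↦ ?_⟩
  simp only [Finset.coe_insert, Finset.coe_image, Set.insert_subset_iff, Set.image_subset_iff] at hC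
  refine ⟨hC.1, IsLocalization.map_injective_of_injective _ _ _ Subtype.val_injective, ?_⟩
  change Function.Surjective (Localization.awayMapₐ C.val ⟨b, hC.1⟩)
  rw [← AlgHom.range_eq_top, ← top_le_iff]
  refine hσ.ge.trans (Algebra.adjoin_le fun y hy ↦ ?_)
  obtain ⟨n, hn⟩ := (d y).2
  let bn : Submonoid.powers (⟨b, hC.1⟩ : C) := ⟨_, pow_mem (Submonoid.mem_powers _) n⟩
  have hpow : Submonoid.powers (⟨b, hC.1⟩ : C) ≤ (Submonoid.powers b).comap C.val.toRingHom :=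
    Submonoid.powers_le.mpr (Submonoid.mem_powers b)
  refine ⟨IsLocalization.mk' _ (⟨x y, hC.2 hy⟩ : C) bn, ?_⟩
  change IsLocalization.map (Localization.Away b) C.val.toRingHom hpow _ = y
  refine (IsLocalization.map_mk' hpow _ bn).trans (.trans ?_ (hd y))
  congr 1
  exact Subtype.ext hn

lemma exists_subalgebra_finite_forall_awayMap_bijective [Algebra.IsIntegral R B] (s : Set B)
    (hs : s.Finite) (hft : ∀ b ∈ s, Algebra.FiniteType R (Localization.Away b)) :
    ∃ C : Subalgebra R B, Module.Finite R C ∧ ∀ b ∈ s, ∃ hb : b ∈ C,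
      Function.Bijective (Localization.awayMap C.val.toRingHom ⟨b, hb⟩) := by
  choose! t ht using fun b hb ↦
    have := hft b hb
    exists_finset_forall_awayMap_bijective (R := R) b
  refine ⟨Algebra.adjoin R (⋃ b ∈ s, t b), ?_, fun b hb ↦ ht b hb _ ?_⟩
  · exact Module.Finite.iff_fg.mpr (fg_adjoin_of_finite (hs.biUnion fun b _ ↦ (t b).finite_toSet)
      fun x _ ↦ Algebra.IsIntegral.isIntegral x)
  · exact (Set.subset_biUnion_of_mem (u := fun b ↦ (t b : Set B)) hb).trans Algebra.subset_adjoin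

end Localization

section Affine

variable {R B : Type u} [CommRing R] [CommRing B] [Algebra R B] {X : Scheme.{u}}

lemma finiteType_localizationAway_of_basicOpen_subset_range (v : X ⟶ Spec (.of B))
    [IsOpenImmersion v] [LocallyOfFiniteType (v ≫ Spec.map (CommRingCat.ofHom (algebraMap R B)))]
    (b : B) (hb : (PrimeSpectrum.basicOpen b : Set (PrimeSpectrum B)) ⊆ Set.range v) :
    Algebra.FiniteType R (Localization.Away b) := by
  let α := Spec.map (CommRingCat.ofHom (algebraMap B (Localization.Away b)))
  have hα : Set.range α ⊆ Set.range v :=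
    (PrimeSpectrum.localization_away_comap_range (Localization.Away b) b).trans_subset hb
  let w := IsOpenImmersion.lift v α hα
  have : IsOpenImmersion (w ≫ v) := by
    rw [IsOpenImmersion.lift_fac]
    exact inferInstanceAs (IsOpenImmersion α)
  have : IsOpenImmersion w := .of_comp w v
  have hw : w ≫ v ≫ Spec.map (CommRingCat.ofHom (algebraMap R B)) =
      Spec.map (CommRingCat.ofHom (algebraMap R (Localization.Away b))) := by
    rw [IsOpenImmersion.lift_fac_assoc, ← Spec.map_comp, ← CommRingCat.ofHom_comp,
      ← IsScalarTower.algebraMap_eq]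
  have h : LocallyOfFiniteType
      (Spec.map (CommRingCat.ofHom (algebraMap R (Localization.Away b)))) := hw ▸ inferInstance
  exact RingHom.finiteType_algebraMap.mp (HasRingHomProperty.Spec_iff.mp h)

lemma isOpenImmersion_comp_SpecMap_of_awayMap_bijective {A B : CommRingCat.{u}} (φ : A ⟶ B)
    (v : X ⟶ Spec B) [IsOpenImmersion v] {κ : Type*} (a : κ → A)
    (hv : Set.range v ⊆ ⋃ k, (PrimeSpectrum.basicOpen (φ (a k)) : Set (PrimeSpectrum B)))
    (hφ : ∀ k, Function.Bijective (Localization.awayMap φ.hom (a k))) :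
    IsOpenImmersion (v ≫ Spec.map φ) := by
  let U (k : κ) : (Spec A).Opens := PrimeSpectrum.basicOpen (a k)
  refine IsZariskiLocalAtTarget.of_range_subset_iSup U ?_ fun k ↦ ?_
  · rintro _ ⟨x, rfl⟩
    obtain ⟨k, hk⟩ := Set.mem_iUnion.mp (hv ⟨x, rfl⟩)
    exact TopologicalSpace.Opens.mem_iSup.mpr ⟨k, hk⟩
  · have : IsIso (CommRingCat.ofHom (Localization.awayMap φ.hom (a k))) :=
      (ConcreteCategory.isIso_iff_bijective _).mpr (hφ k)
    have : IsIso (Spec.map φ ∣_ U k) :=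
      ((MorphismProperty.isomorphisms _).arrow_mk_iso_iff (SpecMapRestrictBasicOpenIso φ _)).mpr
        (inferInstanceAs (IsIso (Spec.map _)))
    have : IsOpenImmersion (v ∣_ Spec.map φ ⁻¹ᵁ U k) := IsZariskiLocalAtTarget.restrict ‹_› _
    rw [morphismRestrict_comp]
    exact MorphismProperty.comp_mem @IsOpenImmersion _ _ ‹_› inferInstance

lemma isDominant_SpecMap_of_injective {A B : CommRingCat.{u}} (φ : A ⟶ B)
    (hφ : Function.Injective φ) : IsDominant (Spec.map φ) :=
  ⟨(PrimeSpectrum.denseRange_comap_iff_ker_le_nilRadical φ.hom).mpr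
    (((RingHom.injective_iff_ker_eq_bot _).mp hφ).trans_le bot_le)⟩

lemma exists_subalgebra_finite_isOpenImmersion [Algebra.IsIntegral R B] [CompactSpace X]
    (v : X ⟶ Spec (.of B)) [IsOpenImmersion v]
    [LocallyOfFiniteType (v ≫ Spec.map (CommRingCat.ofHom (algebraMap R B)))] :
    ∃ C : Subalgebra R B, Module.Finite R C ∧
      IsOpenImmersion (v ≫ Spec.map (CommRingCat.ofHom C.val.toRingHom)) := by
  obtain ⟨s, hs, hv⟩ : ∃ s : Set B, s.Finite ∧
      Set.range v = ⋃ b ∈ s, (PrimeSpectrum.basicOpen b : Set (PrimeSpectrum B)) :=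
    (PrimeSpectrum.isBasis_basic_opens.isCompact_open_iff_eq_finite_iUnion _
      PrimeSpectrum.isCompact_basicOpen _).mp
      ⟨isCompact_range v.continuous, v.isOpenEmbedding.isOpen_range⟩
  have hft (b : B) (hb : b ∈ s) : Algebra.FiniteType R (Localization.Away b) :=
    finiteType_localizationAway_of_basicOpen_subset_range v b
      ((Set.subset_biUnion_of_mem
        (u := fun b ↦ (PrimeSpectrum.basicOpen b : Set (PrimeSpectrum B))) hb).trans hv.ge)
  obtain ⟨C, hC, hbij⟩ := exists_subalgebra_finite_forall_awayMap_bijective s hs hft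
  choose hmem hbij using hbij
  refine ⟨C, hC, isOpenImmersion_comp_SpecMap_of_awayMap_bijective _ v
    (fun b : s ↦ (⟨b, hmem b b.2⟩ : C)) ?_ fun b ↦ hbij b b.2⟩
  exact (hv.trans (Set.biUnion_eq_iUnion _ _)).subset

lemma exists_isFinite_of_isIntegralHom {N Y : Scheme.{u}} [IsAffine Y] [CompactSpace X]
    (v : X ⟶ N) (p : N ⟶ Y) [IsOpenImmersion v] [IsDominant v] [IsIntegralHom p]
    [LocallyOfFiniteType (v ≫ p)] :
    ∃ (Z : Scheme.{u}) (g : X ⟶ Z) (h : Z ⟶ Y),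
      IsOpenImmersion g ∧ IsDominant g ∧ IsFinite h ∧ g ≫ h = v ≫ p := by
  have : IsAffine N := isAffine_of_isAffineHom p
  let φ : Γ(Y, ⊤) ⟶ Γ(N, ⊤) := p.appTop
  algebraize [φ.hom]
  let v' : X ⟶ Spec Γ(N, ⊤) := v ≫ N.isoSpec.hom
  have hφ : Spec.map φ = N.isoSpec.inv ≫ p ≫ Y.isoSpec.hom := by
    rw [Iso.eq_inv_comp, Scheme.isoSpec_hom_naturality]
  have hv' : v' ≫ Spec.map φ = (v ≫ p) ≫ Y.isoSpec.hom := by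
    simp only [v', hφ, Category.assoc, Iso.hom_inv_id_assoc]
  have : Algebra.IsIntegral Γ(Y, ⊤) Γ(N, ⊤) :=
    ⟨IsIntegralHom.SpecMap_iff.mp (hφ ▸ inferInstance : IsIntegralHom (Spec.map φ))⟩
  have : LocallyOfFiniteType
      (v' ≫ Spec.map (CommRingCat.ofHom (algebraMap Γ(Y, ⊤) Γ(N, ⊤)))) :=
    (hv' ▸ inferInstance : LocallyOfFiniteType (v' ≫ Spec.map φ))
  obtain ⟨C, hC, hg⟩ := exists_subalgebra_finite_isOpenImmersion (R := Γ(Y, ⊤)) v'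
  let ρ : Γ(Y, ⊤) ⟶ .of C := CommRingCat.ofHom (algebraMap Γ(Y, ⊤) C)
  let ι : .of C ⟶ Γ(N, ⊤) := CommRingCat.ofHom C.val.toRingHom
  have : IsFinite (Spec.map ρ) := (IsFinite.SpecMap_iff ρ).mpr (RingHom.finite_algebraMap.mpr hC)
  have : IsDominant (Spec.map ι) := isDominant_SpecMap_of_injective ι Subtype.val_injective
  refine ⟨Spec (.of C), v' ≫ Spec.map ι, Spec.map ρ ≫ Y.isoSpec.inv, hg, inferInstance,
    inferInstance, ?_⟩
  have hρι : ρ ≫ ι = φ := rfl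
  rw [Category.assoc, ← Spec.map_comp_assoc, hρι, ← Category.assoc, hv', Category.assoc,
    Iso.hom_inv_id, Category.comp_id]

end Affine

section Factorization

variable {X Y : Scheme.{u}}

lemma exists_isOpenImmersion_sup_le_universallyClosedLocus [QuasiSeparatedSpace Y] (f : X ⟶ Y)
    [IsQuasiFiniteSeparated f] (V : Y.affineOpens) :
    ∃ (T : Scheme.{u}) (i : X ⟶ T) (t : T ⟶ Y), IsOpenImmersion i ∧ i ≫ t = f ∧
      IsQuasiFiniteSeparated t ∧ universallyClosedLocus f ⊔ V ≤ universallyClosedLocus t := by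
  have : IsAffine V.1 := V.2
  have : CompactSpace (f ⁻¹ᵁ V.1) := QuasiCompact.compactSpace_of_compactSpace (f ∣_ V)
  have : LocallyOfFiniteType ((f ∣_ V).toNormalization ≫ (f ∣_ V).fromNormalization) := by
    rw [Scheme.Hom.toNormalization_fromNormalization]
    infer_instance
  obtain ⟨Z, g, h, _, _, _, w⟩ :=
    exists_isFinite_of_isIntegralHom (f ∣_ V).toNormalization (f ∣_ V).fromNormalization
  rw [Scheme.Hom.toNormalization_fromNormalization] at w
  let t := glueOver f V g h w
  have hit : pushout.inl (f ⁻¹ᵁ V.1).ι g ≫ t = f := inl_glueOver f V g h w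
  have ht : IsQuasiFiniteSeparated t := isQuasiFiniteSeparated_glueOver f V g h w
  obtain ⟨e, he⟩ := exists_iso_hom_comp_eq_glueOver_restrict f V g h w
  have : UniversallyClosed (t ∣_ V) := he ▸ inferInstance
  have hle : universallyClosedLocus f ≤ universallyClosedLocus t :=
    congr(universallyClosedLocus $hit).ge.trans (universallyClosedLocus_comp_le _ t)
  exact ⟨_, _, t, inferInstance, hit, ht, sup_le hle (le_universallyClosedLocus t V)⟩

theorem exists_isOpenImmersion_isFinite_comp_eq [CompactSpace Y] [QuasiSeparatedSpace Y]
    (f : X ⟶ Y) [IsQuasiFiniteSeparated f] :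
    ∃ (X' : Scheme.{u}) (g : X ⟶ X') (h : X' ⟶ Y),
      IsOpenImmersion g ∧ IsFinite h ∧ g ≫ h = f := by
  obtain ⟨T, i, t, hi, hit, _, ht⟩ : ∃ (T : Scheme.{u}) (i : X ⟶ T) (t : T ⟶ Y),
      IsOpenImmersion i ∧ i ≫ t = f ∧ IsQuasiFiniteSeparated t ∧
        ⊤ ≤ universallyClosedLocus t := by
    refine compact_open_induction_on (⊤ : Y.Opens) isCompact_univ ?_ ?_
    · exact ⟨X, 𝟙 X, f, inferInstance, Category.id_comp f, ‹_›, bot_le⟩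
    · rintro S - V ⟨T, i, t, _, rfl, _, hS⟩
      obtain ⟨T', i', t', _, rfl, ht', hV⟩ :=
        exists_isOpenImmersion_sup_le_universallyClosedLocus t V
      exact ⟨T', i ≫ i', t', inferInstance, Category.assoc .., ht',
        (sup_le_sup_right hS _).trans hV⟩
  have : UniversallyClosed t :=
    universallyClosed_of_universallyClosedLocus_eq_top (top_le_iff.mp ht)
  exact ⟨T, i, t, hi, isFinite_of_universallyClosed t, hit⟩

end Factorization

end ZariskiMainTheorem

/-- Zariski's Main Theorem, factorization form: a quasi-finite separated
morphism of schemes `f : X ⟶ Y` factors as an open immersion `X ⟶ X'` followed by an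
integral morphism `X' ⟶ Y`; if moreover `Y` is quasi-compact and quasi-separated, the
factorization can be chosen with `X' ⟶ Y` finite.  Quasi-finite means of finite type
(i.e. locally of finite type and quasi-compact) with finite fibers. -/
theorem zariski_main_theorem_factorization
    {X Y : AlgebraicGeometry.Scheme} (f : X ⟶ Y)
    [LocallyOfFiniteType f] [QuasiCompact f] [IsSeparated f]
    (hfib : ∀ y : Y, (f.base ⁻¹' {y}).Finite) :
    (∃ (X' : AlgebraicGeometry.Scheme) (g : X ⟶ X') (h : X' ⟶ Y),
      IsOpenImmersion g ∧ IsIntegralHom h ∧ g ≫ h = f) ∧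
    (CompactSpace Y → QuasiSeparatedSpace Y →
      ∃ (X' : AlgebraicGeometry.Scheme) (g : X ⟶ X') (h : X' ⟶ Y),
        IsOpenImmersion g ∧ IsFinite h ∧ g ≫ h = f) := by
  have : LocallyQuasiFinite f := LocallyQuasiFinite.of_finite_preimage_singleton f hfib
  have : ZariskiMainTheorem.IsQuasiFiniteSeparated f := {}
  exact ⟨⟨f.normalization, f.toNormalization, f.fromNormalization, inferInstance, inferInstance,
    f.toNormalization_fromNormalization⟩,
    fun _ _ ↦ ZariskiMainTheorem.exists_isOpenImmersion_isFinite_comp_eq f⟩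
end

section
/- Let A ⊆ B be an inclusion of commutative rings such that B is of finite type over A, the induced morphism Spec B → Spec A is quasi-finite, and A is integrally closed in B (every element of B integral over A lies in A). Then Spec B → Spec A is an open immersion. -/
open AlgebraicGeometry

/-!
Let `q` be a prime of `B`. Zariski's main theorem gives `r ∉ q` in the integral closure of `A` in
`B` such that every element of `B` lies in this integral closure after multiplication by a power
of `r`. Here the integral closure is `A`, so `r ∈ A` and `A[1/r] = B[1/r]`. Hence `Spec B → Spec A`
is an isomorphism over `D(r)`, and these open sets cover its image.
-/

open CategoryTheory

universe u

theorem exists_awayMap_bijective_of_zariskisMainProperty {A B : Type*} [CommRing A] [CommRing B]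
    [Algebra A B] [IsIntegrallyClosedIn A B] {q : Ideal B}
    (hq : Algebra.ZariskisMainProperty A q) :
    ∃ r : A, algebraMap A B r ∉ q ∧
      Function.Bijective (Localization.awayMap (algebraMap A B) r) := by
  obtain ⟨b, hbq, hb, hpow⟩ := Algebra.zariskisMainProperty_iff.mp hq
  obtain ⟨r, rfl⟩ := IsIntegrallyClosedIn.algebraMap_eq_of_integral hb
  refine ⟨r, hbq, ?_, Localization.awayMap_surjective_iff.mpr fun x ↦ ?_⟩
  · have hinj : Function.Injective (algebraMap A B) := (isIntegrallyClosedIn_iff.mp ‹_›).1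
    exact IsLocalization.map_injective_of_injective _ _ _ hinj
  · obtain ⟨m, hm⟩ := hpow x
    obtain ⟨a, ha⟩ := IsIntegrallyClosedIn.algebraMap_eq_of_integral hm
    exact ⟨a, m, ha⟩

theorem isOpenImmersion_specMap_of_forall_exists_awayMap_bijective {R S : CommRingCat.{u}}
    (f : R ⟶ S) (h : ∀ q : PrimeSpectrum S, ∃ r : R, f.hom r ∉ q.asIdeal ∧
      Function.Bijective (Localization.awayMap f.hom r)) :
    IsOpenImmersion (Spec.map f) := by
  choose r hrq hr using h
  refine IsZariskiLocalAtTarget.of_range_subset_iSup (P := @IsOpenImmersion)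
    (fun q ↦ PrimeSpectrum.basicOpen (r q)) ?range_subset fun q ↦ ?restrict
  case range_subset =>
    rintro _ ⟨q, rfl⟩
    exact TopologicalSpace.Opens.mem_iSup.mpr ⟨q, hrq q⟩
  case restrict =>
    have : IsIso (CommRingCat.ofHom (Localization.awayMap f.hom (r q))) :=
      (ConcreteCategory.isIso_iff_bijective _).mpr (hr q)
    exact (MorphismProperty.arrow_mk_iso_iff @IsOpenImmersion
      (SpecMapRestrictBasicOpenIso f (r q))).mpr inferInstance

theorem spec_isOpenImmersion_of_quasiFinite_of_integrallyClosed_general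
    (A B : Type u) [CommRing A] [CommRing B] [Algebra A B] [Algebra.FiniteType A B]
    [Algebra.QuasiFinite A B] [IsIntegrallyClosedIn A B] :
    IsOpenImmersion (Spec.map (CommRingCat.ofHom (algebraMap A B))) :=
  isOpenImmersion_specMap_of_forall_exists_awayMap_bijective _ fun q ↦
    exists_awayMap_bijective_of_zariskisMainProperty
      (Algebra.ZariskisMainProperty.of_finiteType q.asIdeal)

/-- Let `A ⊆ B` be commutative rings with `B` of finite type over `A`,
`Spec B → Spec A` quasi-finite (finite fibers), and `A` integrally closed in `B`.
Then `Spec B → Spec A` is an open immersion. -/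
theorem spec_isOpenImmersion_of_quasiFinite_of_integrallyClosed
    (A B : Type) [CommRing A] [CommRing B] [Algebra A B]
    (hinj : Function.Injective (algebraMap A B))
    (hft : Algebra.FiniteType A B)
    (hqf : ∀ p : PrimeSpectrum A,
      (PrimeSpectrum.comap (algebraMap A B) ⁻¹' {p}).Finite)
    (hic : ∀ b : B, IsIntegral A b → b ∈ (algebraMap A B).range) :
    IsOpenImmersion (Spec.map (CommRingCat.ofHom (algebraMap A B))) := by
  have : Algebra.QuasiFinite A B := Algebra.QuasiFinite.iff_finite_comap_preimage_singleton.mpr hqf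
  have : IsIntegrallyClosedIn A B := isIntegrallyClosedIn_iff.mpr ⟨hinj, hic _⟩
  exact spec_isOpenImmersion_of_quasiFinite_of_integrallyClosed_general A B
end

section
/- Let f : X → Y be a quasi-compact morphism of schemes that is universally closed and separated and whose fibers X_y = X ×_Y Spec k(y) are affine schemes for every point y ∈ Y. Then f is integral (in particular affine). -/
open AlgebraicGeometry CategoryTheory CategoryTheory.Limits

/-!
Let `N` be the normalization of `Y` in `X`, so that `X ⟶ N` is universally closed and dominant and
`N ⟶ Y` is integral; it suffices that `X ⟶ N` is an isomorphism, which may be checked locally on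
`N`. Affine universally closed fibers are integral over residue fields, so no point of a fiber
specializes to another one.

Let `Y` be affine and let `U` be an affine open of `X`. Since the graph of `U ⟶ X` is closed in
`X ×[Y] U`, for a large enough finitely generated subalgebra `D` of `Γ(U, ⊤)` over `Γ(Y, ⊤)` the map
`U ⟶ X ×[Y] Spec D` is still a closed immersion. As `X ⟶ Y` is universally closed, `U ⟶ Spec D` is
integral and surjective. Hence `Spec D ⟶ Y` has fibers of finite type without specializations,
i.e. it is quasi-finite. Étale locally on `Y`, a neighborhood of a given point of `Spec D` becomes
a finite clopen piece; its preimage in `U` is integral over the base, hence clopen in `X`, and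
normalization changes nothing there. Étale descent concludes.
-/

universe u

section Topology

open TopologicalSpace

theorem finite_of_noetherianSpace_of_t1Space (Z : Type*) [TopologicalSpace Z] [NoetherianSpace Z]
    [QuasiSober Z] [T1Space Z] : Finite Z := by
  have hsingleton (z : Z) : irreducibleComponent z = {z} := by
    obtain ⟨g, hg⟩ := QuasiSober.sober (isIrreducible_irreducibleComponent (x := z))
      isClosed_irreducibleComponent
    rw [IsGenericPoint, closure_singleton] at hg
    have hz : z ∈ ({g} : Set Z) := hg ▸ mem_irreducibleComponent
    rw [← hg, Set.mem_singleton_iff.mp hz]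
  have := (NoetherianSpace.finite_irreducibleComponents (α := Z)).to_subtype
  refine .of_injective (β := irreducibleComponents Z)
    (fun z ↦ ⟨irreducibleComponent z, irreducibleComponent_mem_irreducibleComponents z⟩) ?_
  intro z z' h
  simpa [hsingleton] using h

theorem t1Space_of_isClosedMap_of_surjective {A B : Type*} [TopologicalSpace A]
    [TopologicalSpace B] [T1Space A] {h : A → B} (hclosed : IsClosedMap h)
    (hsurj : Function.Surjective h) : T1Space B where
  t1 b := by
    obtain ⟨a, rfl⟩ := hsurj b
    simpa using hclosed {a} isClosed_singleton

theorem t1Space_preimage_singleton_of_injective {X Y X' Y' : Type*} [TopologicalSpace X]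
    [TopologicalSpace X'] {f : X → Y} {f' : X' → Y'} {i : X' → X} {s : Y' → Y}
    (hi : Continuous i) (hinj : Function.Injective i) (comm : ∀ x, f (i x) = s (f' x)) (y : Y')
    [T1Space (f ⁻¹' {s y})] : T1Space (f' ⁻¹' {y}) := by
  have hmaps : Set.MapsTo i (f' ⁻¹' {y}) (f ⁻¹' {s y}) := fun x hx ↦ by
    rw [Set.mem_preimage, comm, Set.mem_singleton_iff.mp hx, Set.mem_singleton_iff]
  exact t1Space_of_injective_of_continuous (hmaps.restrict_inj.mpr hinj.injOn)
    (hi.restrict hmaps)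

theorem t1Space_preimage_singleton_of_isClosedMap {U Z Y : Type*} [TopologicalSpace U]
    [TopologicalSpace Z] {h : U → Z} {q : Z → Y} (hclosed : IsClosedMap h)
    (hsurj : Function.Surjective h) (y : Y) [T1Space ((q ∘ h) ⁻¹' {y})] : T1Space (q ⁻¹' {y}) :=
  have : T1Space (h ⁻¹' (q ⁻¹' {y})) := ‹T1Space ((q ∘ h) ⁻¹' {y})›
  t1Space_of_isClosedMap_of_surjective (hclosed.restrictPreimage (q ⁻¹' {y}))
    (hsurj.restrictPreimage _)

end Topology

theorem t1Space_primeSpectrum_of_isIntegral {R B : Type*} [CommRing R] [CommRing B] {φ : R →+* B}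
    (hφ : φ.IsIntegral) [T1Space (PrimeSpectrum R)] : T1Space (PrimeSpectrum B) where
  t1 p := by
    have hcomap := (PrimeSpectrum.isClosed_singleton_iff_isMaximal (p.comap φ)).mp
      isClosed_singleton
    exact (PrimeSpectrum.isClosed_singleton_iff_isMaximal p).mpr
      (Ideal.isMaximal_of_isIntegral_of_isMaximal_comap' φ hφ p.asIdeal hcomap)

theorem t1Space_of_isIntegralHom {X S : Scheme.{u}} (g : X ⟶ S) [IsIntegralHom g] [IsAffine S]
    [T1Space S] : T1Space X := by
  have : IsAffine X := isAffine_of_isAffineHom g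
  have : T1Space (PrimeSpectrum Γ(S, ⊤)) := S.isoSpec.hom.homeomorph.t1Space
  have : T1Space (Spec Γ(X, ⊤)) :=
    t1Space_primeSpectrum_of_isIntegral (g.isIntegral_app ⊤ (isAffineOpen_top S))
  exact X.isoSpec.inv.homeomorph.t1Space

theorem t1Space_preimage_singleton_of_isAffine_fiber {X Y : Scheme.{u}} (f : X ⟶ Y)
    [UniversallyClosed f] (y : Y) [IsAffine (f.fiber y)] : T1Space (f ⁻¹' {y}) := by
  have : UniversallyClosed (f.fiberToSpecResidueField y) :=
    inferInstanceAs (UniversallyClosed (pullback.snd _ _))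
  have : IsIntegralHom (f.fiberToSpecResidueField y) :=
    IsIntegralHom.iff_universallyClosed_and_isAffineHom.mpr ⟨this, inferInstance⟩
  have : T1Space (Spec (Y.residueField y)) :=
    inferInstanceAs (T1Space (PrimeSpectrum (Y.residueField y)))
  have : T1Space (f.fiber y) := t1Space_of_isIntegralHom (f.fiberToSpecResidueField y)
  exact (f.fiberHomeo y).t1Space

theorem locallyQuasiFinite_of_t1Space_preimage_singleton {Z Y : Scheme.{u}} (q : Z ⟶ Y)
    [LocallyOfFiniteType q] [QuasiCompact q] (h : ∀ y, T1Space (q ⁻¹' {y})) :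
    LocallyQuasiFinite q := by
  refine LocallyQuasiFinite.of_finite_preimage_singleton q fun y ↦ ?_
  have : LocallyOfFiniteType (q.fiberToSpecResidueField y) :=
    inferInstanceAs (LocallyOfFiniteType (pullback.snd _ _))
  have : IsLocallyNoetherian (q.fiber y) :=
    LocallyOfFiniteType.isLocallyNoetherian (q.fiberToSpecResidueField y)
  have : IsNoetherian (q.fiber y) := {}
  have : T1Space (q.fiber y) := (q.fiberHomeo y).symm.t1Space
  have := finite_of_noetherianSpace_of_t1Space (q.fiber y)
  rw [← q.range_fiberι y]
  exact Set.finite_range _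

theorem exists_isIso_morphismRestrict_of_isPullback {X N P Q : Scheme.{u}} {ν : X ⟶ N}
    {i : P ⟶ X} {p : P ⟶ Q} {q : Q ⟶ N} (H : IsPullback i p ν q) [IsIso p] [Flat q]
    [LocallyOfFinitePresentation q] (a : Q) : ∃ V : N.Opens, q a ∈ V ∧ IsIso (ν ∣_ V) := by
  let V : N.Opens := ⟨Set.range q, q.isOpenMap.isOpen_range⟩
  have hV : Set.range q ⊆ Set.range V.ι := by simp [V]
  let q' : Q ⟶ V := IsOpenImmersion.lift V.ι q hV
  have hq' : q' ≫ V.ι = q := IsOpenImmersion.lift_fac _ _ _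
  have hbase : IsPullback q' (𝟙 Q) V.ι q := IsOpenImmersion.isPullback_lift_id q V.ι hV
  have : Flat q' := MorphismProperty.of_isPullback hbase.flip ‹_›
  have : LocallyOfFinitePresentation q' := MorphismProperty.of_isPullback hbase.flip ‹_›
  have : Surjective q' := by
    refine ⟨fun ⟨_, b, hb⟩ ↦ ⟨b, V.ι.injective ?_⟩⟩
    rw [← Scheme.Hom.comp_apply, hq', hb]
    rfl
  have hrestrict : IsPullback _ p (ν ∣_ V) q' :=
    .of_right' (hq'.symm ▸ H) (isPullback_morphismRestrict ν V).flip
  exact ⟨V, ⟨a, rfl⟩, MorphismProperty.of_isPullback_of_descendsAlong (P := .isomorphisms _)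
    (Q := @Surjective ⊓ @Flat ⊓ @LocallyOfFinitePresentation) hrestrict.flip
    ⟨⟨‹_›, ‹_›⟩, ‹_›⟩ ‹_›⟩

theorem isOpenImmersion_and_isPullback_toNormalization {P T V : Scheme.{u}} (g : P ⟶ T)
    [QuasiCompact g] [IsSeparated g] (i : V ⟶ P) [IsOpenImmersion i] [IsIntegralHom (i ≫ g)] :
    IsOpenImmersion (i ≫ g.toNormalization) ∧
      IsPullback i (𝟙 V) g.toNormalization (i ≫ g.toNormalization) := by
  have : IsIntegralHom i := .of_comp i g
  have hi : IsClosed (Set.range i) := i.isClosedMap.isClosed_range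
  let W : P.Opens := ⟨(Set.range i)ᶜ, hi.isOpen_compl⟩
  have hW : Set.range W.ι = (Set.range i)ᶜ := Subtype.range_coe
  have : IsClosedImmersion W.ι :=
    .of_isPreimmersion _ (hW ▸ i.isOpenEmbedding.isOpen_range.isClosed_compl)
  obtain ⟨H⟩ := nonempty_isColimit_binaryCofanMk_of_isCompl i W.ι (by
    simp [isCompl_iff, disjoint_iff, codisjoint_iff, SetLike.ext'_iff, W])
  let e := g.normalizationCoprodIso H
  have hl : (i ≫ g).toNormalization ≫ coprod.inl ≫ e.hom = i ≫ g.toNormalization :=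
    g.toNormalization_inl_normalizationCoprodIso_hom H
  have hr : (W.ι ≫ g).toNormalization ≫ coprod.inr ≫ e.hom = W.ι ≫ g.toNormalization :=
    g.toNormalization_inr_normalizationCoprodIso_hom H
  have hopen : IsOpenImmersion (i ≫ g.toNormalization) := hl ▸ inferInstance
  refine ⟨hopen, (IsOpenImmersion.isPullback _ _ _ _ (by simp) ?_).flip⟩
  refine le_antisymm ?_ (by rintro _ ⟨v, rfl⟩; exact ⟨v, rfl⟩)
  rintro a ⟨v, hv⟩
  by_contra ha
  obtain ⟨b, rfl⟩ : ∃ b, W.ι b = a := ⟨⟨a, ha⟩, rfl⟩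
  rw [← hl, ← Scheme.Hom.comp_apply, ← hr] at hv
  simp only [Scheme.Hom.comp_apply] at hv
  exact Set.disjoint_iff_forall_ne.mp (isCompl_range_inl_inr _ _).disjoint ⟨_, rfl⟩ ⟨_, rfl⟩
    (e.hom.injective hv)

theorem exists_isIso_morphismRestrict_toNormalization_of_etale {X Y T V : Scheme.{u}} (f : X ⟶ Y)
    [QuasiCompact f] [IsSeparated f] (t : T ⟶ Y) [Etale t] (i : V ⟶ pullback f t)
    [IsOpenImmersion i] [IsIntegralHom (i ≫ pullback.snd f t)] (v : V) :
    ∃ N : f.normalization.Opens, f.toNormalization (pullback.fst f t (i v)) ∈ N ∧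
      IsIso (f.toNormalization ∣_ N) := by
  let g := pullback.snd f t
  -- normalization commutes with étale base change
  let τ : g.normalization ⟶ f.normalization := f.normalizationPullback t ≫ pullback.fst _ _
  have hτ : IsPullback τ g.fromNormalization f.fromNormalization t :=
    .of_iso (.of_hasPullback f.fromNormalization t) (asIso (f.normalizationPullback t)).symm
      (.refl _) (.refl _) (.refl _) (by simp [τ]) (by simp [g]) (by simp) (by simp)
  have hν : IsPullback (pullback.fst f t) g.toNormalization f.toNormalization τ :=
    .of_bot (by simpa [g] using .of_hasPullback f t)
      (f.toNormalization_normalizationPullback_fst t).symm hτ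
  obtain ⟨_, hV⟩ := isOpenImmersion_and_isPullback_toNormalization g i
  have hX := hV.paste_horiz hν
  have hv : f.toNormalization (pullback.fst f t (i v)) = ((i ≫ g.toNormalization) ≫ τ) v := by
    rw [← Scheme.Hom.comp_apply, ← Scheme.Hom.comp_apply, ← Category.assoc, hX.w,
      Category.id_comp]
  exact hv ▸ exists_isIso_morphismRestrict_of_isPullback hX v

theorem exists_isIso_morphismRestrict_toNormalization {X Y U Z : Scheme.{u}} (f : X ⟶ Y)
    [QuasiCompact f] [IsSeparated f] (j : U ⟶ X) [IsOpenImmersion j] (h : U ⟶ Z) [IsIntegralHom h]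
    (q : Z ⟶ Y) [LocallyOfFiniteType q] [IsSeparated q] (w : j ≫ f = h ≫ q) (x : U)
    (hx : q.QuasiFiniteAt (h x)) :
    ∃ N : f.normalization.Opens, f.toNormalization (j x) ∈ N ∧
      IsIso (f.toNormalization ∣_ N) := by
  obtain ⟨T, t, _, -, V, -, v, -, _, hv⟩ := exists_etale_isCompl_of_quasiFiniteAt q rfl hx
  let h' := pullback.snd h (pullback.fst q t)
  have hUT : IsPullback (pullback.fst h (pullback.fst q t)) (h' ≫ pullback.snd q t) (j ≫ f) t :=
    w ▸ .paste_vert (.of_hasPullback _ _) (.of_hasPullback _ _)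
  obtain ⟨k, hkf, hks⟩ : ∃ k, k ≫ pullback.fst f t = pullback.fst h (pullback.fst q t) ≫ j ∧
      k ≫ pullback.snd f t = h' ≫ pullback.snd q t :=
    ⟨_, pullback.lift_fst _ _ (by simpa using hUT.w), pullback.lift_snd _ _ _⟩
  have hk : IsPullback (pullback.fst h (pullback.fst q t)) k j (pullback.fst f t) :=
    .of_bot (hks ▸ hUT) hkf.symm (.of_hasPullback f t)
  have : IsOpenImmersion k := MorphismProperty.of_isPullback hk ‹_›
  have hi : ((h' ⁻¹ᵁ V).ι ≫ k) ≫ pullback.snd f t = (h' ∣_ V) ≫ V.ι ≫ pullback.snd q t := by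
    rw [morphismRestrict_ι_assoc, Category.assoc, hks]
  have : IsIntegralHom (((h' ⁻¹ᵁ V).ι ≫ k) ≫ pullback.snd f t) := hi ▸ inferInstance
  obtain ⟨a, rfl, hav⟩ := Scheme.Pullback.exists_preimage_pullback (f := h)
    (g := pullback.fst q t) x v.1 hv.symm
  obtain ⟨b, rfl⟩ : ∃ b, (h' ⁻¹ᵁ V).ι b = a := ⟨⟨a, by simp [h', hav]⟩, rfl⟩
  have hb : pullback.fst f t (((h' ⁻¹ᵁ V).ι ≫ k) b) =
      j (pullback.fst h (pullback.fst q t) ((h' ⁻¹ᵁ V).ι b)) := by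
    rw [← Scheme.Hom.comp_apply, ← Scheme.Hom.comp_apply, ← Scheme.Hom.comp_apply,
      Category.assoc, hkf]
  exact hb ▸ exists_isIso_morphismRestrict_toNormalization_of_etale f t ((h' ⁻¹ᵁ V).ι ≫ k) b

theorem exists_finite_subset_adjoin_eq_top {A G : Type*} [CommSemiring A] [Semiring G]
    [Algebra A G] [Algebra.FiniteType A G] {s : Set G} (hs : Algebra.adjoin A s = ⊤) :
    ∃ t ⊆ s, t.Finite ∧ Algebra.adjoin A t = ⊤ := by
  have key (x : G) (hx : x ∈ Algebra.adjoin A s) :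
      ∃ t ⊆ s, t.Finite ∧ x ∈ Algebra.adjoin A t := by
    induction hx using Algebra.adjoin_induction with
    | mem x hx => exact ⟨{x}, by simpa, Set.finite_singleton x, Algebra.subset_adjoin rfl⟩
    | algebraMap r => exact ⟨∅, by simp, Set.finite_empty, algebraMap_mem _ r⟩
    | add x y _ _ hx hy | mul x y _ _ hx hy =>
      obtain ⟨t, hts, ht, hxt⟩ := hx
      obtain ⟨t', hts', ht', hyt'⟩ := hy
      have hxt := Algebra.adjoin_mono (R := A) (Set.subset_union_left (t := t')) hxt
      have hyt' := Algebra.adjoin_mono (R := A) (Set.subset_union_right (s := t)) hyt'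
      exact ⟨t ∪ t', Set.union_subset hts hts', ht.union ht',
        by first | exact add_mem hxt hyt' | exact mul_mem hxt hyt'⟩
  obtain ⟨g, hg⟩ := Algebra.FiniteType.out (R := A) (A := G)
  choose t hts ht hmem using fun x ↦ key x (hs ▸ trivial)
  refine ⟨⋃ x ∈ g, t x, Set.iUnion₂_subset fun x _ ↦ hts x,
    g.finite_toSet.biUnion fun x _ ↦ ht x, top_le_iff.mp (hg ▸ Algebra.adjoin_le fun x hx ↦ ?_)⟩
  exact Algebra.adjoin_mono (Set.subset_biUnion_of_mem (u := t) hx) (hmem x)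

theorem exists_finite_closure_range_union_image_eq_top {A B G : Type*} [CommRing A] [CommRing G]
    {φ : A →+* G} (hφ : φ.FiniteType) {β : B → G}
    (h : Subring.closure (Set.range φ ∪ Set.range β) = ⊤) :
    ∃ T : Set B, T.Finite ∧ Subring.closure (Set.range φ ∪ β '' T) = ⊤ := by
  algebraize [φ]
  have hadjoin (s : Set G) :
      Algebra.adjoin A s = ⊤ ↔ Subring.closure (Set.range φ ∪ s) = ⊤ := by
    rw [← Algebra.toSubring_eq_top, Algebra.adjoin_eq_ring_closure, RingHom.algebraMap_toAlgebra]
  obtain ⟨t, hts, ht, htop⟩ := exists_finite_subset_adjoin_eq_top ((hadjoin _).mpr h)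
  obtain ⟨T, -, hT, rfl⟩ := ht.exists_subset_finite_image_eq (Set.image_univ ▸ hts)
  exact ⟨T, hT, (hadjoin _).mp htop⟩

theorem isClosedImmersion_pullbackLift_iff_closure_eq_top {A Z S U : Scheme.{u}} [IsAffine A]
    [IsAffine Z] [IsAffine S] [IsAffine U] {f : A ⟶ S} {q : Z ⟶ S} {a : U ⟶ A} {b : U ⟶ Z}
    (w : a ≫ f = b ≫ q) : IsClosedImmersion (pullback.lift a b w) ↔
      Subring.closure (Set.range a.appTop ∪ Set.range b.appTop) = ⊤ := by
  let l := pullback.lift a b w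
  have hgen := CommRingCat.closure_range_union_range_eq_top_of_isPushout
    (isPushout_appTop_of_isPullback (.of_hasPullback f q))
  have ha : a.appTop = (pullback.fst f q).appTop ≫ l.appTop := by
    rw [← Scheme.Hom.comp_appTop, pullback.lift_fst]
  have hb : b.appTop = (pullback.snd f q).appTop ≫ l.appTop := by
    rw [← Scheme.Hom.comp_appTop, pullback.lift_snd]
  have hrange : Subring.closure (Set.range a.appTop ∪ Set.range b.appTop) = l.appTop.hom.range := by
    rw [RingHom.range_eq_map, ← hgen, RingHom.map_closure, Set.image_union, ← Set.range_comp,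
      ← Set.range_comp, ha, hb]
    rfl
  rw [hrange, RingHom.range_eq_top]
  exact ⟨fun _ ↦ (IsClosedImmersion.isAffine_surjective_of_isAffine l).2,
    IsClosedImmersion.of_surjective_of_isAffine l⟩

theorem isPullback_pullbackLift_pullbackMap {X Z S U W : Scheme.{u}} {f : X ⟶ S} {q : Z ⟶ S}
    {a : U ⟶ X} {b : U ⟶ Z} (w : a ≫ f = b ≫ q) (i : W ⟶ X) :
    IsPullback (pullback.fst a i)
      (pullback.lift (pullback.snd a i) (pullback.fst a i ≫ b)
        (by rw [← pullback.condition_assoc, w, Category.assoc]))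
      (pullback.lift a b w)
      (pullback.map (i ≫ f) q f q i (𝟙 Z) (𝟙 S) (by simp) (by simp)) := by
  have hmap : IsPullback (pullback.map (i ≫ f) q f q i (𝟙 Z) (𝟙 S) (by simp) (by simp))
      (pullback.fst (i ≫ f) q) (pullback.fst f q) i := by
    refine .of_right ?_ (pullback.lift_fst _ _ _) (IsPullback.of_hasPullback f q).flip
    rw [pullback.lift_snd, Category.comp_id]
    exact (IsPullback.of_hasPullback (i ≫ f) q).flip
  refine .of_bot ?_ ?_ hmap
  · simpa only [pullback.lift_fst] using .of_hasPullback a i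
  · apply pullback.hom_ext
    · rw [Category.assoc, Category.assoc, pullback.lift_fst, pullback.lift_fst,
        pullback.lift_fst_assoc, pullback.condition]
    · rw [Category.assoc, Category.assoc, pullback.lift_snd, pullback.lift_snd, Category.comp_id,
        pullback.lift_snd]

theorem isClosedImmersion_pullbackLift_iff_of_openCover {X Z S U : Scheme.{u}} {f : X ⟶ S}
    {q : Z ⟶ S} {a : U ⟶ X} {b : U ⟶ Z} (w : a ≫ f = b ≫ q) (𝒰 : X.OpenCover) :
    IsClosedImmersion (pullback.lift a b w) ↔ ∀ i, IsClosedImmersion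
      (pullback.lift (f := 𝒰.f i ≫ f) (g := q) (pullback.snd a (𝒰.f i))
        (pullback.fst a (𝒰.f i) ≫ b)
        (by rw [← pullback.condition_assoc, w, Category.assoc])) := by
  rw [IsZariskiLocalAtTarget.iff_of_openCover (P := @IsClosedImmersion)
    (Scheme.Pullback.openCoverOfLeft 𝒰 f q)]
  refine forall_congr' fun i ↦ ?_
  rw [← (isPullback_pullbackLift_pullbackMap w (𝒰.f i)).isoPullback_hom_snd,
    MorphismProperty.cancel_left_of_respectsIso @IsClosedImmersion]
  rfl

theorem exists_finite_isClosedImmersion_pullbackLift {X S U : Scheme.{u}} [CompactSpace X]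
    [IsAffine S] [IsAffine U] (f : X ⟶ S) [IsSeparated f] (a : U ⟶ X) [LocallyOfFiniteType a] :
    ∃ T : Set Γ(U, ⊤), T.Finite ∧ ∀ (Z : Scheme.{u}) [IsAffine Z] (q : Z ⟶ S) (b : U ⟶ Z)
      (w : a ≫ f = b ≫ q), T ⊆ Set.range b.appTop → IsClosedImmersion (pullback.lift a b w) := by
  -- On each member of a finite affine cover of `X`, the graph of `a` being closed is a generation
  -- condition on global sections, to which only finitely many functions on `U` contribute.
  let 𝒰 := X.affineCover.finiteSubcover
  have hgraph : IsClosedImmersion (pullback.lift a (𝟙 U) (Category.id_comp (a ≫ f)).symm) := by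
    have : IsClosedImmersion (pullback.lift a (𝟙 U) (Category.id_comp (a ≫ f)).symm ≫
        pullback.snd f (a ≫ f)) := by rw [pullback.lift_snd]; infer_instance
    exact .of_comp _ (pullback.snd f (a ≫ f))
  rw [isClosedImmersion_pullbackLift_iff_of_openCover _ 𝒰] at hgraph
  have (i : 𝒰.I₀) : IsAffine (pullback a (𝒰.f i)) :=
    (@IsClosedImmersion.isAffine_surjective_of_isAffine _ _ _ _ (hgraph i)).1
  have hft (i : 𝒰.I₀) : (pullback.snd a (𝒰.f i)).appTop.hom.FiniteType :=
    HasRingHomProperty.appTop @LocallyOfFiniteType _ inferInstance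
  choose T hT htop using fun i ↦ exists_finite_closure_range_union_image_eq_top (hft i)
    ((isClosedImmersion_pullbackLift_iff_closure_eq_top _).mp (hgraph i))
  refine ⟨⋃ i, T i, Set.finite_iUnion hT, fun Z _ q b w hTb ↦ ?_⟩
  rw [isClosedImmersion_pullbackLift_iff_of_openCover _ 𝒰]
  intro i
  rw [isClosedImmersion_pullbackLift_iff_closure_eq_top, ← top_le_iff, ← htop i]
  refine Subring.closure_mono (Set.union_subset_union_right _ ?_)
  rintro _ ⟨s, hs, rfl⟩
  obtain ⟨d, rfl⟩ := hTb (Set.mem_iUnion_of_mem i hs)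
  exact ⟨d, by rw [Category.comp_id, Scheme.Hom.comp_appTop, CommRingCat.comp_apply]⟩

theorem exists_locallyOfFiniteType_isDominant_factorization {U S : Scheme.{u}} [CompactSpace U]
    [IsAffine S] (g : U ⟶ S) {T : Set Γ(U, ⊤)} (hT : T.Finite) :
    ∃ (Z : Scheme.{u}) (q : Z ⟶ S) (b : U ⟶ Z), IsAffine Z ∧ LocallyOfFiniteType q ∧
      IsDominant b ∧ g = b ≫ q ∧ T ⊆ Set.range b.appTop := by
  algebraize [g.appTop.hom]
  let D := Algebra.adjoin Γ(S, ⊤) T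
  let δ : Γ(S, ⊤) ⟶ .of D := CommRingCat.ofHom (algebraMap _ D)
  let ι : CommRingCat.of D ⟶ Γ(U, ⊤) := CommRingCat.ofHom D.val.toRingHom
  have hι : δ ≫ ι = g.appTop := rfl
  let b := U.toSpecΓ ≫ Spec.map ι
  have hb : b.appTop = (Scheme.ΓSpecIso (.of D)).hom ≫ ι := by
    simp [b, Scheme.ΓSpecIso_naturality]
  refine ⟨Spec (.of D), Spec.map δ ≫ S.isoSpec.inv, b, inferInstance, ?_, ?_, ?_, ?_⟩
  · have : LocallyOfFiniteType (Spec.map δ) := by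
      rw [HasRingHomProperty.Spec_iff (P := @LocallyOfFiniteType)]
      exact RingHom.finiteType_algebraMap.mpr (.adjoin_of_finite hT)
    infer_instance
  · refine isDominant_of_of_appTop_injective ?_
    rw [hb]
    exact Subtype.val_injective.comp (ConcreteCategory.bijective_of_isIso (Scheme.ΓSpecIso _).hom).1
  · simp only [b, Category.assoc, ← Spec.map_comp_assoc, hι,
      ← Scheme.toSpecΓ_naturality_assoc, Scheme.toSpecΓ_isoSpec_inv, Category.comp_id]
  · intro x hx
    refine ⟨(Scheme.ΓSpecIso (.of D)).inv ⟨x, Algebra.subset_adjoin hx⟩, ?_⟩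
    simp [hb, ι]

theorem exists_isIntegralHom_surjective_factorization {X S U : Scheme.{u}} [IsAffine S]
    [IsAffine U] (f : X ⟶ S) [IsSeparated f] [UniversallyClosed f] (a : U ⟶ X)
    [LocallyOfFiniteType a] :
    ∃ (Z : Scheme.{u}) (q : Z ⟶ S) (b : U ⟶ Z), IsAffine Z ∧ LocallyOfFiniteType q ∧
      IsIntegralHom b ∧ Surjective b ∧ a ≫ f = b ≫ q := by
  have : CompactSpace X := QuasiCompact.compactSpace_of_compactSpace f
  obtain ⟨T, hT, hclosed⟩ := exists_finite_isClosedImmersion_pullbackLift f a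
  obtain ⟨Z, q, b, _, _, _, w, hTb⟩ :=
    exists_locallyOfFiniteType_isDominant_factorization (a ≫ f) hT
  have := hclosed Z q b w hTb
  have hb : UniversallyClosed b := by
    rw [← pullback.lift_snd a b w]
    infer_instance
  exact ⟨Z, q, b, ‹_›, ‹_›,
    IsIntegralHom.iff_universallyClosed_and_isAffineHom.mpr ⟨hb, inferInstance⟩, inferInstance, w⟩

theorem isIntegralHom_of_isIso_morphismRestrict_toNormalization {X Y : Scheme.{u}} (f : X ⟶ Y)
    [IsSeparated f] [UniversallyClosed f]
    (h : ∀ x, ∃ N : f.normalization.Opens, f.toNormalization x ∈ N ∧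
      IsIso (f.toNormalization ∣_ N)) : IsIntegralHom f := by
  have : UniversallyClosed (f.toNormalization ≫ f.fromNormalization) := by
    rwa [f.toNormalization_fromNormalization]
  have : UniversallyClosed f.toNormalization :=
    .of_comp_of_isSeparated f.toNormalization f.fromNormalization
  have : IsIso f.toNormalization :=
    IsZariskiLocalAtTarget.of_forall_exists_morphismRestrict (P := .isomorphisms _)
      (f.toNormalization.surjective.forall.mpr h)
  rw [← f.toNormalization_fromNormalization]
  infer_instance

theorem isIntegralHom_of_t1Space_preimage_singleton_of_isAffine {X S : Scheme.{u}} [IsAffine S]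
    (f : X ⟶ S) [IsSeparated f] [UniversallyClosed f] (h : ∀ y, T1Space (f ⁻¹' {y})) :
    IsIntegralHom f := by
  refine isIntegralHom_of_isIso_morphismRestrict_toNormalization f fun x ↦ ?_
  let j := X.affineCover.f (X.affineCover.idx x)
  obtain ⟨u, hu : j u = x⟩ := X.affineCover.covers x
  obtain ⟨Z, q, b, _, _, _, _, w⟩ := exists_isIntegralHom_surjective_factorization f j
  have : LocallyQuasiFinite q :=
    locallyQuasiFinite_of_t1Space_preimage_singleton q fun y ↦ by
      have : T1Space ((q ∘ b) ⁻¹' {y}) :=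
        t1Space_preimage_singleton_of_injective (f := f) (s := id) j.continuous j.injective
          (fun v ↦ by simpa using! congr($w v)) y
      exact t1Space_preimage_singleton_of_isClosedMap b.isClosedMap b.surjective y
  exact hu ▸ exists_isIso_morphismRestrict_toNormalization f j b q w u (q.quasiFiniteAt _)

theorem isIntegralHom_of_universallyClosed_of_affine_fibers_general {X Y : Scheme.{u}} (f : X ⟶ Y)
    [IsSeparated f] [UniversallyClosed f] (h : ∀ y, T1Space (f ⁻¹' {y})) : IsIntegralHom f := by
  have : IsZariskiLocalAtTarget @IsIntegralHom.{u} :=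
    (HasAffineProperty.iff.mp IsIntegralHom.hasAffineProperty).1
  refine IsZariskiLocalAtTarget.of_openCover (P := @IsIntegralHom) Y.affineCover fun i ↦ ?_
  let s := Y.affineCover.f i
  have hw : pullback.fst f s ≫ f = pullback.snd f s ≫ s := pullback.condition
  have hfib (y) : T1Space (pullback.snd f s ⁻¹' {y}) :=
    t1Space_preimage_singleton_of_injective (f := f) (s := s) (pullback.fst f s).continuous
      (pullback.fst f s).injective (fun x ↦ by simpa using! congr($hw x)) y
  change IsIntegralHom (pullback.snd f s)
  exact isIntegralHom_of_t1Space_preimage_singleton_of_isAffine _ hfib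

/-- A quasi-compact, separated, universally closed morphism of schemes all
of whose (scheme-theoretic) fibers are affine is integral.  (This answers a question of
Grothendieck, EGA IV, Rem. 18.12.9.) -/
theorem isIntegralHom_of_universallyClosed_of_affine_fibers
    {X Y : AlgebraicGeometry.Scheme} (f : X ⟶ Y)
    [QuasiCompact f] [IsSeparated f] [UniversallyClosed f]
    (hfib : ∀ y : Y, IsAffine (pullback f (Y.fromSpecResidueField y))) :
    IsIntegralHom f :=
  isIntegralHom_of_universallyClosed_of_affine_fibers_general f fun y ↦
    have : IsAffine (f.fiber y) := hfib y
    t1Space_preimage_singleton_of_isAffine_fiber f y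
end

section
/- Let A be a commutative ring and B an A-algebra. Then B is of finite presentation over A if and only if for every filtered direct system (C_λ) of A-algebras with colimit C, the natural map colim_λ Hom_{A-alg}(B, C_λ) → Hom_{A-alg}(B, C) is bijective. -/
universe u

/-- A presentation of the commutative `A`-algebra `D` as the colimit of a filtered
direct system of `A`-algebras. -/
structure FilteredAlgebraColimitPresentation (A : Type u) [CommRing A]
    (D : Type u) [CommRing D] [Algebra A D] where
  /-- the index type of the system -/
  ι : Type u
  [pre : Preorder ι]
  [dir : IsDirected ι (· ≤ ·)]
  [nonempty : Nonempty ι]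
  /-- the terms of the system -/
  C : ι → Type u
  [ring : ∀ i, CommRing (C i)]
  [alg : ∀ i, Algebra A (C i)]
  /-- the transition maps -/
  t : ∀ i j, i ≤ j → (C i →ₐ[A] C j)
  t_id : ∀ i, t i i le_rfl = AlgHom.id A (C i)
  t_comp : ∀ i j k (hij : i ≤ j) (hjk : j ≤ k),
    (t j k hjk).comp (t i j hij) = t i k (hij.trans hjk)
  /-- the maps to the colimit -/
  f : ∀ i, C i →ₐ[A] D
  f_comp : ∀ i j (hij : i ≤ j), (f j).comp (t i j hij) = f i
  /-- `D` is the colimit: the maps `f i` are jointly surjective … -/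
  jointly_surjective : ∀ d : D, ∃ i c, f i c = d
  /-- … and elements identified in `D` are identified at some finite stage -/
  eventually_eq : ∀ i (x y : C i), f i x = f i y →
    ∃ j, ∃ hij : i ≤ j, t i j hij x = t i j hij y

attribute [instance] FilteredAlgebraColimitPresentation.pre
  FilteredAlgebraColimitPresentation.dir
  FilteredAlgebraColimitPresentation.nonempty
  FilteredAlgebraColimitPresentation.ring
  FilteredAlgebraColimitPresentation.alg

/-!
Finitely many equations between elements of the stages that hold in the colimit already hold at a
single stage. A map out of a finitely generated algebra is determined by finitely many values, and
a map out of a finitely presented one is finitely many values subject to finitely many relations;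
so the former has injective, the latter bijective comparison map.

Conversely, apply surjectivity to the identity of `B` for two presentations of `B` itself. A section
into the union of the finitely generated subalgebras forces one of these to be all of `B`. Given
then a surjection `p` from a polynomial ring `R`, a section `B → R ⧸ J` of the map induced by `p`,
where `J ≤ ker p` is finitely generated, composes with `p` to a map `R → R ⧸ J` which agrees with
the projection after mapping to `B`, hence already in `R ⧸ K` for some finitely generated
`K ≤ ker p`; this `K` is `ker p`.
-/

namespace FilteredAlgebraColimitPresentation

variable {A : Type u} [CommRing A]

section HomColimit

variable {D : Type u} [CommRing D] [Algebra A D] (P : FilteredAlgebraColimitPresentation A D)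

lemma t_t_apply {i j k : P.ι} (hij : i ≤ j) (hjk : j ≤ k) (x : P.C i) :
    P.t j k hjk (P.t i j hij x) = P.t i k (hij.trans hjk) x :=
  DFunLike.congr_fun (P.t_comp i j k hij hjk) x

lemma f_t_apply {i j : P.ι} (hij : i ≤ j) (x : P.C i) : P.f j (P.t i j hij x) = P.f i x :=
  DFunLike.congr_fun (P.f_comp i j hij) x

lemma exists_forall_f_eq {T : Type*} [Finite T] (d : T → D) :
    ∃ i, ∃ c : T → P.C i, ∀ x, P.f i (c x) = d x := by
  choose i c hc using fun x ↦ P.jointly_surjective (d x)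
  obtain ⟨k, hk⟩ := Finite.exists_le i
  exact ⟨k, fun x ↦ P.t _ _ (hk x) (c x), fun x ↦ by rw [P.f_t_apply, hc]⟩

lemma exists_forall_t_eq {T : Type*} [Finite T] {i : P.ι} {a b : T → P.C i}
    (h : ∀ x, P.f i (a x) = P.f i (b x)) :
    ∃ j, ∃ hij : i ≤ j, ∀ x, P.t i j hij (a x) = P.t i j hij (b x) := by
  choose j hij hj using fun x ↦ P.eventually_eq i (a x) (b x) (h x)
  obtain ⟨k, hk⟩ := Finite.exists_le j
  obtain ⟨l, hil, hkl⟩ := exists_ge_ge i k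
  refine ⟨l, hil, fun x ↦ ?_⟩
  rw [← P.t_t_apply (hij x) ((hk x).trans hkl), hj, P.t_t_apply]

variable (B : Type*) [CommRing B] [Algebra A B]

/-- Surjectivity of the natural map `colim_λ Hom(B, C_λ) → Hom(B, D)`, in terms of representatives
of the elements of the colimit. -/
def HomSurjective : Prop :=
  ∀ g : B →ₐ[A] D, ∃ i, ∃ h : B →ₐ[A] P.C i, (P.f i).comp h = g

/-- Injectivity of the natural map `colim_λ Hom(B, C_λ) → Hom(B, D)`, in terms of representatives
of the elements of the colimit. -/
def HomInjective : Prop :=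
  ∀ i j (g : B →ₐ[A] P.C i) (g' : B →ₐ[A] P.C j), (P.f i).comp g = (P.f j).comp g' →
    ∃ k, ∃ hik : i ≤ k, ∃ hjk : j ≤ k, (P.t i k hik).comp g = (P.t j k hjk).comp g'

theorem homInjective_of_finiteType [Algebra.FiniteType A B] : P.HomInjective B := by
  intro i j g g' hgg'
  obtain ⟨s, hs⟩ := Algebra.FiniteType.out (R := A) (A := B)
  obtain ⟨l, hil, hjl⟩ := exists_ge_ge i j
  have agree_in_colimit (x : s) : P.f l (P.t i l hil (g x)) = P.f l (P.t j l hjl (g' x)) := by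
    simpa only [P.f_t_apply, AlgHom.comp_apply] using DFunLike.congr_fun hgg' x.1
  obtain ⟨k, hlk, hk⟩ := P.exists_forall_t_eq agree_in_colimit
  refine ⟨k, hil.trans hlk, hjl.trans hlk, AlgHom.ext_of_adjoin_eq_top hs fun x hx ↦ ?_⟩
  simpa only [P.t_t_apply, AlgHom.comp_apply] using hk ⟨x, hx⟩

theorem homSurjective_mvPolynomial (σ : Type*) [Finite σ] :
    P.HomSurjective (MvPolynomial σ A) := by
  intro g
  obtain ⟨i, c, hc⟩ := P.exists_forall_f_eq fun x ↦ g (MvPolynomial.X x)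
  refine ⟨i, MvPolynomial.aeval c, MvPolynomial.algHom_ext fun x ↦ ?_⟩
  rw [AlgHom.comp_apply, MvPolynomial.aeval_X, hc]

variable {B}

lemma exists_le_ker_t_comp {R : Type*} [CommRing R] [Algebra A R] {I : Ideal R} (hI : I.FG)
    {i : P.ι} {φ : R →ₐ[A] P.C i} (h : I ≤ RingHom.ker ((P.f i).comp φ)) :
    ∃ j, ∃ hij : i ≤ j, I ≤ RingHom.ker ((P.t i j hij).comp φ) := by
  obtain ⟨s, rfl⟩ := hI
  have vanish_in_colimit (x : s) : P.f i (φ x) = P.f i 0 := by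
    rw [map_zero]
    exact h (Ideal.subset_span x.2)
  obtain ⟨j, hij, hj⟩ := P.exists_forall_t_eq vanish_in_colimit
  exact ⟨j, hij, Ideal.span_le.2 fun x hx ↦ (hj ⟨x, hx⟩).trans (map_zero _)⟩

variable {P} in
theorem HomSurjective.of_surjective {R : Type*} [CommRing R] [Algebra A R]
    (hR : P.HomSurjective R) {p : R →ₐ[A] B} (hp : Function.Surjective p)
    (hker : (RingHom.ker p).FG) : P.HomSurjective B := by
  intro g
  obtain ⟨i, φ, hφ⟩ := hR (g.comp p)
  have ker_le : RingHom.ker p ≤ RingHom.ker ((P.f i).comp φ) := by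
    rw [hφ]
    exact fun x hx ↦ (congrArg g hx).trans (map_zero g)
  obtain ⟨j, hij, hj⟩ := P.exists_le_ker_t_comp hker ker_le
  obtain ⟨h, hh⟩ : ∃ h : B →ₐ[A] P.C j, h.comp p = (P.t i j hij).comp φ :=
    ⟨_, AlgHom.liftOfSurjective_comp p hp _ hj⟩
  refine ⟨j, h, (AlgHom.cancel_right hp).1 ?_⟩
  rw [AlgHom.comp_assoc, hh, ← AlgHom.comp_assoc, P.f_comp, hφ]

variable (B) in
theorem homSurjective_of_finitePresentation [Algebra.FinitePresentation A B] :
    P.HomSurjective B := by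
  obtain ⟨n, p, hp, hker⟩ := Algebra.FinitePresentation.out (R := A) (A := B)
  exact (P.homSurjective_mvPolynomial (Fin n)).of_surjective hp hker

end HomColimit

section FGSubalgebras

variable (A) (B : Type u) [CommRing B] [Algebra A B]

/-- The presentation of `B` as the directed union of its finitely generated subalgebras. -/
def fgSubalgebras : FilteredAlgebraColimitPresentation A B where
  ι := {S : Subalgebra A B // S.FG}
  dir := ⟨fun S T ↦ ⟨⟨S.1 ⊔ T.1, S.2.sup T.2⟩, le_sup_left (a := S.1), le_sup_right (b := T.1)⟩⟩
  nonempty := ⟨⟨⊥, Subalgebra.fg_bot⟩⟩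
  C S := S.1
  t _ _ h := Subalgebra.inclusion h
  t_id _ := rfl
  t_comp _ _ _ _ _ := rfl
  f S := S.1.val
  f_comp _ _ _ := rfl
  jointly_surjective d := ⟨⟨Algebra.adjoin A {d}, ⟨{d}, by rw [Finset.coe_singleton]⟩⟩,
    ⟨d, Algebra.self_mem_adjoin_singleton A d⟩, rfl⟩
  eventually_eq S _ _ h := ⟨S, le_rfl, congrArg _ (Subtype.ext h)⟩

variable {A B}

theorem finiteType_of_section_fgSubalgebras {S : (fgSubalgebras A B).ι}
    {h : B →ₐ[A] (fgSubalgebras A B).C S}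
    (hS : ((fgSubalgebras A B).f S).comp h = AlgHom.id A B) : Algebra.FiniteType A B := by
  have eq_top : S.1 = ⊤ := Algebra.eq_top_iff.2 fun b ↦ by
    have val_h : (h b).1 = b := DFunLike.congr_fun hS b
    exact val_h ▸ (h b).2
  exact ⟨eq_top ▸ S.2⟩

end FGSubalgebras

section FGQuotients

variable {R B : Type u} [CommRing R] [Algebra A R] [CommRing B] [Algebra A B]

/-- The presentation of a quotient `B` of `R` as the colimit of the quotients of `R` by the finitely
generated ideals contained in the kernel of the projection `p`. -/
def fgQuotients (p : R →ₐ[A] B) (hp : Function.Surjective p) :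
    FilteredAlgebraColimitPresentation A B where
  ι := {J : Ideal R // J.FG ∧ J ≤ RingHom.ker p}
  dir := ⟨fun J K ↦ ⟨⟨J.1 ⊔ K.1, Submodule.FG.sup J.2.1 K.2.1, sup_le J.2.2 K.2.2⟩,
    le_sup_left (a := J.1), le_sup_right (b := K.1)⟩⟩
  nonempty := ⟨⟨⊥, Submodule.fg_bot, bot_le⟩⟩
  C J := R ⧸ J.1
  t _ _ h := Ideal.Quotient.factorₐ A h
  t_id _ := Ideal.Quotient.algHom_ext A rfl
  t_comp _ _ _ _ _ := Ideal.Quotient.algHom_ext A rfl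
  f J := Ideal.Quotient.liftₐ J.1 p J.2.2
  f_comp _ _ _ := Ideal.Quotient.algHom_ext A rfl
  jointly_surjective d := by
    obtain ⟨r, rfl⟩ := hp d
    exact ⟨⟨⊥, Submodule.fg_bot, bot_le⟩, Ideal.Quotient.mk _ r, rfl⟩
  eventually_eq J x y h := by
    obtain ⟨x, rfl⟩ := Ideal.Quotient.mk_surjective x
    obtain ⟨y, rfl⟩ := Ideal.Quotient.mk_surjective y
    have sub_mem_ker : x - y ∈ RingHom.ker p := (RingHom.sub_mem_ker_iff p).2 h
    refine ⟨⟨J.1 ⊔ Ideal.span {x - y}, Submodule.FG.sup J.2.1 (Submodule.fg_span_singleton _),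
      sup_le J.2.2 ((Ideal.span_singleton_le_iff_mem _).2 sub_mem_ker)⟩,
      le_sup_left (a := J.1), Ideal.Quotient.eq.2 ?_⟩
    exact Ideal.mem_sup_right (Ideal.mem_span_singleton_self _)

theorem ker_fg_of_section_fgQuotients [Algebra.FiniteType A R] {p : R →ₐ[A] B}
    {hp : Function.Surjective p} {J : (fgQuotients p hp).ι} {h : B →ₐ[A] (fgQuotients p hp).C J}
    (hJ : ((fgQuotients p hp).f J).comp h = AlgHom.id A B) : (RingHom.ker p).FG := by
  have agree_in_colimit : ((fgQuotients p hp).f J).comp (h.comp p) =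
      ((fgQuotients p hp).f J).comp (Ideal.Quotient.mkₐ A J.1) := by
    rw [← AlgHom.comp_assoc, hJ]
    rfl
  obtain ⟨K, hJK, hJK', hK⟩ :=
    (fgQuotients p hp).homInjective_of_finiteType R J J _ _ agree_in_colimit
  have ker_le : RingHom.ker p ≤ K.1 := fun x (hx : p x = 0) ↦ by
    have mk_eq_zero := DFunLike.congr_fun hK x
    simp only [AlgHom.comp_apply, hx, map_zero] at mk_eq_zero
    exact Ideal.Quotient.eq_zero_iff_mem.1 mk_eq_zero.symm
  exact le_antisymm ker_le K.2.2 ▸ K.2.1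

end FGQuotients

theorem finitePresentation_of_forall_exists_section {B : Type u} [CommRing B] [Algebra A B]
    (H : ∀ P : FilteredAlgebraColimitPresentation A B,
      ∃ i, ∃ h : B →ₐ[A] P.C i, (P.f i).comp h = AlgHom.id A B) :
    Algebra.FinitePresentation A B := by
  obtain ⟨S, s, hs⟩ := H (fgSubalgebras A B)
  obtain ⟨n, p, hp⟩ := Algebra.FiniteType.iff_quotient_mvPolynomial''.1
    (finiteType_of_section_fgSubalgebras hs)
  obtain ⟨J, h, hJ⟩ := H (fgQuotients p hp)
  exact .of_surjective hp (ker_fg_of_section_fgQuotients hJ)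

end FilteredAlgebraColimitPresentation

open FilteredAlgebraColimitPresentation in
theorem finitePresentation_iff_hom_colimit_bijective_general
    (A : Type u) [CommRing A] (B : Type u) [CommRing B] [Algebra A B] :
    List.TFAE [
      Algebra.FinitePresentation A B,
      ∀ P : FilteredAlgebraColimitPresentation A B,
        ∃ i, ∃ h : B →ₐ[A] P.C i, (P.f i).comp h = AlgHom.id A B,
      ∀ (D : Type u) [CommRing D] [Algebra A D] (P : FilteredAlgebraColimitPresentation A D),
        P.HomSurjective B ∧ P.HomInjective B] := by
  tfae_have 1 → 3 := fun _ D _ _ P ↦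
    ⟨P.homSurjective_of_finitePresentation B, P.homInjective_of_finiteType B⟩
  tfae_have 3 → 2 := fun H P ↦ (H B P).1 (AlgHom.id A B)
  tfae_have 2 → 1 := finitePresentation_of_forall_exists_section
  tfae_finish

/-- An `A`-algebra `B` is of finite presentation if and only if for every
filtered direct system `(C_λ)` of `A`-algebras with colimit `C`, the natural map
`colim_λ Hom_{A-alg}(B, C_λ) → Hom_{A-alg}(B, C)` is bijective (expressed by its
surjectivity and injectivity as a map from the filtered colimit of hom-sets). -/
theorem finitePresentation_iff_hom_colimit_bijective
    (A : Type u) [CommRing A] (B : Type u) [CommRing B] [Algebra A B] :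
    Algebra.FinitePresentation A B ↔
      ∀ (D : Type u) [CommRing D] [Algebra A D]
        (P : FilteredAlgebraColimitPresentation A D),
        -- surjectivity: every map `B → C` factors through some stage
        (∀ g : B →ₐ[A] D, ∃ i, ∃ h : B →ₐ[A] P.C i, (P.f i).comp h = g) ∧
        -- injectivity: two maps to stages agreeing in the colimit agree at some stage
        (∀ i j (g : B →ₐ[A] P.C i) (g' : B →ₐ[A] P.C j),
          (P.f i).comp g = (P.f j).comp g' →
          ∃ k, ∃ hik : i ≤ k, ∃ hjk : j ≤ k,
            (P.t i k hik).comp g = (P.t j k hjk).comp g') :=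
  (finitePresentation_iff_hom_colimit_bijective_general A B).out 0 2
end

section
/- Let A → B be a ring homomorphism that is finite, faithfully flat, and of finite presentation. Then for every A-module M, the evaluation map Hom_A(B, M) → M sending f to f(1) is surjective. -/
/-!
A finitely presented flat module is projective, so `1 = ∑ fᵢ(1) eᵢ` for finitely many linear
functionals `fᵢ` on `B`. Hence the values `f(1)` of all functionals form a finitely generated ideal
`I` with `1 ∈ I B`. As `f(b)` is the value at `1` of `f(b · -)`, every functional maps `B` into `I`,
hence maps `1 ∈ I B` into `I²`. Thus `I = I²`, and Nakayama's lemma gives `r ∈ 1 + I` annihilating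
`I`, hence annihilating `1 ∈ I B`. As `A → B` is injective, `r = 0` and `1 ∈ I`: some functional `e`
has `e(1) = 1`, and `b ↦ e(b) x` is a preimage of `x`.
-/

section OrderIdeal

variable {R P : Type*} [CommSemiring R] [AddCommMonoid P] [Module R P]

variable (R) in
/-- The order ideal of an element `v` of a module: the ideal of values `f v` of the linear
functionals `f`, used to detect whether `v` spans a free direct summand. It is encoded as the range
of evaluation at `v` on the dual module. -/
def orderIdeal (v : P) : Ideal R :=
  LinearMap.range (Module.Dual.eval R P v)

theorem apply_mem_orderIdeal (f : Module.Dual R P) (v : P) : f v ∈ orderIdeal R v :=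
  ⟨f, rfl⟩

theorem surjective_apply_of_orderIdeal_eq_top {v : P} (hv : orderIdeal R v = ⊤)
    (M : Type*) [AddCommMonoid M] [Module R M] :
    Function.Surjective (fun f : P →ₗ[R] M => f v) := by
  obtain ⟨e, he : e v = 1⟩ : (1 : R) ∈ orderIdeal R v := hv ▸ Submodule.mem_top
  exact fun x => ⟨e.smulRight x, by simp [he]⟩

variable (R) [Module.Projective R P]

theorem exists_finsupp_coeff_mem_orderIdeal (v : P) :
    ∃ c : P →₀ R, (∀ p, c p ∈ orderIdeal R v) ∧ c.sum (fun p a => a • p) = v := by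
  obtain ⟨s, hs⟩ := Module.projective_def.mp ‹Module.Projective R P›
  exact ⟨s v, fun p => apply_mem_orderIdeal (Finsupp.lapply p ∘ₗ s) v, hs v⟩

theorem mem_orderIdeal_smul_top (v : P) : v ∈ orderIdeal R v • (⊤ : Submodule R P) := by
  obtain ⟨c, hc, hsum⟩ := exists_finsupp_coeff_mem_orderIdeal R v
  have hmem : c.sum (fun p a => a • p) ∈ orderIdeal R v • (⊤ : Submodule R P) :=
    Submodule.sum_mem _ fun p _ => Submodule.smul_mem_smul (hc p) Submodule.mem_top
  rwa [hsum] at hmem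

theorem orderIdeal_fg (v : P) : (orderIdeal R v).FG := by
  classical
  obtain ⟨c, hc, hsum⟩ := exists_finsupp_coeff_mem_orderIdeal R v
  refine ⟨c.support.image c, le_antisymm (Ideal.span_le.mpr ?_) ?_⟩
  · simpa [Set.subset_def] using fun p _ => hc p
  · rintro _ ⟨f, rfl⟩
    have hf : f v = c.sum (fun p a => a * f p) := by
      conv_lhs => rw [← hsum]
      simp [map_finsuppSum]
    rw [Module.Dual.eval_apply, hf]
    exact Ideal.sum_mem _ fun p hp =>
      Ideal.mul_mem_right _ _ (Ideal.subset_span (Finset.mem_image_of_mem c hp))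

end OrderIdeal

theorem apply_mem_orderIdeal_one {A B : Type*} [CommSemiring A] [Semiring B] [Algebra A B]
    (f : Module.Dual A B) (b : B) : f b ∈ orderIdeal A (1 : B) := by
  simpa using apply_mem_orderIdeal (f ∘ₗ LinearMap.mulLeft A b) (1 : B)

theorem orderIdeal_one_le_smul_self (A B : Type*) [CommSemiring A] [Semiring B] [Algebra A B]
    [Module.Projective A B] :
    orderIdeal A (1 : B) ≤ orderIdeal A (1 : B) • orderIdeal A (1 : B) := by
  rintro _ ⟨f, rfl⟩
  have hrange : Submodule.map f ⊤ ≤ orderIdeal A (1 : B) := by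
    rintro _ ⟨b, -, rfl⟩
    exact apply_mem_orderIdeal_one f b
  have hf : f 1 ∈ orderIdeal A (1 : B) • Submodule.map f ⊤ := by
    rw [← Submodule.map_smul'']
    exact Submodule.mem_map_of_mem (mem_orderIdeal_smul_top A 1)
  exact Submodule.smul_mono le_rfl hrange hf

theorem orderIdeal_one_eq_top (A B : Type*) [CommRing A] [Ring B] [Algebra A B]
    [Module.Projective A B] [FaithfulSMul A B] : orderIdeal A (1 : B) = ⊤ := by
  obtain ⟨r, hr, hann⟩ := Submodule.exists_sub_one_mem_and_smul_eq_zero_of_fg_of_le_smul _ _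
    (orderIdeal_fg A (1 : B)) (orderIdeal_one_le_smul_self A B)
  have hr_smul : r • (1 : B) = 0 := by
    obtain ⟨c, hc, hsum⟩ := exists_finsupp_coeff_mem_orderIdeal A (1 : B)
    rw [← hsum, Finsupp.smul_sum]
    exact Finset.sum_eq_zero fun b _ => by
      simp only [← smul_assoc, hann _ (hc b), zero_smul]
  have hr_zero : r = 0 := by
    apply FaithfulSMul.algebraMap_injective A B
    rw [Algebra.algebraMap_eq_smul_one, hr_smul, map_zero]
  rw [hr_zero, zero_sub] at hr
  exact (Ideal.eq_top_iff_one _).mpr (neg_mem_iff.mp hr)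

theorem evaluation_surjective_of_finite_faithfullyFlat_finitePresentation_general
    (A B : Type*) [CommRing A] [Ring B] [Algebra A B]
    [Module.Projective A B] [FaithfulSMul A B]
    (M : Type*) [AddCommGroup M] [Module A M] :
    Function.Surjective (fun f : B →ₗ[A] M => f 1) :=
  surjective_apply_of_orderIdeal_eq_top (orderIdeal_one_eq_top A B) M

/-- Let `A → B` be a ring homomorphism that is finite, faithfully flat and
of finite presentation.  Then for every `A`-module `M` the evaluation map
`Hom_A(B, M) → M`, `f ↦ f 1`, is surjective. -/
theorem evaluation_surjective_of_finite_faithfullyFlat_finitePresentation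
    (A B : Type*) [CommRing A] [CommRing B] [Algebra A B]
    (hfin : Module.Finite A B) (hff : Module.FaithfullyFlat A B)
    (hfp : Algebra.FinitePresentation A B)
    (M : Type*) [AddCommGroup M] [Module A M] :
    Function.Surjective (fun f : B →ₗ[A] M => f 1) := by
  have : Module.FinitePresentation A B :=
    (Module.FinitePresentation.iff_finitePresentation_of_finite A B).mpr hfp
  have : Module.Projective A B := Module.Flat.projective_of_finitePresentation
  exact evaluation_surjective_of_finite_faithfullyFlat_finitePresentation_general A B M
end
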